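/- arXiv:1610.09833 — 7 statements merged into one kernel-verified Lean document; each statement's English description precedes it below -/
import Mathlib

section
/- Let 0 < ε < π. For every even continuous function g on [−ε,ε], the function A(g) is even and continuous on [−ε,ε], the assignment g ↦ A(g) is linear, and for every ρ ∈ [−ε,ε] one has |A(g)(ρ)| ≤ 2·|ln(cos(|ρ|/2))|·sup_{x∈[−|ρ|,|ρ|]}|g(x)|. In particular, A is a continuous linear map from the space of even continuous functions on [−ε,ε] (with the sup norm) to itself. -/
open Real Set

/-- The operator `A`: `A(g)(ρ) = -∫₀^ρ (1/sin s) ∫₀^s sin(x) g(x) dx ds`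
(the value at `ρ = 0` is automatically `0`). -/
noncomputable def Aop (g : ℝ → ℝ) (ρ : ℝ) : ℝ :=
  -∫ s in (0:ℝ)..ρ, (Real.sin s)⁻¹ * ∫ x in (0:ℝ)..s, Real.sin x * g x

/-!
The outer integrand `h(s) = (1 / sin s) ∫₀ˢ sin(x) g(x) dx` is controlled by its value for a
constant function: if `|g| ≤ M`, then `|h(s)| ≤ M (1 - cos s) / sin s = M tan(s / 2)` for
`0 ≤ s < π`. This makes `h` continuous across the singularity `s = 0` of `1 / sin`, so that all
integrals exist, and integrating it gives
`|A(g)(ρ)| ≤ M ∫₀^ρ tan(s / 2) ds = -2 M ln(cos(ρ / 2))` for `0 ≤ ρ < π`.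
Negative arguments reduce to positive ones by reflection: `A(g)(-ρ) = A(g(-·))(ρ)`.
-/

open MeasureTheory

lemma integral_zero_neg (f : ℝ → ℝ) (s : ℝ) :
    ∫ x in (0 : ℝ)..(-s), f x = -∫ x in (0 : ℝ)..s, f (-x) := by
  rw [intervalIntegral.integral_comp_neg, neg_zero, intervalIntegral.integral_symm]

lemma inv_sin_mul_one_sub_cos (s : ℝ) : (sin s)⁻¹ * (1 - cos s) = tan (s / 2) := by
  -- At multiples of `π` both sides vanish, by the conventions `0⁻¹ = 0` and `tan (π / 2) = 0`.
  have h_sin : sin s = 2 * sin (s / 2) * cos (s / 2) := by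
    rw [← sin_two_mul, mul_div_cancel₀ s two_ne_zero]
  have h_cos : 1 - cos s = 2 * sin (s / 2) ^ 2 := by
    rw [sin_sq_eq_half_sub, mul_div_cancel₀ s two_ne_zero]
    ring
  rw [h_sin, h_cos, tan_eq_sin_div_cos]
  rcases eq_or_ne (sin (s / 2)) 0 with hs | hs
  · simp [hs]
  · field_simp

lemma cos_half_pos {s : ℝ} (hs : s ∈ Ioo (-π) π) : 0 < cos (s / 2) :=
  cos_pos_of_mem_Ioo ⟨by linarith [hs.1], by linarith [hs.2]⟩

lemma continuousAt_tan_half {s : ℝ} (hs : s ∈ Ioo (-π) π) :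
    ContinuousAt (fun t ↦ tan (t / 2)) s :=
  (continuousAt_tan.2 (cos_half_pos hs).ne').comp (f := fun t ↦ t / 2) (by fun_prop)

lemma hasDerivAt_neg_two_mul_log_cos_half {s : ℝ} (hs : s ∈ Ioo (-π) π) :
    HasDerivAt (fun t ↦ -2 * log (cos (t / 2))) (tan (s / 2)) s := by
  have h := ((((hasDerivAt_id s).div_const 2).cos).log (cos_half_pos hs).ne').const_mul (-2)
  refine h.congr_deriv ?_
  rw [id, tan_eq_sin_div_cos]
  ring

lemma intervalIntegrable_tan_half {a b : ℝ} (hab : uIcc a b ⊆ Ioo (-π) π) :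
    IntervalIntegrable (fun s ↦ tan (s / 2)) volume a b :=
  ContinuousOn.intervalIntegrable fun _ hs ↦ (continuousAt_tan_half (hab hs)).continuousWithinAt

lemma integral_tan_half {a b : ℝ} (hab : uIcc a b ⊆ Ioo (-π) π) :
    ∫ s in a..b, tan (s / 2) = 2 * (log (cos (a / 2)) - log (cos (b / 2))) := by
  rw [intervalIntegral.integral_eq_sub_of_hasDerivAt
    (fun s hs ↦ hasDerivAt_neg_two_mul_log_cos_half (hab hs)) (intervalIntegrable_tan_half hab)]
  ring

lemma uIcc_zero_subset_Ioo_neg_pi_pi {s : ℝ} (hs : |s| < π) : uIcc 0 s ⊆ Ioo (-π) π :=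
  ordConnected_Ioo.uIcc_subset ⟨neg_lt_zero.2 pi_pos, pi_pos⟩ (abs_lt.1 hs)

lemma abs_integral_sin_mul_le {g : ℝ → ℝ} {M s : ℝ} (hs : s ∈ Icc 0 π)
    (hM : ∀ x ∈ Icc 0 s, |g x| ≤ M) :
    |∫ x in (0 : ℝ)..s, sin x * g x| ≤ M * (1 - cos s) := by
  have h_pointwise : ∀ x ∈ Ioc 0 s, ‖sin x * g x‖ ≤ M * sin x := fun x hx ↦ by
    have h_sin : 0 ≤ sin x := sin_nonneg_of_mem_Icc ⟨hx.1.le, hx.2.trans hs.2⟩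
    rw [norm_mul, norm_of_nonneg h_sin, norm_eq_abs, mul_comm]
    exact mul_le_mul_of_nonneg_right (hM x (Ioc_subset_Icc_self hx)) h_sin
  calc |∫ x in (0 : ℝ)..s, sin x * g x|
      ≤ ∫ x in (0 : ℝ)..s, M * sin x :=
        intervalIntegral.norm_integral_le_of_norm_le hs.1 (.of_forall h_pointwise)
          ((continuous_const.mul continuous_sin).intervalIntegrable 0 s)
    _ = M * (1 - cos s) := by
        rw [intervalIntegral.integral_const_mul, integral_sin, cos_zero]

namespace Aop

/-- The outer integrand `(1 / sin s) ∫₀ˢ sin(x) g(x) dx` of `Aop g`, that is, minus the derivative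
of `A(g)`. Its junk value `0⁻¹ * 0 = 0` at `s = 0` is also its limit there. -/
noncomputable def integrand (g : ℝ → ℝ) (s : ℝ) : ℝ :=
  (sin s)⁻¹ * ∫ x in (0 : ℝ)..s, sin x * g x

variable {g g₁ g₂ : ℝ → ℝ} {a b s ρ M : ℝ}

lemma eq_neg_integral_integrand (g : ℝ → ℝ) (ρ : ℝ) :
    Aop g ρ = -∫ s in (0 : ℝ)..ρ, integrand g s :=
  rfl

lemma integrand_zero (g : ℝ → ℝ) : integrand g 0 = 0 := by
  simp [integrand]

lemma integrand_neg (g : ℝ → ℝ) (s : ℝ) :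
    integrand g (-s) = -integrand (fun x ↦ g (-x)) s := by
  simp only [integrand, integral_zero_neg, sin_neg, neg_mul, intervalIntegral.integral_neg, neg_neg,
    inv_neg]

lemma apply_neg (g : ℝ → ℝ) (ρ : ℝ) : Aop g (-ρ) = Aop (fun x ↦ g (-x)) ρ := by
  simp only [eq_neg_integral_integrand, integral_zero_neg, integrand_neg,
    intervalIntegral.integral_neg, neg_neg]

lemma abs_integrand_le_of_nonneg (hs : s ∈ Icc 0 π) (hM : ∀ x ∈ Icc 0 s, |g x| ≤ M) :
    |integrand g s| ≤ M * tan (s / 2) := by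
  have h_inv : 0 ≤ (sin s)⁻¹ := inv_nonneg.2 (sin_nonneg_of_mem_Icc hs)
  calc |integrand g s|
      = (sin s)⁻¹ * |∫ x in (0 : ℝ)..s, sin x * g x| := by
        rw [integrand, abs_mul, abs_of_nonneg h_inv]
    _ ≤ (sin s)⁻¹ * (M * (1 - cos s)) := by
        gcongr
        exact abs_integral_sin_mul_le hs hM
    _ = M * tan (s / 2) := by rw [mul_left_comm, inv_sin_mul_one_sub_cos]

lemma abs_integrand_le (hs : |s| ≤ π) (hM : ∀ x ∈ uIcc 0 s, |g x| ≤ M) :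
    |integrand g s| ≤ M * tan (|s| / 2) := by
  rcases le_total 0 s with h | h
  · rw [uIcc_of_le h] at hM
    rw [abs_of_nonneg h] at hs ⊢
    exact abs_integrand_le_of_nonneg ⟨h, hs⟩ hM
  · rw [uIcc_of_ge h] at hM
    rw [abs_of_nonpos h] at hs ⊢
    rw [← neg_neg s, integrand_neg, abs_neg, neg_neg]
    exact abs_integrand_le_of_nonneg ⟨neg_nonneg.2 h, hs⟩
      fun x hx ↦ hM (-x) ⟨by linarith [hx.2], by linarith [hx.1]⟩

lemma intervalIntegrable_sin_mul (hg : ContinuousOn g (uIcc a b)) :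
    IntervalIntegrable (fun x ↦ sin x * g x) volume a b :=
  (continuous_sin.continuousOn.mul hg).intervalIntegrable

lemma continuousWithinAt_integrand_zero (h0 : 0 ∈ uIcc a b) (hab : uIcc a b ⊆ Ioo (-π) π)
    (hg : ContinuousOn g (uIcc a b)) : ContinuousWithinAt (integrand g) (uIcc a b) 0 := by
  obtain ⟨M, hM⟩ := isCompact_uIcc.exists_bound_of_continuousOn hg
  have h_bound : ∀ s ∈ uIcc a b, ‖integrand g s‖ ≤ M * tan (|s| / 2) := fun s hs ↦
    abs_integrand_le (abs_le.2 ⟨(hab hs).1.le, (hab hs).2.le⟩)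
      fun x hx ↦ hM x (uIcc_subset_uIcc h0 hs hx)
  have h_tan : ContinuousAt (fun s : ℝ ↦ M * tan (|s| / 2)) 0 :=
    continuousAt_const.mul <| ContinuousAt.comp (g := fun t ↦ tan (t / 2)) (f := fun s : ℝ ↦ |s|)
      (continuousAt_tan_half (by simpa using pi_pos)) continuous_abs.continuousAt
  have h_lim : Filter.Tendsto (fun s : ℝ ↦ M * tan (|s| / 2)) (nhds 0) (nhds 0) := by
    simpa using h_tan.tendsto
  rw [ContinuousWithinAt, integrand_zero]
  exact squeeze_zero_norm' (Filter.eventually_of_mem self_mem_nhdsWithin h_bound)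
    (h_lim.mono_left nhdsWithin_le_nhds)

lemma continuousOn_integrand (h0 : 0 ∈ uIcc a b) (hab : uIcc a b ⊆ Ioo (-π) π)
    (hg : ContinuousOn g (uIcc a b)) : ContinuousOn (integrand g) (uIcc a b) := by
  intro s hs
  rcases eq_or_ne s 0 with rfl | hs0
  · exact continuousWithinAt_integrand_zero h0 hab hg
  · have h_sin : sin s ≠ 0 :=
      (sin_eq_zero_iff_of_lt_of_lt (hab hs).1 (hab hs).2).not.2 hs0
    exact (continuous_sin.continuousWithinAt.inv₀ h_sin).mul <|
      intervalIntegral.continuousOn_primitive_interval' (intervalIntegrable_sin_mul hg) h0 s hs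

lemma intervalIntegrable_integrand (hρ : |ρ| < π) (hg : ContinuousOn g (uIcc 0 ρ)) :
    IntervalIntegrable (integrand g) volume 0 ρ :=
  (continuousOn_integrand left_mem_uIcc (uIcc_zero_subset_Ioo_neg_pi_pi hρ) hg).intervalIntegrable

lemma continuousOn (h0 : 0 ∈ uIcc a b) (hab : uIcc a b ⊆ Ioo (-π) π)
    (hg : ContinuousOn g (uIcc a b)) : ContinuousOn (Aop g) (uIcc a b) :=
  (intervalIntegral.continuousOn_primitive_interval'
    (continuousOn_integrand h0 hab hg).intervalIntegrable h0).neg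

lemma integrand_add (hg₁ : ContinuousOn g₁ (uIcc 0 s)) (hg₂ : ContinuousOn g₂ (uIcc 0 s)) :
    integrand (fun x ↦ g₁ x + g₂ x) s = integrand g₁ s + integrand g₂ s := by
  simp only [integrand, mul_add]
  rw [intervalIntegral.integral_add (intervalIntegrable_sin_mul hg₁)
    (intervalIntegrable_sin_mul hg₂), mul_add]

lemma map_add (hρ : |ρ| < π) (hg₁ : ContinuousOn g₁ (uIcc 0 ρ))
    (hg₂ : ContinuousOn g₂ (uIcc 0 ρ)) :
    Aop (fun x ↦ g₁ x + g₂ x) ρ = Aop g₁ ρ + Aop g₂ ρ := by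
  have h_integrand : ∀ s ∈ uIcc 0 ρ,
      integrand (fun x ↦ g₁ x + g₂ x) s = integrand g₁ s + integrand g₂ s := fun s hs ↦
    have h_sub : uIcc 0 s ⊆ uIcc 0 ρ := uIcc_subset_uIcc_left hs
    integrand_add (hg₁.mono h_sub) (hg₂.mono h_sub)
  simp only [eq_neg_integral_integrand]
  rw [intervalIntegral.integral_congr h_integrand, intervalIntegral.integral_add
    (intervalIntegrable_integrand hρ hg₁) (intervalIntegrable_integrand hρ hg₂), neg_add]

lemma map_const_mul (c : ℝ) (g : ℝ → ℝ) (ρ : ℝ) : Aop (fun x ↦ c * g x) ρ = c * Aop g ρ := by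
  simp only [Aop, mul_left_comm _ c, intervalIntegral.integral_const_mul, mul_neg]

lemma abs_apply_le_of_nonneg (hρ : ρ ∈ Ico 0 π) (hM : ∀ x ∈ Icc 0 ρ, |g x| ≤ M) :
    |Aop g ρ| ≤ 2 * |log (cos (ρ / 2))| * M := by
  have h_sub : uIcc 0 ρ ⊆ Ioo (-π) π :=
    uIcc_zero_subset_Ioo_neg_pi_pi (by rw [abs_of_nonneg hρ.1]; exact hρ.2)
  have h_integrand : ∀ s ∈ Ioc 0 ρ, ‖integrand g s‖ ≤ M * tan (s / 2) := fun s hs ↦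
    abs_integrand_le_of_nonneg ⟨hs.1.le, hs.2.trans hρ.2.le⟩
      fun x hx ↦ hM x ⟨hx.1, hx.2.trans hs.2⟩
  have h_log : log (cos (ρ / 2)) ≤ 0 :=
    log_nonpos (cos_half_pos (h_sub right_mem_uIcc)).le (cos_le_one _)
  calc |Aop g ρ|
      = ‖∫ s in (0 : ℝ)..ρ, integrand g s‖ := by
        rw [eq_neg_integral_integrand, abs_neg, norm_eq_abs]
    _ ≤ ∫ s in (0 : ℝ)..ρ, M * tan (s / 2) :=
        intervalIntegral.norm_integral_le_of_norm_le hρ.1 (.of_forall h_integrand)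
          ((intervalIntegrable_tan_half h_sub).const_mul M)
    _ = 2 * |log (cos (ρ / 2))| * M := by
        rw [intervalIntegral.integral_const_mul, integral_tan_half h_sub, zero_div, cos_zero,
          log_one, abs_of_nonpos h_log]
        ring

lemma abs_apply_le (hρ : |ρ| < π) (hM : ∀ x ∈ uIcc 0 ρ, |g x| ≤ M) :
    |Aop g ρ| ≤ 2 * |log (cos (|ρ| / 2))| * M := by
  rcases le_total 0 ρ with h | h
  · rw [uIcc_of_le h] at hM
    rw [abs_of_nonneg h] at hρ ⊢
    exact abs_apply_le_of_nonneg ⟨h, hρ⟩ hM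
  · rw [uIcc_of_ge h] at hM
    rw [abs_of_nonpos h] at hρ ⊢
    rw [← neg_neg ρ, apply_neg, neg_neg]
    exact abs_apply_le_of_nonneg ⟨neg_nonneg.2 h, hρ⟩
      fun x hx ↦ hM (-x) ⟨by linarith [hx.2], by linarith [hx.1]⟩

lemma abs_apply_le_sSup (hρ : |ρ| < π) (hg : ContinuousOn g (Icc (-|ρ|) |ρ|)) :
    |Aop g ρ| ≤ 2 * |log (cos (|ρ| / 2))| * sSup ((fun x ↦ |g x|) '' Icc (-|ρ|) |ρ|) := by
  have h_sub : uIcc 0 ρ ⊆ Icc (-|ρ|) |ρ| :=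
    uIcc_subset_Icc ⟨neg_nonpos.2 (abs_nonneg ρ), abs_nonneg ρ⟩ (abs_le.1 le_rfl)
  exact abs_apply_le hρ fun x hx ↦
    le_csSup (isCompact_Icc.bddAbove_image hg.abs) (mem_image_of_mem _ (h_sub hx))

end Aop

theorem stmt0_general (ε : ℝ) (hε : 0 < ε) (hεπ : ε < π)
    (g : ℝ → ℝ) (hg : ContinuousOn g (Icc (-ε) ε)) :
    (∀ ρ, Aop g (-ρ) = Aop (fun x ↦ g (-x)) ρ) ∧
    ContinuousOn (Aop g) (Icc (-ε) ε) ∧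
    (∀ g₂ : ℝ → ℝ, ContinuousOn g₂ (Icc (-ε) ε) →
      ∀ ρ ∈ Icc (-ε) ε, Aop (fun x ↦ g x + g₂ x) ρ = Aop g ρ + Aop g₂ ρ) ∧
    (∀ c ρ : ℝ, Aop (fun x ↦ c * g x) ρ = c * Aop g ρ) ∧
    (∀ ρ ∈ Icc (-ε) ε,
      |Aop g ρ| ≤ 2 * |log (cos (|ρ| / 2))| * sSup ((fun x ↦ |g x|) '' Icc (-|ρ|) |ρ|)) := by
  have h0 : (0 : ℝ) ∈ Icc (-ε) ε := ⟨neg_nonpos.2 hε.le, hε.le⟩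
  have h_lt : ∀ ρ ∈ Icc (-ε) ε, |ρ| < π := fun ρ hρ ↦ (abs_le.2 hρ).trans_lt hεπ
  refine ⟨Aop.apply_neg g, ?_, fun g₂ hg₂ ρ hρ ↦ ?_, fun c ρ ↦ Aop.map_const_mul c g ρ,
    fun ρ hρ ↦ ?_⟩
  · have h_uIcc : uIcc (-ε) ε = Icc (-ε) ε := uIcc_of_le (h0.1.trans h0.2)
    rw [← h_uIcc] at h0 hg ⊢
    exact Aop.continuousOn h0 (fun ρ hρ ↦ abs_lt.1 (h_lt ρ (h_uIcc ▸ hρ))) hg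
  · have h_sub : uIcc 0 ρ ⊆ Icc (-ε) ε := uIcc_subset_Icc h0 hρ
    exact Aop.map_add (h_lt ρ hρ) (hg.mono h_sub) (hg₂.mono h_sub)
  · have h_le : |ρ| ≤ ε := abs_le.2 hρ
    exact Aop.abs_apply_le_sSup (h_lt ρ hρ) (hg.mono (Icc_subset_Icc (neg_le_neg h_le) h_le))

theorem stmt0 (ε : ℝ) (hε : 0 < ε) (hεπ : ε < Real.pi)
    (g : ℝ → ℝ) (hg : ContinuousOn g (Icc (-ε) ε)) (hge : ∀ x, g (-x) = g x) :
    (∀ ρ ∈ Icc (-ε) ε, Aop g (-ρ) = Aop g ρ) ∧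
    ContinuousOn (Aop g) (Icc (-ε) ε) ∧
    (∀ g₂ : ℝ → ℝ, ContinuousOn g₂ (Icc (-ε) ε) → (∀ x, g₂ (-x) = g₂ x) →
      ∀ ρ ∈ Icc (-ε) ε, Aop (fun x => g x + g₂ x) ρ = Aop g ρ + Aop g₂ ρ) ∧
    (∀ c : ℝ, ∀ ρ ∈ Icc (-ε) ε, Aop (fun x => c * g x) ρ = c * Aop g ρ) ∧
    (∀ ρ ∈ Icc (-ε) ε,
      |Aop g ρ| ≤ 2 * |Real.log (Real.cos (|ρ| / 2))| *
        sSup ((fun x => |g x|) '' Icc (-|ρ|) |ρ|)) := by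
  obtain ⟨h_neg, h_cont, h_add, h_mul, h_le⟩ := stmt0_general ε hε hεπ g hg
  exact ⟨fun ρ _ ↦ by simpa only [hge] using h_neg ρ, h_cont, fun g₂ hg₂ _ ↦ h_add g₂ hg₂,
    fun c ρ _ ↦ h_mul c ρ, h_le⟩
end

section
/- Let 0 < ε < π. If g is an even C¹ function on [−ε,ε], then A(g) is C³ on [−ε,ε]; moreover A is continuous as a linear map from the space of even C¹ functions on [−ε,ε] (with the C¹ norm) to the space of even C³ functions on [−ε,ε] (with the C³ norm). -/
open Real Set

/- The inner integral vanishes to second order at `0`, so the quotient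
`w s = (∫ x in 0..s, sin x * g x) / sin s ^ 2` extends across `0`. Writing `sin x = x * sinc x` and
rescaling the integral to `[0, 1]` exhibits `w` as `(sinc s ^ 2)⁻¹` times
`∫ t in 0..1, t * (sinc * g) (t * s)`, which can be differentiated under the integral sign. Hence
`w` is as smooth as `g` on `(-π, π)`, with bounds linear in `g`. Two derivatives are then gained
from `(A g)' = -(sin * w)` and `(sin * w)' = g - cos * w`. On `[-ε, ε]` one first extends `g` to a
`C^n` function on the line. -/

open Topology

section Calculus

variable {E : Type*} [NormedAddCommGroup E] [NormedSpace ℝ E]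

lemma contDiffOn_add_one_of_hasDerivAt {n : ℕ} {f f' : ℝ → E} {U : Set ℝ} (hU : IsOpen U)
    (hf : ∀ x ∈ U, HasDerivAt f (f' x) x) (hf' : ContDiffOn ℝ n f' U) :
    ContDiffOn ℝ (n + 1) f U := by
  rw [contDiffOn_succ_iff_deriv_of_isOpen hU]
  exact ⟨fun x hx ↦ (hf x hx).differentiableAt.differentiableWithinAt, by simp,
    hf'.congr fun x hx ↦ (hf x hx).deriv⟩

lemma hasDerivAt_id_smul_zero {f : ℝ → E} (hf : ContinuousAt f 0) :
    HasDerivAt (fun x ↦ x • f x) (f 0) 0 := by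
  rw [hasDerivAt_iff_tendsto_slope]
  refine (hf.tendsto.mono_left nhdsWithin_le_nhds).congr' ?_
  filter_upwards [self_mem_nhdsWithin] with x hx
  simp [slope_def_module, smul_smul, inv_mul_cancel₀ (show x ≠ 0 from hx)]

lemma exists_contDiff_eqOn_Icc [CompleteSpace E] {n : ℕ} {f : ℝ → E} {a b : ℝ} (hab : a < b)
    (hf : ContDiffOn ℝ n f (Icc a b)) : ∃ F : ℝ → E, ContDiff ℝ n F ∧ EqOn f F (Icc a b) := by
  induction n generalizing f with
  | zero =>
    have hf_cont : Continuous ((Icc a b).domRestrict f) := hf.continuousOn.domRestrict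
    refine ⟨IccExtend hab.le ((Icc a b).domRestrict f), ?_, fun x hx ↦ ?_⟩
    · rw [CharP.cast_eq_zero, contDiff_zero]
      exact hf_cont.Icc_extend'
    · simp [IccExtend_of_mem hab.le _ hx]
  | succ n ih =>
    have hUD := uniqueDiffOn_Icc hab
    push_cast at hf ⊢
    obtain ⟨D, hD, hfD⟩ := ih ((contDiffOn_succ_iff_derivWithin hUD).mp hf).2.2
    have hF (x : ℝ) : HasDerivAt (fun x ↦ f a + ∫ t in a..x, D t) (D x) x :=
      (hD.continuous.integral_hasStrictDerivAt a x).hasDerivAt.const_add _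
    refine ⟨fun x ↦ f a + ∫ t in a..x, D t, ?_, ?_⟩
    · rw [contDiff_succ_iff_deriv]
      exact ⟨fun x ↦ (hF x).differentiableAt, by simp, by rwa [funext fun x ↦ (hF x).deriv]⟩
    · refine eq_of_derivWithin_eq (hf.differentiableOn (by simp))
        (fun x _ ↦ (hF x).differentiableAt.differentiableWithinAt) (fun x hx ↦ ?_) (by simp)
      have hx' := Ico_subset_Icc_self hx
      rw [(hF x).hasDerivWithinAt.derivWithin (hUD x hx'), hfD hx']

lemma deriv_eq_derivWithin_of_eqOn_interior {s : Set ℝ} {f h : ℝ → E} {x : ℝ} (hs : Convex ℝ s)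
    (hs' : (interior s).Nonempty) (hx : x ∈ s) (hfh : EqOn h f (interior s))
    (hf : DifferentiableWithinAt ℝ f s x) (hh : DifferentiableAt ℝ h x) :
    deriv h x = derivWithin f s x := by
  have hcl : x ∈ closure (interior s) := by
    rw [hs.closure_interior_eq_closure_of_nonempty_interior hs']
    exact subset_closure hx
  have : (𝓝[interior s] x).NeBot := mem_closure_iff_nhdsWithin_neBot.mp hcl
  have hxeq : h x = f x := tendsto_nhds_unique
    ((hh.continuousAt.continuousWithinAt (s := interior s)).tendsto.congr'
      (hfh.eventuallyEq_of_mem self_mem_nhdsWithin))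
    (hf.continuousWithinAt.mono interior_subset)
  have hUD : UniqueDiffWithinAt ℝ (interior s) x :=
    uniqueDiffWithinAt_convex hs.interior (by rwa [interior_interior]) hcl
  exact hUD.eq_deriv _ (hh.hasDerivAt.hasDerivWithinAt.congr hfh.symm hxeq.symm)
    (hf.hasDerivWithinAt.mono interior_subset)

/- At a boundary point of `s` the iterated derivative sees the values of `f` outside `s`; if it
fails to exist there, it takes the junk value `0`. -/
lemma iteratedDeriv_eq_iteratedDerivWithin_or_eq_zero {n i : ℕ} {s : Set ℝ} {f : ℝ → E} {x : ℝ}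
    (hs : Convex ℝ s) (hs' : (interior s).Nonempty) (hf : ContDiffOn ℝ n f s) (hi : i ≤ n)
    (hx : x ∈ s) :
    iteratedDeriv i f x = iteratedDerivWithin i f s x ∨ iteratedDeriv i f x = 0 := by
  have hUD : UniqueDiffOn ℝ s := uniqueDiffOn_convex hs hs'
  cases i with
  | zero => simp
  | succ i =>
    rw [iteratedDeriv_succ, iteratedDerivWithin_succ]
    by_cases hdiff : DifferentiableAt ℝ (iteratedDeriv i f) x
    · left
      refine deriv_eq_derivWithin_of_eqOn_interior hs hs' hx (fun y hy ↦ ?_)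
        (hf.differentiableOn_iteratedDerivWithin (by exact_mod_cast hi) hUD x hx) hdiff
      have hy' : s ∈ 𝓝 y := mem_interior_iff_mem_nhds.mp hy
      exact (iteratedDerivWithin_eq_iteratedDeriv hUD
        ((hf.contDiffAt hy').of_le (by exact_mod_cast (Nat.le_succ i).trans hi))
        (interior_subset hy)).symm
    · exact Or.inr (deriv_zero_of_not_differentiableAt hdiff)

lemma norm_derivWithin_le_sSup_norm_deriv {f : ℝ → E} {a b x : ℝ} (hab : a < b)
    (hf : ContDiffOn ℝ 1 f (Icc a b)) (hx : x ∈ Icc a b) :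
    ‖derivWithin f (Icc a b) x‖ ≤ sSup ((fun y ↦ ‖deriv f y‖) '' Icc a b) := by
  have hcont : ContinuousOn (derivWithin f (Icc a b)) (Icc a b) :=
    hf.continuousOn_derivWithin (uniqueDiffOn_Icc hab) le_rfl
  have hbdd : BddAbove ((fun y ↦ ‖deriv f y‖) '' Icc a b) := by
    obtain ⟨m, hm⟩ := isCompact_Icc.exists_bound_of_continuousOn hcont
    refine ⟨m, forall_mem_image.mpr fun y hy ↦ ?_⟩
    have hy_or := iteratedDeriv_eq_iteratedDerivWithin_or_eq_zero (n := 1) (i := 1)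
      (convex_Icc a b) (by simpa) (by simpa using hf) le_rfl hy
    rw [iteratedDeriv_one, iteratedDerivWithin_one] at hy_or
    rcases hy_or with h | h
    · exact h ▸ hm y hy
    · simpa [h] using (norm_nonneg _).trans (hm y hy)
  refine ContinuousWithinAt.closure_le (s := Ioo a b) (g := fun _ ↦ sSup _)
    (by rwa [closure_Ioo hab.ne]) ((hcont x hx).norm.mono Ioo_subset_Icc_self)
    continuousWithinAt_const fun y hy ↦ ?_
  rw [derivWithin_of_mem_nhds (Icc_mem_nhds hy.1 hy.2)]
  exact le_csSup hbdd (mem_image_of_mem _ (Ioo_subset_Icc_self hy))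

end Calculus

section ScaledMoment

variable {E : Type*} [NormedAddCommGroup E] [NormedSpace ℝ E] {f : ℝ → E}

/-- The `n`-th moment over `[0, 1]` of the dilate `t ↦ f (t * s)`, as a function of `s`. For
continuous `f` it is the continuous extension of `s ↦ s⁻¹ ^ (n + 1) • ∫ x in 0..s, x ^ n • f x`
across `0`. -/
noncomputable def scaledMoment (n : ℕ) (f : ℝ → E) (s : ℝ) : E :=
  ∫ t in (0 : ℝ)..1, t ^ n • f (t * s)

lemma pow_succ_smul_scaledMoment (n : ℕ) (f : ℝ → E) (s : ℝ) :
    s ^ (n + 1) • scaledMoment n f s = ∫ x in (0 : ℝ)..s, x ^ n • f x := by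
  have h := intervalIntegral.smul_integral_comp_mul_right (a := 0) (b := 1)
    (fun x ↦ x ^ n • f x) s
  simp only [zero_mul, one_mul, mul_pow, mul_comm _ (s ^ n), mul_smul,
    intervalIntegral.integral_smul] at h
  rw [← h, scaledMoment, pow_succ', mul_smul]

lemma norm_scaledMoment_le {n : ℕ} {s M : ℝ} (hf : ∀ x, |x| ≤ |s| → ‖f x‖ ≤ M) :
    ‖scaledMoment n f s‖ ≤ M := by
  have h := intervalIntegral.norm_integral_le_of_norm_le_const (a := 0) (b := 1)
    (f := fun t ↦ t ^ n • f (t * s)) (C := M) fun t ht ↦ ?_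
  · simpa only [scaledMoment, sub_zero, abs_one, mul_one] using h
  rw [uIoc_of_le zero_le_one] at ht
  have ht' : |t| ≤ 1 := abs_le.mpr ⟨by linarith [ht.1], ht.2⟩
  have hts : |t * s| ≤ |s| := by
    rw [abs_mul]
    exact mul_le_of_le_one_left (abs_nonneg s) ht'
  calc ‖t ^ n • f (t * s)‖ = |t| ^ n * ‖f (t * s)‖ := by
        rw [norm_smul, norm_pow, Real.norm_eq_abs]
    _ ≤ ‖f (t * s)‖ := mul_le_of_le_one_left (norm_nonneg _) (pow_le_one₀ (abs_nonneg t) ht')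
    _ ≤ M := hf _ hts

lemma continuous_scaledMoment (n : ℕ) (hf : Continuous f) : Continuous (scaledMoment n f) :=
  intervalIntegral.continuous_parametric_intervalIntegral_of_continuous' (by fun_prop) 0 1

lemma hasDerivAt_scaledMoment (n : ℕ) (hf : ContDiff ℝ 1 f) (s : ℝ) :
    HasDerivAt (scaledMoment n f) (scaledMoment (n + 1) (deriv f) s) s := by
  have hf_cont : Continuous f := hf.continuous
  have hf'_cont : Continuous (deriv f) := hf.continuous_deriv le_rfl
  obtain ⟨B, hB⟩ := (isCompact_closedBall (0 : ℝ) (|s| + 1)).exists_bound_of_continuousOn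
    hf'_cont.continuousOn
  refine (intervalIntegral.hasDerivAt_integral_of_dominated_loc_of_deriv_le (bound := fun _ ↦ B)
    (F' := fun x t ↦ t ^ (n + 1) • deriv f (t * x)) (Metric.ball_mem_nhds s one_pos)
    (.of_forall fun x ↦ Continuous.aestronglyMeasurable (by fun_prop))
    (Continuous.intervalIntegrable (by fun_prop) _ _)
    (Continuous.aestronglyMeasurable (by fun_prop))
    (.of_forall fun t ht x hx ↦ ?_) intervalIntegrable_const
    (.of_forall fun t _ x _ ↦ ?_)).2
  · rw [uIoc_of_le zero_le_one] at ht
    have hx' : |x| ≤ |s| + 1 := by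
      have := abs_sub_abs_le_abs_sub x s
      rw [Metric.mem_ball, Real.dist_eq] at hx
      linarith
    have htx : t * x ∈ Metric.closedBall 0 (|s| + 1) := by
      rw [mem_closedBall_zero_iff, Real.norm_eq_abs, abs_mul, abs_of_pos ht.1]
      exact (mul_le_of_le_one_left (abs_nonneg x) ht.2).trans hx'
    rw [norm_smul, norm_pow, Real.norm_eq_abs, abs_of_pos ht.1]
    exact (mul_le_of_le_one_left (norm_nonneg _) (pow_le_one₀ ht.1.le ht.2)).trans (hB _ htx)
  · have hf_deriv : HasDerivAt f (deriv f (t * x)) (t * x) :=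
      (hf.differentiable one_ne_zero _).hasDerivAt
    have hcomp := hf_deriv.scomp x ((hasDerivAt_id x).const_mul t)
    simpa [pow_succ, mul_smul, Function.comp_def] using hcomp.fun_const_smul (t ^ n)

lemma contDiff_scaledMoment (n : ℕ) {k : ℕ} (hf : ContDiff ℝ k f) :
    ContDiff ℝ k (scaledMoment n f) := by
  induction k generalizing n f with
  | zero => simpa using continuous_scaledMoment n hf.continuous
  | succ k ih =>
    push_cast at hf ⊢
    have hderiv := hasDerivAt_scaledMoment n (hf.of_le (by simp))
    rw [contDiff_succ_iff_deriv] at hf ⊢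
    exact ⟨fun s ↦ (hderiv s).differentiableAt, by simp,
      by rw [funext fun s ↦ (hderiv s).deriv]; exact ih (n + 1) hf.2.2⟩

end ScaledMoment

section Sinc

lemma mul_sinc (x : ℝ) : x * sinc x = sin x := by
  simpa [sinc_eq_dslope] using sub_smul_dslope_of_zero sin_zero x

lemma sinc_eq_scaledMoment_cos : sinc = scaledMoment 0 cos := by
  ext x
  by_cases hx : x = 0
  · simp [hx, scaledMoment]
  · have h := pow_succ_smul_scaledMoment 0 cos x
    refine mul_left_cancel₀ hx ?_
    simpa [mul_sinc] using h.symm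

lemma contDiff_sinc (n : ℕ) : ContDiff ℝ n sinc :=
  sinc_eq_scaledMoment_cos ▸ contDiff_scaledMoment 0 contDiff_cos

lemma sin_ne_zero_of_mem_Ioo {s : ℝ} (hs : s ∈ Ioo (-π) π) (h0 : s ≠ 0) : sin s ≠ 0 :=
  fun h ↦ h0 ((sin_eq_zero_iff_of_lt_of_lt hs.1 hs.2).mp h)

lemma sinc_ne_zero_of_mem_Ioo {s : ℝ} (hs : s ∈ Ioo (-π) π) : sinc s ≠ 0 := by
  by_cases h0 : s = 0
  · simp [h0]
  · exact right_ne_zero_of_mul (mul_sinc s ▸ sin_ne_zero_of_mem_Ioo hs h0)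

lemma contDiffOn_inv_sinc_sq (n : ℕ) : ContDiffOn ℝ n (fun s ↦ (sinc s ^ 2)⁻¹) (Ioo (-π) π) :=
  ((contDiff_sinc n).pow 2).contDiffOn.inv fun _ hs ↦ pow_ne_zero 2 (sinc_ne_zero_of_mem_Ioo hs)

end Sinc

section SinSqQuotient

variable {g : ℝ → ℝ} {s : ℝ}

/-- The quotient of `∫ x in 0..s, sin x * g x` by `sin s ^ 2`, written so that the singularity at
`s = 0` is removed: both `sin` in the numerator and `sin` in the denominator are replaced by the
product of the identity with `sinc`, and the powers of `s` cancel. -/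
noncomputable def sinSqQuotient (g : ℝ → ℝ) (s : ℝ) : ℝ :=
  (sinc s ^ 2)⁻¹ * scaledMoment 1 (fun x ↦ sinc x * g x) s

lemma integral_sin_mul_eq (g : ℝ → ℝ) (hs : s ∈ Ioo (-π) π) :
    ∫ x in (0 : ℝ)..s, sin x * g x = sin s ^ 2 * sinSqQuotient g s := by
  have h := pow_succ_smul_scaledMoment 1 (fun x ↦ sinc x * g x) s
  simp only [smul_eq_mul, pow_one, ← mul_assoc, mul_sinc] at h
  have hsinc := sinc_ne_zero_of_mem_Ioo hs
  rw [← h, sinSqQuotient, ← mul_sinc s]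
  field_simp
  ring

lemma contDiffOn_sinSqQuotient {n : ℕ} (hg : ContDiff ℝ n g) :
    ContDiffOn ℝ n (sinSqQuotient g) (Ioo (-π) π) :=
  (contDiffOn_inv_sinc_sq n).mul (contDiff_scaledMoment 1 ((contDiff_sinc n).mul hg)).contDiffOn

lemma continuousOn_sinSqQuotient (hg : Continuous g) :
    ContinuousOn (sinSqQuotient g) (Ioo (-π) π) :=
  (contDiffOn_sinSqQuotient (n := 0) (by simpa using hg)).continuousOn

lemma sinSqQuotient_zero (g : ℝ → ℝ) : sinSqQuotient g 0 = g 0 / 2 := by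
  have h : scaledMoment 1 (fun x ↦ sinc x * g x) 0 = g 0 / 2 := by
    norm_num [scaledMoment, div_eq_inv_mul]
  simp [sinSqQuotient, h]

/- Away from `0` this is the quotient rule for `(∫ x in 0..s, sin x * g x) / sin s`. -/
lemma hasDerivAt_sin_mul_sinSqQuotient (hg : Continuous g) (hs : s ∈ Ioo (-π) π) :
    HasDerivAt (fun s ↦ sin s * sinSqQuotient g s) (g s - cos s * sinSqQuotient g s) s := by
  by_cases h0 : s = 0
  · subst h0
    have hcont : ContinuousAt (fun s ↦ sinc s * sinSqQuotient g s) 0 :=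
      continuous_sinc.continuousAt.mul
        ((continuousOn_sinSqQuotient hg).continuousAt (isOpen_Ioo.mem_nhds hs))
    have h := hasDerivAt_id_smul_zero hcont
    simp only [smul_eq_mul, ← mul_assoc, mul_sinc] at h
    refine h.congr_deriv ?_
    rw [sinSqQuotient_zero, sinc_zero, cos_zero]
    ring
  · have hsin := sin_ne_zero_of_mem_Ioo hs h0
    have hintegral : HasDerivAt (fun s ↦ ∫ x in (0 : ℝ)..s, sin x * g x) (sin s * g s) s :=
      ((continuous_sin.mul hg).integral_hasStrictDerivAt 0 s).hasDerivAt
    have hquot := hintegral.fun_div (hasDerivAt_sin s) hsin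
    have heq : (fun s ↦ sin s * sinSqQuotient g s) =ᶠ[𝓝 s]
        fun s ↦ (∫ x in (0 : ℝ)..s, sin x * g x) / sin s := by
      filter_upwards [isOpen_Ioo.mem_nhds hs, isOpen_ne.mem_nhds h0] with y hy hy0
      have := sin_ne_zero_of_mem_Ioo hy hy0
      rw [integral_sin_mul_eq g hy]
      field_simp
    refine (hquot.congr_of_eventuallyEq heq).congr_deriv ?_
    rw [integral_sin_mul_eq g hs]
    field_simp

lemma hasDerivAt_sinSqQuotient (hg : ContDiff ℝ 1 g) (hs : s ∈ Ioo (-π) π) :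
    HasDerivAt (sinSqQuotient g) (deriv (fun s ↦ (sinc s ^ 2)⁻¹) s *
      scaledMoment 1 (fun x ↦ sinc x * g x) s + (sinc s ^ 2)⁻¹ *
      scaledMoment 2 (fun x ↦ deriv sinc x * g x + sinc x * deriv g x) s) s := by
  have hsinc : ContDiff ℝ 1 sinc := contDiff_sinc 1
  have hinv : HasDerivAt (fun s ↦ (sinc s ^ 2)⁻¹) _ s :=
    (((contDiffOn_inv_sinc_sq 1).differentiableOn (by simp)).differentiableAt
      (isOpen_Ioo.mem_nhds hs)).hasDerivAt
  have hprod : deriv (fun x ↦ sinc x * g x) = fun x ↦ deriv sinc x * g x + sinc x * deriv g x :=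
    funext fun x ↦ deriv_fun_mul (hsinc.differentiable one_ne_zero x)
      (hg.differentiable one_ne_zero x)
  exact hprod ▸ hinv.mul (hasDerivAt_scaledMoment 1 (hsinc.mul hg) s)

lemma abs_mul_le_of_abs_le_one {a b c : ℝ} (ha : |a| ≤ 1) (hb : |b| ≤ c) : |a * b| ≤ c :=
  (abs_mul a b).trans_le ((mul_le_of_le_one_left (abs_nonneg b) ha).trans hb)

lemma abs_scaledMoment_sinc_mul_le {n : ℕ} {M : ℝ} (hg : ∀ x, |x| ≤ |s| → |g x| ≤ M) :
    |scaledMoment n (fun x ↦ sinc x * g x) s| ≤ M := by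
  rw [← Real.norm_eq_abs]
  exact norm_scaledMoment_le fun x hx ↦ abs_mul_le_of_abs_le_one (abs_sinc_le_one x) (hg x hx)

lemma abs_scaledMoment_deriv_sinc_mul_add_le {n : ℕ} {g' : ℝ → ℝ} {M S : ℝ}
    (hS : ∀ x, |x| ≤ |s| → |deriv sinc x| ≤ S) (hg : ∀ x, |x| ≤ |s| → |g x| ≤ M)
    (hg' : ∀ x, |x| ≤ |s| → |g' x| ≤ M) :
    |scaledMoment n (fun x ↦ deriv sinc x * g x + sinc x * g' x) s| ≤ (S + 1) * M := by
  rw [← Real.norm_eq_abs]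
  refine norm_scaledMoment_le fun x hx ↦ ?_
  have hS0 : 0 ≤ S := (abs_nonneg _).trans (hS x hx)
  calc ‖deriv sinc x * g x + sinc x * g' x‖
      ≤ |deriv sinc x * g x| + |sinc x * g' x| := norm_add_le _ _
    _ ≤ S * M + M := by
        refine add_le_add ?_ (abs_mul_le_of_abs_le_one (abs_sinc_le_one x) (hg' x hx))
        rw [abs_mul]
        exact mul_le_mul (hS x hx) (hg x hx) (abs_nonneg _) hS0
    _ = (S + 1) * M := by ring

lemma exists_bound_sinSqQuotient {ε : ℝ} (hε : 0 < ε) (hεπ : ε < π) :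
    ∃ C ≥ 0, ∀ (g : ℝ → ℝ) (M : ℝ), ContDiff ℝ 1 g → (∀ x ∈ Icc (-ε) ε, |g x| ≤ M) →
      (∀ x ∈ Icc (-ε) ε, |deriv g x| ≤ M) → ∀ s ∈ Icc (-ε) ε,
      |sinSqQuotient g s| ≤ C * M ∧ |deriv (sinSqQuotient g) s| ≤ C * M := by
  have hsub : Icc (-ε) ε ⊆ Ioo (-π) π := Icc_subset_Ioo (neg_lt_neg hεπ) hεπ
  have h0 : (0 : ℝ) ∈ Icc (-ε) ε := ⟨by linarith, hε.le⟩
  have hq := contDiffOn_inv_sinc_sq 1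
  obtain ⟨Q, hQ⟩ := isCompact_Icc.exists_bound_of_continuousOn (hq.continuousOn.mono hsub)
  obtain ⟨Q', hQ'⟩ := isCompact_Icc.exists_bound_of_continuousOn
    ((hq.continuousOn_deriv_of_isOpen isOpen_Ioo (by simp)).mono hsub)
  obtain ⟨S, hS⟩ := isCompact_Icc.exists_bound_of_continuousOn (s := Icc (-ε) ε)
    ((contDiff_sinc 1).continuous_deriv (by simp)).continuousOn
  have hQ0 : 0 ≤ Q := (norm_nonneg _).trans (hQ 0 h0)
  have hQ'0 : 0 ≤ Q' := (norm_nonneg _).trans (hQ' 0 h0)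
  have hS0 : 0 ≤ S := (norm_nonneg _).trans (hS 0 h0)
  refine ⟨Q' + Q * (S + 1), by positivity, fun g M hg hgM hg'M s hs ↦ ?_⟩
  have hM0 : 0 ≤ M := (abs_nonneg _).trans (hgM 0 h0)
  have hmem (x : ℝ) (hx : |x| ≤ |s|) : x ∈ Icc (-ε) ε := abs_le.mp (hx.trans (abs_le.mpr hs))
  have hmom : |scaledMoment 1 (fun x ↦ sinc x * g x) s| ≤ M :=
    abs_scaledMoment_sinc_mul_le fun x hx ↦ hgM x (hmem x hx)
  have hmom' : |scaledMoment 2 (fun x ↦ deriv sinc x * g x + sinc x * deriv g x) s| ≤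
      (S + 1) * M :=
    abs_scaledMoment_deriv_sinc_mul_add_le (fun x hx ↦ hS x (hmem x hx))
      (fun x hx ↦ hgM x (hmem x hx)) (fun x hx ↦ hg'M x (hmem x hx))
  constructor
  · calc |sinSqQuotient g s| ≤ Q * M := by
          rw [sinSqQuotient, abs_mul]
          exact mul_le_mul (hQ s hs) hmom (abs_nonneg _) hQ0
      _ ≤ (Q' + Q * (S + 1)) * M := by
          gcongr
          nlinarith
  · rw [(hasDerivAt_sinSqQuotient hg (hsub hs)).deriv]
    calc _ ≤ Q' * M + Q * ((S + 1) * M) := by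
          refine (abs_add_le _ _).trans (add_le_add ?_ ?_) <;> rw [abs_mul]
          · exact mul_le_mul (hQ' s hs) hmom (abs_nonneg _) hQ'0
          · exact mul_le_mul (hQ s hs) hmom' (abs_nonneg _) hQ0
      _ = (Q' + Q * (S + 1)) * M := by ring

end SinSqQuotient

section Operator

variable {g : ℝ → ℝ} {ρ : ℝ}

lemma eqOn_Aop {h : ℝ → ℝ} {s : Set ℝ} (hs : s.OrdConnected) (h0 : 0 ∈ s) (hgh : EqOn g h s) :
    EqOn (Aop g) (Aop h) s := by
  refine fun ρ hρ ↦ congrArg Neg.neg (intervalIntegral.integral_congr fun y hy ↦ ?_)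
  have hys := hs.uIcc_subset h0 hρ hy
  refine congrArg ((sin y)⁻¹ * ·) (intervalIntegral.integral_congr fun x hx ↦ ?_)
  exact congrArg (sin x * ·) (hgh (hs.uIcc_subset h0 hys hx))

lemma Aop_eq_integral_sin_mul_sinSqQuotient (g : ℝ → ℝ) (hρ : ρ ∈ Ioo (-π) π) :
    Aop g ρ = -∫ s in (0 : ℝ)..ρ, sin s * sinSqQuotient g s := by
  refine congrArg Neg.neg (intervalIntegral.integral_congr fun s hs ↦ ?_)
  have h0 : (0 : ℝ) ∈ Ioo (-π) π := ⟨neg_lt_zero.mpr pi_pos, pi_pos⟩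
  simp only [integral_sin_mul_eq g (ordConnected_Ioo.uIcc_subset h0 hρ hs)]
  by_cases hsin : sin s = 0
  · simp [hsin]
  · field_simp

lemma hasDerivAt_Aop (hg : Continuous g) (hρ : ρ ∈ Ioo (-π) π) :
    HasDerivAt (Aop g) (-(sin ρ * sinSqQuotient g ρ)) ρ := by
  have h0 : (0 : ℝ) ∈ Ioo (-π) π := ⟨neg_lt_zero.mpr pi_pos, pi_pos⟩
  have hcont : ContinuousOn (fun s ↦ sin s * sinSqQuotient g s) (Ioo (-π) π) :=
    continuous_sin.continuousOn.mul (continuousOn_sinSqQuotient hg)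
  have hintegral := intervalIntegral.integral_hasDerivAt_right
    (hcont.mono (ordConnected_Ioo.uIcc_subset h0 hρ)).intervalIntegrable
    (hcont.stronglyMeasurableAtFilter isOpen_Ioo ρ hρ)
    (hcont.continuousAt (isOpen_Ioo.mem_nhds hρ))
  refine hintegral.fun_neg.congr_of_eventuallyEq ?_
  filter_upwards [isOpen_Ioo.mem_nhds hρ] with y hy
  exact Aop_eq_integral_sin_mul_sinSqQuotient g hy

lemma contDiffOn_Aop_Ioo {n : ℕ} (hg : ContDiff ℝ n g) :
    ContDiffOn ℝ (n + 2) (Aop g) (Ioo (-π) π) := by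
  have h2 : ContDiffOn ℝ n (fun s ↦ g s - cos s * sinSqQuotient g s) (Ioo (-π) π) :=
    hg.contDiffOn.sub (contDiff_cos.contDiffOn.mul (contDiffOn_sinSqQuotient hg))
  have h1 := contDiffOn_add_one_of_hasDerivAt isOpen_Ioo
    (fun s hs ↦ hasDerivAt_sin_mul_sinSqQuotient hg.continuous hs) h2
  have h0 := contDiffOn_add_one_of_hasDerivAt (n := n + 1) isOpen_Ioo
    (fun s hs ↦ hasDerivAt_Aop hg.continuous hs) (by exact_mod_cast h1.neg)
  exact_mod_cast h0

lemma contDiffOn_Aop_Icc {n : ℕ} {ε : ℝ} (hε : 0 < ε) (hεπ : ε < π)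
    (hg : ContDiffOn ℝ n g (Icc (-ε) ε)) : ContDiffOn ℝ (n + 2) (Aop g) (Icc (-ε) ε) := by
  obtain ⟨G, hG, hgG⟩ := exists_contDiff_eqOn_Icc (neg_lt_self hε) hg
  exact ((contDiffOn_Aop_Ioo hG).mono (Icc_subset_Ioo (neg_lt_neg hεπ) hεπ)).congr
    (eqOn_Aop ordConnected_Icc ⟨by linarith, hε.le⟩ hgG)

lemma iteratedDeriv_two_Aop (hg : Continuous g) :
    EqOn (iteratedDeriv 2 (Aop g)) (fun s ↦ -(g s - cos s * sinSqQuotient g s)) (Ioo (-π) π) := by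
  intro s hs
  have h1 : EqOn (deriv (Aop g)) (fun s ↦ -(sin s * sinSqQuotient g s)) (Ioo (-π) π) :=
    fun y hy ↦ (hasDerivAt_Aop hg hy).deriv
  rw [iteratedDeriv_succ, iteratedDeriv_one, h1.deriv isOpen_Ioo hs]
  exact (hasDerivAt_sin_mul_sinSqQuotient hg hs).fun_neg.deriv

lemma iteratedDeriv_three_Aop (hg : ContDiff ℝ 1 g) (hρ : ρ ∈ Ioo (-π) π) :
    iteratedDeriv 3 (Aop g) ρ =
      -(deriv g ρ - (-sin ρ * sinSqQuotient g ρ + cos ρ * deriv (sinSqQuotient g) ρ)) := by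
  have hw := (hasDerivAt_sinSqQuotient hg hρ).differentiableAt.hasDerivAt
  rw [iteratedDeriv_succ, (iteratedDeriv_two_Aop hg.continuous).deriv isOpen_Ioo hρ]
  exact ((hg.differentiable one_ne_zero ρ).hasDerivAt.fun_sub
    ((hasDerivAt_cos ρ).fun_mul hw)).fun_neg.deriv

lemma exists_bound_iteratedDeriv_Aop {ε : ℝ} (hε : 0 < ε) (hεπ : ε < π) :
    ∃ C > 0, ∀ (g : ℝ → ℝ) (M : ℝ), ContDiff ℝ 1 g → (∀ x ∈ Icc (-ε) ε, |g x| ≤ M) →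
      (∀ x ∈ Icc (-ε) ε, |deriv g x| ≤ M) →
      ∀ i ≤ 3, ∀ ρ ∈ Icc (-ε) ε, |iteratedDeriv i (Aop g) ρ| ≤ C * M := by
  obtain ⟨C, hC, hbound⟩ := exists_bound_sinSqQuotient hε hεπ
  have hsub : Icc (-ε) ε ⊆ Ioo (-π) π := Icc_subset_Ioo (neg_lt_neg hεπ) hεπ
  have h0 : (0 : ℝ) ∈ Icc (-ε) ε := ⟨by linarith, hε.le⟩
  refine ⟨1 + (2 + ε) * C, by positivity, fun g M hg hgM hg'M i hi ρ hρ ↦ ?_⟩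
  have hw (s) (hs : s ∈ Icc (-ε) ε) := (hbound g M hg hgM hg'M s hs).1
  have hw' := (hbound g M hg hgM hg'M ρ hρ).2
  have hsw (s) (hs : s ∈ Icc (-ε) ε) : |sin s * sinSqQuotient g s| ≤ C * M :=
    abs_mul_le_of_abs_le_one (abs_sin_le_one s) (hw s hs)
  have hcw := abs_mul_le_of_abs_le_one (abs_cos_le_one ρ) (hw ρ hρ)
  have hcw' := abs_mul_le_of_abs_le_one (abs_cos_le_one ρ) hw'
  have hM : 0 ≤ M := (abs_nonneg _).trans (hgM 0 h0)
  have hCM : 0 ≤ C * M := mul_nonneg hC hM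
  have hεCM : 0 ≤ ε * (C * M) := mul_nonneg hε.le hCM
  suffices |iteratedDeriv i (Aop g) ρ| ≤ max (C * M * ε) (M + 2 * (C * M)) from
    this.trans (max_le (by linarith) (by linarith))
  interval_cases i
  · have hintegral := intervalIntegral.norm_integral_le_of_norm_le_const
      (f := fun s ↦ sin s * sinSqQuotient g s) fun s hs ↦
        hsw s (uIcc_subset_Icc h0 hρ (uIoc_subset_uIcc hs))
    rw [iteratedDeriv_zero, Aop_eq_integral_sin_mul_sinSqQuotient g (hsub hρ), abs_neg]
    rw [Real.norm_eq_abs, sub_zero] at hintegral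
    exact le_max_of_le_left (hintegral.trans (by gcongr; exact abs_le.mpr hρ))
  · rw [iteratedDeriv_one, (hasDerivAt_Aop hg.continuous (hsub hρ)).deriv, abs_neg]
    exact le_max_of_le_right (by linarith [hsw ρ hρ])
  · rw [iteratedDeriv_two_Aop hg.continuous (hsub hρ), abs_neg]
    exact le_max_of_le_right ((abs_sub _ _).trans (by linarith [hgM ρ hρ]))
  · rw [iteratedDeriv_three_Aop hg (hsub hρ), abs_neg]
    refine le_max_of_le_right ((abs_sub _ _).trans ?_)
    have := abs_add_le (-sin ρ * sinSqQuotient g ρ) (cos ρ * deriv (sinSqQuotient g) ρ)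
    rw [neg_mul, abs_neg, ← neg_mul] at this
    linarith [hg'M ρ hρ, hsw ρ hρ]

lemma exists_bound_iteratedDerivWithin_Aop {ε : ℝ} (hε : 0 < ε) (hεπ : ε < π) :
    ∃ C > 0, ∀ (g : ℝ → ℝ) (M : ℝ), ContDiffOn ℝ 1 g (Icc (-ε) ε) →
      (∀ x ∈ Icc (-ε) ε, |g x| ≤ M) → (∀ x ∈ Icc (-ε) ε, |derivWithin g (Icc (-ε) ε) x| ≤ M) →
      ∀ i ≤ 3, ∀ ρ ∈ Icc (-ε) ε, |iteratedDerivWithin i (Aop g) (Icc (-ε) ε) ρ| ≤ C * M := by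
  obtain ⟨C, hC, hbound⟩ := exists_bound_iteratedDeriv_Aop hε hεπ
  refine ⟨C, hC, fun g M hg hgM hg'M i hi ρ hρ ↦ ?_⟩
  have hUD : UniqueDiffOn ℝ (Icc (-ε) ε) := uniqueDiffOn_Icc (neg_lt_self hε)
  obtain ⟨G, hG, hgG⟩ := exists_contDiff_eqOn_Icc (n := 1) (neg_lt_self hε) (by simpa using hg)
  have hderiv (x) (hx : x ∈ Icc (-ε) ε) : derivWithin g (Icc (-ε) ε) x = deriv G x := by
    rw [derivWithin_congr hgG (hgG hx),
      (hG.differentiable (by simp) x).derivWithin (hUD x hx)]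
  have hρπ : Ioo (-π) π ∈ 𝓝 ρ := Ioo_mem_nhds (by linarith [hρ.1]) (hρ.2.trans_lt hεπ)
  have hAG : ContDiffAt ℝ i (Aop G) ρ :=
    ((contDiffOn_Aop_Ioo hG).contDiffAt hρπ).of_le (by exact_mod_cast hi)
  rw [iteratedDerivWithin_congr (eqOn_Aop ordConnected_Icc ⟨by linarith, hε.le⟩ hgG) hρ,
    iteratedDerivWithin_eq_iteratedDeriv hUD hAG hρ]
  exact hbound G M (by simpa using hG) (fun x hx ↦ hgG hx ▸ hgM x hx)
    (fun x hx ↦ hderiv x hx ▸ hg'M x hx) i hi ρ hρ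

end Operator

theorem stmt2_general (ε : ℝ) (hε : 0 < ε) (hεπ : ε < Real.pi) :
    (∀ (n : ℕ) (g : ℝ → ℝ), ContDiffOn ℝ n g (Icc (-ε) ε) →
      ContDiffOn ℝ (n + 2) (Aop g) (Icc (-ε) ε)) ∧
    ∃ C > 0, ∀ g : ℝ → ℝ, ContDiffOn ℝ 1 g (Icc (-ε) ε) →
      ∀ i : ℕ, i ≤ 3 → ∀ ρ ∈ Icc (-ε) ε,
        |iteratedDeriv i (Aop g) ρ| ≤
          C * (sSup ((fun x => |g x|) '' Icc (-ε) ε) +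
               sSup ((fun x => |deriv g x|) '' Icc (-ε) ε)) := by
  obtain ⟨C, hC, hbound⟩ := exists_bound_iteratedDerivWithin_Aop hε hεπ
  refine ⟨fun n g hg ↦ contDiffOn_Aop_Icc hε hεπ hg, C, hC, fun g hg i hi ρ hρ ↦ ?_⟩
  have hlt : -ε < ε := neg_lt_self hε
  have hAg : ContDiffOn ℝ 3 (Aop g) (Icc (-ε) ε) := by
    exact_mod_cast contDiffOn_Aop_Icc (n := 1) hε hεπ (by exact_mod_cast hg)
  set M₀ := sSup ((fun x ↦ |g x|) '' Icc (-ε) ε)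
  set M₁ := sSup ((fun x ↦ |deriv g x|) '' Icc (-ε) ε)
  have hM₀ (x) (hx : x ∈ Icc (-ε) ε) : |g x| ≤ M₀ :=
    le_csSup (isCompact_Icc.bddAbove_image hg.continuousOn.abs) (mem_image_of_mem _ hx)
  have hM₁ (x) (hx : x ∈ Icc (-ε) ε) : |derivWithin g (Icc (-ε) ε) x| ≤ M₁ :=
    norm_derivWithin_le_sSup_norm_deriv hlt hg hx
  have hM₀_nonneg : 0 ≤ M₀ := (abs_nonneg _).trans (hM₀ ρ hρ)
  have hM₁_nonneg : 0 ≤ M₁ := (abs_nonneg _).trans (hM₁ ρ hρ)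
  rcases iteratedDeriv_eq_iteratedDerivWithin_or_eq_zero (n := 3) (convex_Icc (-ε) ε)
    (by simpa) hAg hi hρ with h | h
  · rw [h]
    exact hbound g (M₀ + M₁) hg (fun x hx ↦ (hM₀ x hx).trans (by linarith))
      (fun x hx ↦ (hM₁ x hx).trans (by linarith)) i hi ρ hρ
  · rw [h, abs_zero]
    positivity

/-- If `g` is even and `C¹` on `[-ε,ε]`, then `A(g)` is `C³` there; moreover `A` is a
continuous linear map from the even `C¹` functions (with the `C¹` norm) to the even `C³`
functions (with the `C³` norm): all derivatives of `A(g)` up to order `3` are bounded by a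
uniform constant times the `C¹` norm of `g`. -/
theorem stmt2 (ε : ℝ) (hε : 0 < ε) (hεπ : ε < Real.pi) :
    (∀ g : ℝ → ℝ, ContDiffOn ℝ 1 g (Icc (-ε) ε) → (∀ x, g (-x) = g x) →
      ContDiffOn ℝ 3 (Aop g) (Icc (-ε) ε)) ∧
    ∃ C > 0, ∀ g : ℝ → ℝ, ContDiffOn ℝ 1 g (Icc (-ε) ε) → (∀ x, g (-x) = g x) →
      ∀ i : ℕ, i ≤ 3 → ∀ ρ ∈ Icc (-ε) ε,
        |iteratedDeriv i (Aop g) ρ| ≤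
          C * (sSup ((fun x => |g x|) '' Icc (-ε) ε) +
               sSup ((fun x => |deriv g x|) '' Icc (-ε) ε)) := by
  obtain ⟨hreg, C, hC, hbound⟩ := stmt2_general ε hε hεπ
  exact ⟨fun g hg _ ↦ by exact_mod_cast hreg 1 g (by exact_mod_cast hg),
    C, hC, fun g hg _ ↦ hbound g hg⟩
end

section
/- Let f: ℝ → ℝ be a C¹ function, and for each t ∈ ℝ let U_t denote the unique even C² solution on (−π,π) of U'' + (cot ρ)·U' + f(U) = 0 with U_t(0) = t. Then the solution depends on t in a C¹ way: for every ρ₀ ∈ (−π,π), the map t ↦ U_t(ρ₀) is C¹ on ℝ. -/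
open Real Set

/-- `U` is an even `C²` solution of `U'' + (cot ρ)·U' + f(U) = 0` on `(-π, π)`. -/
def IsEvenSol (f U : ℝ → ℝ) : Prop :=
  (∀ ρ ∈ Set.Ioo (-Real.pi) Real.pi, U (-ρ) = U ρ) ∧
  ContDiffOn ℝ 2 U (Set.Ioo (-Real.pi) Real.pi) ∧
  ∀ ρ ∈ Set.Ioo (-Real.pi) Real.pi, ρ ≠ 0 →
    deriv (deriv U) ρ + (Real.cos ρ / Real.sin ρ) * deriv U ρ + f (U ρ) = 0

open Filter Metric Topology

/-! The difference quotients of `t ↦ U_t` solve, up to a small error, the equation linearised along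
one fixed solution, with the same vanishing initial velocity. The singular damping `cot ρ` is
bounded below on `(0, |ρ₀|]`, which is all that an energy estimate needs, so any two such quotients
stay close up to `ρ₀`. They are therefore Cauchy as both parameters tend to `t`, which gives strict
differentiability without ever solving the linearised equation; and a function strictly
differentiable at every point near `t` is `C¹` there. -/

section StrictDerivative

variable {𝕜 E F : Type*} [NontriviallyNormedField 𝕜] [NormedAddCommGroup E] [NormedSpace 𝕜 E]
  [NormedAddCommGroup F] [NormedSpace 𝕜 F]

theorem hasDerivAtFilter_iff_tendsto_slope_compl_diagonal {φ : 𝕜 → F} {φ' : F}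
    {L : Filter (𝕜 × 𝕜)} :
    HasDerivAtFilter φ φ' L ↔
      Tendsto (fun p ↦ slope φ p.2 p.1) (L ⊓ 𝓟 (diagonal 𝕜)ᶜ) (𝓝 φ') := by
  have hquotient : HasDerivAtFilter φ φ' L ↔
      Tendsto (fun p ↦ slope φ p.2 p.1 - (p.1 - p.2)⁻¹ • (p.1 - p.2) • φ') L (𝓝 0) := by
    simp only [hasDerivAtFilter_iff_tendsto, ← norm_inv, ← norm_smul,
      ← tendsto_zero_iff_norm_tendsto_zero, slope_def_module, smul_sub]
  have hoff_diagonal : ∀ p ∉ (diagonal 𝕜)ᶜ,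
      slope φ p.2 p.1 - (p.1 - p.2)⁻¹ • (p.1 - p.2) • φ' = 0 := fun p hp ↦ by
    have hp : p.1 = p.2 := not_not.1 hp
    simp [hp]
  rw [hquotient, ← tendsto_inf_principal_nhds_iff_of_forall_eq hoff_diagonal,
    ← tendsto_sub_nhds_zero_iff (u := fun p : 𝕜 × 𝕜 ↦ slope φ p.2 p.1)]
  refine tendsto_congr' <| (EqOn.eventuallyEq fun p hp ↦ ?_).filter_mono inf_le_right
  have hp : p.1 - p.2 ≠ 0 := sub_ne_zero.2 hp
  rw [inv_smul_smul₀ hp φ']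

theorem hasStrictDerivAt_iff_tendsto_slope {φ : 𝕜 → F} {φ' : F} {t : 𝕜} :
    HasStrictDerivAt φ φ' t ↔
      Tendsto (fun p ↦ slope φ p.2 p.1) (𝓝[(diagonal 𝕜)ᶜ] (t, t)) (𝓝 φ') :=
  hasDerivAtFilter_iff_tendsto_slope_compl_diagonal

theorem nhdsWithin_compl_diagonal_neBot {X : Type*} [TopologicalSpace X] (x : X)
    [(𝓝[≠] x).NeBot] : (𝓝[(diagonal X)ᶜ] (x, x)).NeBot := by
  have : Tendsto (fun y ↦ (y, x)) (𝓝[≠] x) (𝓝[(diagonal X)ᶜ] (x, x)) :=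
    (Continuous.prodMk_left x).continuousWithinAt.tendsto_nhdsWithin fun y hy ↦ hy
  exact this.neBot

theorem exists_hasStrictDerivAt_of_slope [CompleteSpace F] {φ : 𝕜 → F} {t : 𝕜}
    (h : ∀ ε > 0, ∃ S ∈ 𝓝[(diagonal 𝕜)ᶜ] (t, t), ∀ p ∈ S, ∀ q ∈ S,
      ‖slope φ p.2 p.1 - slope φ q.2 q.1‖ < ε) :
    ∃ φ', HasStrictDerivAt φ φ' t := by
  have := nhdsWithin_compl_diagonal_neBot t
  suffices Cauchy (map (fun p : 𝕜 × 𝕜 ↦ slope φ p.2 p.1) (𝓝[(diagonal 𝕜)ᶜ] (t, t))) from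
    (CompleteSpace.complete this).imp fun _ ↦ hasStrictDerivAt_iff_tendsto_slope.2
  refine Metric.cauchy_iff.2 ⟨inferInstance, fun ε hε ↦ ?_⟩
  obtain ⟨S, hS, hSε⟩ := h ε hε
  refine ⟨_, image_mem_map hS, ?_⟩
  rintro _ ⟨p, hp, rfl⟩ _ ⟨q, hq, rfl⟩
  simpa only [dist_eq_norm] using hSε p hp q hq

theorem continuousAt_fderiv_of_hasStrictFDerivAt {φ : E → F} {φ' : E →L[𝕜] F} {x : E}
    (hφ : HasStrictFDerivAt φ φ' x) (hd : ∀ᶠ y in 𝓝 x, DifferentiableAt 𝕜 φ y) :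
    ContinuousAt (fderiv 𝕜 φ) x := by
  rw [ContinuousAt, hφ.hasFDerivAt.fderiv, Metric.nhds_basis_closedBall.tendsto_right_iff]
  intro ε hε
  have hlip : ∀ᶠ y in 𝓝 x, ∀ᶠ z in 𝓝 y, ‖φ z - φ y - φ' (z - y)‖ ≤ ε * ‖z - y‖ := by
    have hnear := (hφ.isLittleO.def hε).eventually_nhds
    filter_upwards [(continuous_id.prodMk continuous_id).tendsto x |>.eventually hnear] with y hy
    exact (Continuous.prodMk_left y).tendsto y |>.eventually hy
  filter_upwards [hd, hlip] with y hy hyε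
  rw [mem_closedBall_iff_norm]
  refine (hy.hasFDerivAt.sub φ'.hasFDerivAt).le_of_lip' hε.le ?_
  filter_upwards [hyε] with z hz
  rwa [Pi.sub_apply, Pi.sub_apply, sub_sub_sub_comm, ← map_sub]

theorem contDiffAt_one_of_eventually_hasStrictFDerivAt {φ : E → F} {x : E}
    (h : ∀ᶠ y in 𝓝 x, ∃ φ' : E →L[𝕜] F, HasStrictFDerivAt φ φ' y) :
    ContDiffAt 𝕜 1 φ x := by
  have hd : ∀ᶠ y in 𝓝 x, DifferentiableAt 𝕜 φ y := h.mono fun y ⟨φ', hφ'⟩ ↦ hφ'.differentiableAt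
  refine contDiffAt_one_iff.2 ⟨fderiv 𝕜 φ, _, h.and hd.eventually_nhds, ?_, ?_⟩
  · rintro y ⟨⟨φ', hφ'⟩, hy⟩
    exact (continuousAt_fderiv_of_hasStrictFDerivAt hφ' hy).continuousWithinAt
  · rintro y ⟨-, hy⟩
    exact hy.self_of_nhds.hasFDerivAt

end StrictDerivative

section UniformDerivative

variable {E F : Type*} [NormedAddCommGroup E] [NormedSpace ℝ E] [NormedAddCommGroup F]
  [NormedSpace ℝ F] {f : E → F}

theorem exists_norm_sub_sub_fderiv_le_of_isCompact (hf : ContDiff ℝ 1 f) {K : Set E}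
    (hK : IsCompact K) {ε : ℝ} (hε : 0 < ε) :
    ∃ η > 0, ∀ z ∈ K, ∀ x ∈ ball z η, ∀ y ∈ ball z η,
      ‖f x - f y - fderiv ℝ f z (x - y)‖ ≤ ε * ‖x - y‖ := by
  obtain ⟨η, hη, hηε⟩ := Metric.mem_uniformity_dist.1 <|
    hK.uniformContinuousAt_of_continuousAt (fderiv ℝ f)
      (fun z _ ↦ (hf.continuous_fderiv one_ne_zero).continuousAt) (dist_mem_uniformity hε)
  refine ⟨η, hη, fun z hz x hx y hy ↦ ?_⟩
  refine (convex_ball z η).norm_image_sub_le_of_norm_fderiv_le'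
    (fun w _ ↦ hf.differentiable one_ne_zero w) (fun w hw ↦ ?_) hy hx
  rw [← dist_eq_norm, dist_comm]
  exact (hηε (by rwa [dist_comm]) hz).le

theorem exists_norm_sub_le_mul_of_isCompact (hf : ContDiff ℝ 1 f) {K : Set E}
    (hK : IsCompact K) :
    ∃ A ≥ 0, ∃ η > 0, ∀ z ∈ K, ∀ x ∈ ball z η, ‖f x - f z‖ ≤ A * ‖x - z‖ := by
  obtain ⟨η, hη, hfη⟩ := exists_norm_sub_sub_fderiv_le_of_isCompact hf hK one_pos
  obtain ⟨C, hC⟩ :=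
    hK.exists_bound_of_continuousOn (hf.continuous_fderiv one_ne_zero).continuousOn
  refine ⟨|C| + 1, by positivity, η, hη, fun z hz x hx ↦ ?_⟩
  have hCz : ‖fderiv ℝ f z‖ ≤ |C| := (hC z hz).trans (le_abs_self C)
  calc ‖f x - f z‖ ≤ ‖fderiv ℝ f z (x - z)‖ + ‖f x - f z - fderiv ℝ f z (x - z)‖ :=
        norm_le_insert' _ _
    _ ≤ |C| * ‖x - z‖ + 1 * ‖x - z‖ :=
        add_le_add ((fderiv ℝ f z).le_of_opNorm_le hCz _) (hfη z hz x hx z (mem_ball_self hη))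
    _ = (|C| + 1) * ‖x - z‖ := by ring

theorem eventually_norm_slope_comp_sub_fderiv_le (hf : ContDiff ℝ 1 f) {X : Type*}
    [TopologicalSpace X] {u : ℝ → X → E} {t : ℝ} {K : Set X} (hK : IsCompact K)
    (hut : ContinuousOn (u t) K) (hu : TendstoUniformlyOn u (u t) (𝓝 t) K) {ε : ℝ} (hε : 0 < ε) :
    ∀ᶠ p in 𝓝 (t, t), ∀ x ∈ K,
      ‖slope (fun s ↦ f ∘ u s) p.2 p.1 x - fderiv ℝ f (u t x) (slope u p.2 p.1 x)‖ ≤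
        ε * ‖slope u p.2 p.1 x‖ := by
  obtain ⟨η, hη, hfη⟩ :=
    exists_norm_sub_sub_fderiv_le_of_isCompact hf (hK.image_of_continuousOn hut) hε
  have htube : ∀ᶠ s in 𝓝 t, ∀ x ∈ K, u s x ∈ ball (u t x) η := by
    simpa only [mem_ball'] using Metric.tendstoUniformlyOn_iff.1 hu η hη
  rw [nhds_prod_eq]
  filter_upwards [htube.prod_mk htube] with p ⟨hs, hr⟩ x hx
  have hlin : slope (fun s ↦ f ∘ u s) p.2 p.1 x - fderiv ℝ f (u t x) (slope u p.2 p.1 x) =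
      (p.1 - p.2)⁻¹ •
        (f (u p.1 x) - f (u p.2 x) - fderiv ℝ f (u t x) (u p.1 x - u p.2 x)) := by
    simp [slope, smul_sub]
  have hslope : slope u p.2 p.1 x = (p.1 - p.2)⁻¹ • (u p.1 x - u p.2 x) := rfl
  rw [hlin, hslope, norm_smul, norm_smul, mul_left_comm]
  gcongr
  exact hfη _ (mem_image_of_mem _ hx) _ (hs x hx) _ (hr x hx)

end UniformDerivative

section RealFunctions

theorem forall_mem_Icc_lt_of_forall_Ioo_lt {φ : ℝ → ℝ} {a b η : ℝ} (hφ : ContinuousOn φ (Icc a b))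
    (h : ∀ x ∈ Icc a b, (∀ y ∈ Ioo a x, φ y < η) → φ x < η) : ∀ x ∈ Icc a b, φ x < η := by
  by_contra! ⟨x, hx, hηx⟩
  have hbad : IsCompact (Icc a b ∩ φ ⁻¹' Ici η) := isCompact_Icc.of_isClosed_subset
    (hφ.preimage_isClosed_of_isClosed isClosed_Icc isClosed_Ici) inter_subset_left
  obtain ⟨y, ⟨hy, hηy⟩, hleast⟩ := hbad.exists_isLeast ⟨x, hx, hηx⟩
  refine (h y hy fun z hz ↦ ?_).not_ge hηy
  by_contra! hηz
  exact hz.2.not_ge (hleast ⟨⟨hz.1.le, hz.2.le.trans hy.2⟩, hηz⟩)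

theorem le_exp_mul_of_deriv_le_mul {φ φ' : ℝ → ℝ} {K a b : ℝ} (hab : a ≤ b)
    (hφ : ContinuousOn φ (Icc a b)) (hφ' : ∀ x ∈ Ioo a b, HasDerivAt φ (φ' x) x)
    (hle : ∀ x ∈ Ioo a b, φ' x ≤ K * φ x) : φ b ≤ exp (K * (b - a)) * φ a := by
  have hexp (x : ℝ) : HasDerivAt (fun x ↦ exp (-(K * x))) (exp (-(K * x)) * -K) x := by
    simpa using ((hasDerivAt_id x).const_mul K).neg.exp
  have hanti : AntitoneOn (fun x ↦ exp (-(K * x)) * φ x) (Icc a b) := by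
    refine antitoneOn_of_hasDerivWithinAt_nonpos (convex_Icc a b) (by fun_prop)
      (f' := fun x ↦ exp (-(K * x)) * -K * φ x + exp (-(K * x)) * φ' x) ?_ ?_ <;>
      rw [interior_Icc]
    · exact fun x hx ↦ ((hexp x).mul (hφ' x hx)).hasDerivWithinAt
    · intro x hx
      have := mul_le_mul_of_nonneg_left (hle x hx) (exp_pos (-(K * x))).le
      linarith
  calc φ b = exp (K * b) * (exp (-(K * b)) * φ b) := by
        rw [← mul_assoc, ← exp_add, add_neg_cancel, exp_zero, one_mul]
    _ ≤ exp (K * b) * (exp (-(K * a)) * φ a) := by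
        exact mul_le_mul_of_nonneg_left (hanti (left_mem_Icc.2 hab) (right_mem_Icc.2 hab) hab)
          (exp_pos _).le
    _ = exp (K * (b - a)) * φ a := by
        rw [← mul_assoc, ← exp_add]
        ring_nf

end RealFunctions

section DampedMotion

variable {E : Type*} [NormedAddCommGroup E] [InnerProductSpace ℝ E]

/-- The initial value problem `u'' + c u' + g = 0` on `(0, b)`, `u'(0) = 0`, written as a first
order system with velocity `v = u'`. The equation is not imposed at `0`, so that the damping
coefficient `c` may be singular there; for a nonlinear equation take `g = f ∘ u`. -/
structure IsDampedMotion (c : ℝ → ℝ) (g : ℝ → E) (b : ℝ) (u v : ℝ → E) : Prop where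
  continuousOn_position : ContinuousOn u (Icc 0 b)
  continuousOn_velocity : ContinuousOn v (Icc 0 b)
  hasDerivAt_position : ∀ ρ ∈ Ioo 0 b, HasDerivAt u (v ρ) ρ
  hasDerivAt_velocity : ∀ ρ ∈ Ioo 0 b, HasDerivAt v (-(c ρ • v ρ + g ρ)) ρ
  velocity_zero : v 0 = 0

/-- The factor by which motions of duration `b` can grow when the damping coefficient is at least
`m` and the force at position `x` is at most `A * ‖x‖` in norm. -/
noncomputable def growthFactor (m A b : ℝ) : ℝ := exp ((|m| + A / 2 + 1) * b)

theorem growthFactor_pos (m A b : ℝ) : 0 < growthFactor m A b := exp_pos _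

-- Keeping `ε ^ 2` in the energy makes the bound homogeneous although the force is only affinely
-- bounded.
theorem energy_deriv_le {m q A ε : ℝ} {x y z : E} (hA : 0 ≤ A) (hq : m ≤ q)
    (hz : ‖z‖ ≤ A * ‖x‖ + ε) :
    2 * inner ℝ y (-(q • y + z)) + 2 * inner ℝ x y ≤
      (2 * |m| + A + 2) * (‖y‖ ^ 2 + ‖x‖ ^ 2 + ε ^ 2) := by
  have hdamp : -(q * ‖y‖ ^ 2) ≤ |m| * ‖y‖ ^ 2 := by
    rw [← neg_mul]
    gcongr
    linarith [neg_abs_le m]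
  have hforce : -inner ℝ y z ≤ ‖y‖ * (A * ‖x‖ + ε) :=
    calc -inner ℝ y z ≤ ‖y‖ * ‖z‖ := (neg_le_abs _).trans (abs_real_inner_le_norm y z)
      _ ≤ ‖y‖ * (A * ‖x‖ + ε) := by gcongr
  have hxy : inner ℝ x y ≤ ‖x‖ * ‖y‖ := real_inner_le_norm x y
  have hAxy : A * (2 * ‖x‖ * ‖y‖) ≤ A * (‖x‖ ^ 2 + ‖y‖ ^ 2) := by
    gcongr
    exact two_mul_le_add_sq ‖x‖ ‖y‖
  have hm := abs_nonneg m
  calc 2 * inner ℝ y (-(q • y + z)) + 2 * inner ℝ x y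
    _ = 2 * -(q * ‖y‖ ^ 2) + 2 * -inner ℝ y z + 2 * inner ℝ x y := by
      rw [inner_neg_right, inner_add_right, real_inner_smul_right, real_inner_self_eq_norm_sq]
      ring
    _ ≤ 2 * (|m| * ‖y‖ ^ 2) + (A * (‖x‖ ^ 2 + ‖y‖ ^ 2) + (‖y‖ ^ 2 + ε ^ 2)) +
        (‖x‖ ^ 2 + ‖y‖ ^ 2) := by
      linarith [two_mul_le_add_sq ‖x‖ ‖y‖, two_mul_le_add_sq ‖y‖ ε]
    _ ≤ (2 * |m| + A + 2) * (‖y‖ ^ 2 + ‖x‖ ^ 2 + ε ^ 2) := by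
      linarith [mul_nonneg hm (sq_nonneg ‖x‖), mul_nonneg hm (sq_nonneg ε), sq_nonneg ε,
        mul_nonneg hA (sq_nonneg ε), sq_nonneg ‖x‖]

namespace IsDampedMotion

variable {c : ℝ → ℝ} {m b : ℝ} {g g₁ g₂ u u₁ u₂ v v₁ v₂ : ℝ → E}

theorem sub (h₁ : IsDampedMotion c g₁ b u₁ v₁) (h₂ : IsDampedMotion c g₂ b u₂ v₂) :
    IsDampedMotion c (g₁ - g₂) b (u₁ - u₂) (v₁ - v₂) where
  continuousOn_position := h₁.continuousOn_position.sub h₂.continuousOn_position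
  continuousOn_velocity := h₁.continuousOn_velocity.sub h₂.continuousOn_velocity
  hasDerivAt_position ρ hρ := (h₁.hasDerivAt_position ρ hρ).sub (h₂.hasDerivAt_position ρ hρ)
  hasDerivAt_velocity ρ hρ := by
    refine ((h₁.hasDerivAt_velocity ρ hρ).sub (h₂.hasDerivAt_velocity ρ hρ)).congr_deriv ?_
    simp only [Pi.sub_apply, smul_sub]
    abel
  velocity_zero := by simp [h₁.velocity_zero, h₂.velocity_zero]

theorem const_smul (k : ℝ) (h : IsDampedMotion c g b u v) :
    IsDampedMotion c (k • g) b (k • u) (k • v) where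
  continuousOn_position := h.continuousOn_position.const_smul k
  continuousOn_velocity := h.continuousOn_velocity.const_smul k
  hasDerivAt_position ρ hρ := (h.hasDerivAt_position ρ hρ).const_smul k
  hasDerivAt_velocity ρ hρ := by
    refine ((h.hasDerivAt_velocity ρ hρ).const_smul k).congr_deriv ?_
    simp only [Pi.smul_apply, smul_neg, smul_add, smul_comm k]
  velocity_zero := by simp [h.velocity_zero]

theorem slope {G U V : ℝ → ℝ → E} {r s : ℝ} (hr : IsDampedMotion c (G r) b (U r) (V r))
    (hs : IsDampedMotion c (G s) b (U s) (V s)) :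
    IsDampedMotion c (slope G r s) b (slope U r s) (slope V r s) :=
  (hs.sub hr).const_smul (s - r)⁻¹

theorem energy_le (h : IsDampedMotion c g b u v) (hc : ∀ ρ ∈ Ioo 0 b, m ≤ c ρ) {A ε ρ : ℝ}
    (hA : 0 ≤ A) (hρ : ρ ∈ Icc 0 b) (hg : ∀ σ ∈ Ioo 0 ρ, ‖g σ‖ ≤ A * ‖u σ‖ + ε) :
    ‖v ρ‖ ^ 2 + ‖u ρ‖ ^ 2 + ε ^ 2 ≤ exp ((2 * |m| + A + 2) * ρ) * (‖u 0‖ ^ 2 + ε ^ 2) := by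
  have hsub : Icc 0 ρ ⊆ Icc 0 b := Icc_subset_Icc_right hρ.2
  have hcont : ContinuousOn (fun σ ↦ ‖v σ‖ ^ 2 + ‖u σ‖ ^ 2 + ε ^ 2) (Icc 0 ρ) :=
    (((h.continuousOn_velocity.mono hsub).norm.pow 2).add
      ((h.continuousOn_position.mono hsub).norm.pow 2)).add continuousOn_const
  have hderiv : ∀ σ ∈ Ioo 0 ρ, HasDerivAt (fun σ ↦ ‖v σ‖ ^ 2 + ‖u σ‖ ^ 2 + ε ^ 2)
      (2 * inner ℝ (v σ) (-(c σ • v σ + g σ)) + 2 * inner ℝ (u σ) (v σ)) σ := by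
    intro σ hσ
    have hσb : σ ∈ Ioo 0 b := ⟨hσ.1, hσ.2.trans_le hρ.2⟩
    exact ((h.hasDerivAt_velocity σ hσb).norm_sq.add
      (h.hasDerivAt_position σ hσb).norm_sq).add_const _
  have hgronwall := le_exp_mul_of_deriv_le_mul hρ.1 hcont hderiv fun σ hσ ↦
    energy_deriv_le hA (hc σ ⟨hσ.1, hσ.2.trans_le hρ.2⟩) (hg σ hσ)
  simpa [h.velocity_zero] using hgronwall

theorem norm_le (h : IsDampedMotion c g b u v) (hc : ∀ ρ ∈ Ioo 0 b, m ≤ c ρ) {A ε ρ : ℝ}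
    (hA : 0 ≤ A) (hε : 0 ≤ ε) (hρ : ρ ∈ Icc 0 b)
    (hg : ∀ σ ∈ Ioo 0 ρ, ‖g σ‖ ≤ A * ‖u σ‖ + ε) :
    ‖u ρ‖ ≤ growthFactor m A b * (‖u 0‖ + ε) := by
  have hsq : ‖u ρ‖ ^ 2 ≤ (exp ((|m| + A / 2 + 1) * ρ) * (‖u 0‖ + ε)) ^ 2 :=
    calc ‖u ρ‖ ^ 2 ≤ ‖v ρ‖ ^ 2 + ‖u ρ‖ ^ 2 + ε ^ 2 := by
          linarith [sq_nonneg ‖v ρ‖, sq_nonneg ε]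
      _ ≤ exp ((2 * |m| + A + 2) * ρ) * (‖u 0‖ ^ 2 + ε ^ 2) := h.energy_le hc hA hρ hg
      _ ≤ exp ((2 * |m| + A + 2) * ρ) * (‖u 0‖ + ε) ^ 2 := by
          gcongr
          linarith [mul_nonneg (norm_nonneg (u 0)) hε, add_sq ‖u 0‖ ε]
      _ = (exp ((|m| + A / 2 + 1) * ρ) * (‖u 0‖ + ε)) ^ 2 := by
          rw [mul_pow, ← exp_nat_mul]
          push_cast
          ring_nf
  calc ‖u ρ‖ ≤ exp ((|m| + A / 2 + 1) * ρ) * (‖u 0‖ + ε) :=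
        le_of_sq_le_sq hsq (by positivity)
    _ ≤ growthFactor m A b * (‖u 0‖ + ε) := by
        unfold growthFactor
        gcongr
        exact hρ.2

theorem norm_sub_le_of_approx_linear (h₁ : IsDampedMotion c g₁ b u₁ v₁)
    (h₂ : IsDampedMotion c g₂ b u₂ v₂) (hc : ∀ ρ ∈ Ioo 0 b, m ≤ c ρ) {L : ℝ → E →L[ℝ] E}
    {A ε ρ : ℝ} (hρ : ρ ∈ Icc 0 b) (hA : 0 ≤ A) (hL : ∀ σ ∈ Ioo 0 b, ‖L σ‖ ≤ A) (hε : 0 ≤ ε)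
    (hg₁ : ∀ σ ∈ Ioo 0 b, ‖g₁ σ - L σ (u₁ σ)‖ ≤ ε)
    (hg₂ : ∀ σ ∈ Ioo 0 b, ‖g₂ σ - L σ (u₂ σ)‖ ≤ ε) :
    ‖u₁ ρ - u₂ ρ‖ ≤ growthFactor m A b * (‖u₁ 0 - u₂ 0‖ + (ε + ε)) := by
  refine (h₁.sub h₂).norm_le hc hA (by positivity) hρ fun σ hσ ↦ ?_
  have hσb : σ ∈ Ioo 0 b := ⟨hσ.1, hσ.2.trans_le hρ.2⟩
  calc ‖g₁ σ - g₂ σ‖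
    _ = ‖L σ (u₁ σ - u₂ σ) + ((g₁ σ - L σ (u₁ σ)) - (g₂ σ - L σ (u₂ σ)))‖ := by
      rw [map_sub]
      abel_nf
    _ ≤ A * ‖u₁ σ - u₂ σ‖ + (ε + ε) :=
      norm_add_le_of_le ((L σ).le_of_opNorm_le (hL σ hσb) _)
        (norm_sub_le_of_le (hg₁ σ hσb) (hg₂ σ hσb))

variable {f : E → E}

theorem norm_sub_lt_of_lipschitz_tube (h₁ : IsDampedMotion c (f ∘ u₁) b u₁ v₁)
    (h₂ : IsDampedMotion c (f ∘ u₂) b u₂ v₂) (hc : ∀ ρ ∈ Ioo 0 b, m ≤ c ρ) {A η : ℝ} (hA : 0 ≤ A)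
    (hf : ∀ ρ ∈ Ioo 0 b, ∀ x ∈ ball (u₂ ρ) η, ‖f x - f (u₂ ρ)‖ ≤ A * ‖x - u₂ ρ‖)
    (h0 : growthFactor m A b * ‖u₁ 0 - u₂ 0‖ < η) : ∀ ρ ∈ Icc 0 b, ‖u₁ ρ - u₂ ρ‖ < η := by
  refine forall_mem_Icc_lt_of_forall_Ioo_lt (h₁.sub h₂).continuousOn_position.norm
    fun ρ hρ hlt ↦ ?_
  refine lt_of_le_of_lt ?_ h0
  have hforce : ∀ σ ∈ Ioo 0 ρ, ‖f (u₁ σ) - f (u₂ σ)‖ ≤ A * ‖u₁ σ - u₂ σ‖ + 0 := by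
    intro σ hσ
    rw [add_zero]
    exact hf σ ⟨hσ.1, hσ.2.trans_le hρ.2⟩ _ (mem_ball_iff_norm.2 (hlt σ hσ))
  simpa only [add_zero, Pi.sub_apply] using (h₁.sub h₂).norm_le hc hA le_rfl hρ hforce

end IsDampedMotion

variable {f : E → E} {c : ℝ → ℝ} {m b t : ℝ} {u v : ℝ → ℝ → E}

theorem tendstoUniformlyOn_of_isDampedMotion (hf : ContDiff ℝ 1 f)
    (hc : ∀ ρ ∈ Ioo 0 b, m ≤ c ρ)
    (hu : ∀ᶠ s in 𝓝 t, IsDampedMotion c (f ∘ u s) b (u s) (v s))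
    (h0 : ContinuousAt (fun s ↦ u s 0) t) : TendstoUniformlyOn u (u t) (𝓝 t) (Icc 0 b) := by
  have hut := hu.self_of_nhds
  obtain ⟨A, hA, η, hη, hfA⟩ := exists_norm_sub_le_mul_of_isCompact hf
    (isCompact_Icc.image_of_continuousOn hut.continuousOn_position)
  refine Metric.tendstoUniformlyOn_iff.2 fun ε hε ↦ ?_
  have hsmall : ∀ᶠ s in 𝓝 t, growthFactor m A b * ‖u s 0 - u t 0‖ < min ε η := by
    have hlim : Tendsto (fun s ↦ growthFactor m A b * ‖u s 0 - u t 0‖) (𝓝 t) (𝓝 0) := by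
      simpa using (tendsto_iff_norm_sub_tendsto_zero.1 h0).const_mul (growthFactor m A b)
    exact hlim.eventually_lt_const (lt_min hε hη)
  filter_upwards [hu, hsmall] with s hs hs0 ρ hρ
  rw [dist_comm, dist_eq_norm]
  refine (hs.norm_sub_lt_of_lipschitz_tube hut hc hA (fun σ hσ x hx ↦ ?_) hs0 ρ hρ).trans_le
    (min_le_left ε η)
  exact hfA _ (mem_image_of_mem _ (Ioo_subset_Icc_self hσ)) x
    (ball_subset_ball (min_le_right ε η) hx)

theorem eventually_isDampedMotion_slope {g : ℝ → ℝ → E}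
    (hu : ∀ᶠ s in 𝓝 t, IsDampedMotion c (g s) b (u s) (v s)) :
    ∀ᶠ p in 𝓝 (t, t),
      IsDampedMotion c (slope g p.2 p.1) b (slope u p.2 p.1) (slope v p.2 p.1) := by
  rw [nhds_prod_eq]
  exact (hu.prod_mk hu).mono fun p hp ↦ hp.2.slope hp.1

theorem eventually_norm_slope_sub_fderiv_le (hf : ContDiff ℝ 1 f)
    (hc : ∀ ρ ∈ Ioo 0 b, m ≤ c ρ)
    (hu : ∀ᶠ s in 𝓝 t, IsDampedMotion c (f ∘ u s) b (u s) (v s)) {u₀' : E}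
    (h0 : HasStrictDerivAt (fun s ↦ u s 0) u₀' t) {A : ℝ} (hA : 0 ≤ A)
    (hfA : ∀ ρ ∈ Icc 0 b, ‖fderiv ℝ f (u t ρ)‖ ≤ A) {ε : ℝ} (hε : 0 < ε) :
    ∀ᶠ p in 𝓝[(diagonal ℝ)ᶜ] (t, t), ∀ ρ ∈ Icc 0 b,
      ‖slope (fun s ↦ f ∘ u s) p.2 p.1 ρ - fderiv ℝ f (u t ρ) (slope u p.2 p.1 ρ)‖ ≤ ε := by
  set B := growthFactor m (A + 1) b * (‖u₀'‖ + 1)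
  have hB : 0 < B := mul_pos (growthFactor_pos _ _ _) (by positivity)
  have hlin {δ : ℝ} (hδ : 0 < δ) := (eventually_norm_slope_comp_sub_fderiv_le hf isCompact_Icc
    hu.self_of_nhds.continuousOn_position
    (tendstoUniformlyOn_of_isDampedMotion hf hc hu h0.hasDerivAt.continuousAt) hδ).filter_mono
    (nhdsWithin_le_nhds (s := (diagonal ℝ)ᶜ))
  have hinit : ∀ᶠ p in 𝓝[(diagonal ℝ)ᶜ] (t, t), ‖slope u p.2 p.1 0‖ < ‖u₀'‖ + 1 :=
    (hasStrictDerivAt_iff_tendsto_slope.1 h0).norm.eventually_lt_const (lt_add_one _)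
  filter_upwards [nhdsWithin_le_nhds (eventually_isDampedMotion_slope hu), hinit, hlin one_pos,
    hlin (div_pos hε hB)] with p hp hp0 hp1 hpε ρ hρ
  have hforce : ∀ σ ∈ Ioo 0 ρ, ‖slope (fun s ↦ f ∘ u s) p.2 p.1 σ‖ ≤
      (A + 1) * ‖slope u p.2 p.1 σ‖ + 0 := by
    intro σ hσ
    have hσb : σ ∈ Icc 0 b := ⟨hσ.1.le, hσ.2.le.trans hρ.2⟩
    rw [add_zero, add_mul]
    exact (norm_le_insert' _ _).trans
      (add_le_add ((fderiv ℝ f (u t σ)).le_of_opNorm_le (hfA σ hσb) _) (hp1 σ hσb))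
  have hbound : ‖slope u p.2 p.1 ρ‖ ≤ B :=
    calc ‖slope u p.2 p.1 ρ‖
      _ ≤ growthFactor m (A + 1) b * (‖slope u p.2 p.1 0‖ + 0) :=
        hp.norm_le hc (by positivity) le_rfl hρ hforce
      _ ≤ B := by
        rw [add_zero]
        exact mul_le_mul_of_nonneg_left hp0.le (growthFactor_pos _ _ _).le
  calc _ ≤ ε / B * ‖slope u p.2 p.1 ρ‖ := hpε ρ hρ
    _ ≤ ε / B * B := by gcongr
    _ = ε := div_mul_cancel₀ ε hB.ne'

theorem exists_hasStrictDerivAt_of_isDampedMotion [CompleteSpace E] (hb : 0 ≤ b)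
    (hf : ContDiff ℝ 1 f) (hc : ∀ ρ ∈ Ioo 0 b, m ≤ c ρ)
    (hu : ∀ᶠ s in 𝓝 t, IsDampedMotion c (f ∘ u s) b (u s) (v s)) {u₀' : E}
    (h0 : HasStrictDerivAt (fun s ↦ u s 0) u₀' t) :
    ∃ φ', HasStrictDerivAt (fun s ↦ u s b) φ' t := by
  obtain ⟨C, hC⟩ := isCompact_Icc.exists_bound_of_continuousOn
    ((hf.continuous_fderiv one_ne_zero).comp_continuousOn
      hu.self_of_nhds.continuousOn_position)
  have hfC : ∀ ρ ∈ Icc 0 b, ‖fderiv ℝ f (u t ρ)‖ ≤ |C| :=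
    fun ρ hρ ↦ (hC ρ hρ).trans (le_abs_self C)
  refine exists_hasStrictDerivAt_of_slope fun ε hε ↦ ?_
  set B := growthFactor m |C| b
  have hB : 0 < B := growthFactor_pos _ _ _
  set δ := ε / (5 * B)
  have hδ : 0 < δ := by positivity
  refine ⟨_, ((eventually_isDampedMotion_slope hu).filter_mono nhdsWithin_le_nhds).and <|
    (eventually_norm_slope_sub_fderiv_le hf hc hu h0 (abs_nonneg C) hfC hδ).and <|
    (hasStrictDerivAt_iff_tendsto_slope.1 h0).eventually (ball_mem_nhds u₀' hδ), ?_⟩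
  rintro p ⟨hp, hpδ, hp0⟩ q ⟨hq, hqδ, hq0⟩
  have hinit : ‖slope u p.2 p.1 0 - slope u q.2 q.1 0‖ ≤ δ + δ := by
    rw [← dist_eq_norm]
    exact (dist_triangle_right _ _ u₀').trans (add_le_add hp0.le hq0.le)
  calc ‖slope u p.2 p.1 b - slope u q.2 q.1 b‖
    _ ≤ B * (‖slope u p.2 p.1 0 - slope u q.2 q.1 0‖ + (δ + δ)) :=
      hp.norm_sub_le_of_approx_linear hq hc (right_mem_Icc.2 hb) (abs_nonneg C)
        (fun σ hσ ↦ hfC σ (Ioo_subset_Icc_self hσ)) hδ.le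
        (fun σ hσ ↦ hpδ σ (Ioo_subset_Icc_self hσ)) fun σ hσ ↦ hqδ σ (Ioo_subset_Icc_self hσ)
    _ ≤ B * (δ + δ + (δ + δ)) := by gcongr
    _ < B * (5 * δ) := by
      gcongr
      linarith
    _ = ε := by
      simp only [δ]
      field_simp

theorem stmt4_general [CompleteSpace E] (hb : 0 ≤ b) (hf : ContDiff ℝ 1 f)
    (hc : ∀ ρ ∈ Ioo 0 b, m ≤ c ρ)
    (hu : ∀ᶠ s in 𝓝 t, IsDampedMotion c (f ∘ u s) b (u s) (v s))
    (h0 : ContDiffAt ℝ 1 (fun s ↦ u s 0) t) : ContDiffAt ℝ 1 (fun s ↦ u s b) t := by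
  refine contDiffAt_one_of_eventually_hasStrictFDerivAt ?_
  filter_upwards [hu.eventually_nhds, h0.eventually (by simp)] with s hs hs0
  obtain ⟨φ', hφ'⟩ := exists_hasStrictDerivAt_of_isDampedMotion hb hf hc hs
    (hs0.hasStrictDerivAt one_ne_zero)
  exact ⟨_, hφ'.hasStrictFDerivAt⟩

end DampedMotion

namespace IsEvenSol

variable {f U : ℝ → ℝ}

theorem apply_abs (hU : IsEvenSol f U) {ρ : ℝ} (hρ : ρ ∈ Ioo (-π) π) : U |ρ| = U ρ := by
  obtain h | h := abs_choice ρ <;> rw [h]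
  exact hU.1 ρ hρ

theorem deriv_zero (hU : IsEvenSol f U) : deriv U 0 = 0 := by
  have hsymm : (fun ρ ↦ U (-ρ)) =ᶠ[𝓝 0] U :=
    eventually_of_mem (Ioo_mem_nhds (neg_lt_zero.2 pi_pos) pi_pos) hU.1
  simpa [deriv_comp_neg, neg_eq_self] using hsymm.deriv_eq

theorem isDampedMotion (hU : IsEvenSol f U) {b : ℝ} (hb : b < π) :
    IsDampedMotion Real.cot (f ∘ U) b U (deriv U) := by
  have hsub : Icc 0 b ⊆ Ioo (-π) π := Icc_subset_Ioo (neg_lt_zero.2 pi_pos) hb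
  have hd : DifferentiableOn ℝ U (Ioo (-π) π) := hU.2.1.differentiableOn two_ne_zero
  have hd' : DifferentiableOn ℝ (deriv U) (Ioo (-π) π) :=
    (hU.2.1.deriv_of_isOpen isOpen_Ioo (m := 1) (by norm_num)).differentiableOn one_ne_zero
  have hnhds {ρ : ℝ} (hρ : ρ ∈ Ioo 0 b) : Ioo (-π) π ∈ 𝓝 ρ :=
    isOpen_Ioo.mem_nhds (hsub (Ioo_subset_Icc_self hρ))
  refine ⟨hd.continuousOn.mono hsub, hd'.continuousOn.mono hsub,
    fun ρ hρ ↦ (hd.differentiableAt (hnhds hρ)).hasDerivAt, fun ρ hρ ↦ ?_, hU.deriv_zero⟩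
  refine (hd'.differentiableAt (hnhds hρ)).hasDerivAt.congr_deriv ?_
  rw [cot_eq_cos_div_sin, smul_eq_mul, Function.comp_apply]
  linarith [hU.2.2 ρ (hsub (Ioo_subset_Icc_self hρ)) hρ.1.ne']

end IsEvenSol

theorem antitoneOn_cot : AntitoneOn Real.cot (Ioo 0 π) := by
  intro x hx y hy hxy
  have hsin : 0 ≤ sin (y - x) :=
    sin_nonneg_of_nonneg_of_le_pi (sub_nonneg.2 hxy) (by linarith [hx.1, hy.2])
  rw [cot_eq_cos_div_sin, cot_eq_cos_div_sin,
    div_le_div_iff₀ (sin_pos_of_mem_Ioo hy) (sin_pos_of_mem_Ioo hx)]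
  linarith [sin_sub y x]

/-- The even solution `U_t` with `U_t(0) = t` depends on `t` in a `C¹` way:
for each `ρ₀ ∈ (-π,π)`, the map `t ↦ U_t(ρ₀)` is `C¹`. -/
theorem stmt4 (f : ℝ → ℝ) (hf : ContDiff ℝ 1 f)
    (U : ℝ → ℝ → ℝ) (hU : ∀ t : ℝ, IsEvenSol f (U t) ∧ U t 0 = t)
    (ρ₀ : ℝ) (hρ₀ : ρ₀ ∈ Set.Ioo (-Real.pi) Real.pi) :
    ContDiff ℝ 1 (fun t => U t ρ₀) := by
  have hb : |ρ₀| < π := abs_lt.2 hρ₀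
  have hcot : ∀ ρ ∈ Ioo 0 |ρ₀|, cot |ρ₀| ≤ cot ρ := fun ρ hρ ↦
    antitoneOn_cot ⟨hρ.1, hρ.2.trans hb⟩ ⟨hρ.1.trans hρ.2, hb⟩ hρ.2.le
  simp only [← (hU _).1.apply_abs hρ₀]
  exact contDiff_iff_contDiffAt.2 fun t ↦ stmt4_general (abs_nonneg ρ₀) hf hcot
    (.of_forall fun s ↦ (hU s).1.isDampedMotion hb)
    (by simpa only [(hU _).2] using contDiffAt_fun_id)
end

section
/- Let f: ℝ → ℝ be a C¹ function with f(x) > 0 for all x > 0, and let t > 0. Then the even solution U_t vanishes at some point of (0,π); denote by r_t ∈ (0,π) the smallest positive zero of U_t. Moreover, if r_t > π/2, then U_t is concave on [π/2, r_t], i.e. U_t''(ρ) ≤ 0 for all ρ ∈ [π/2, r_t]. -/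
open Real Set

/-!
In the Mercator coordinate `s = log (tan (ρ / 2))`, for which `ds = dρ / sin ρ`, the equation reads
`U_ss = -(sin ρ)² f(U)`, so `U` is strictly concave in `s` as long as it is positive. Since `s` maps
`(0, π)` onto `ℝ`, on which no strictly concave function is positive, `U` must vanish. Up to its
first zero, `U` is positive and concave near `s = -∞`, hence strictly decreasing. For `ρ ≥ π / 2`
both `cot ρ · U'` and `f(U)` are then nonnegative, which forces `U'' ≤ 0`.

With a coefficient `q` in place of `cot`, an integrating factor `p`, `p' = p q`, takes the role of
`sin`, and a primitive `ℓ` of `1 / p` that of `s`; then `p U'` is the derivative of `U` in `ℓ`.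
-/

open Filter Topology

section RealAnalysis

theorem exists_first_zero {u : ℝ → ℝ} {a b : ℝ} (hab : a ≤ b) (hu : ContinuousOn u (Icc a b))
    (ha : 0 < u a) (hb : u b ≤ 0) : ∃ r ∈ Ioc a b, u r = 0 ∧ ∀ x ∈ Ico a r, 0 < u x := by
  have hclosed : IsClosed (Icc a b ∩ u ⁻¹' Iic 0) := hu.preimage_isClosed_of_isClosed
    isClosed_Icc isClosed_Iic
  obtain ⟨r, ⟨hr, hur⟩, hmin⟩ := (isCompact_Icc.of_isClosed_subset hclosed
    inter_subset_left).exists_isLeast ⟨b, right_mem_Icc.2 hab, hb⟩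
  have hpos : ∀ x ∈ Ico a r, 0 < u x := fun x hx =>
    not_le.1 fun h => hx.2.not_ge (hmin ⟨⟨hx.1, hx.2.le.trans hr.2⟩, h⟩)
  obtain ⟨x, hx, hux⟩ := intermediate_value_Icc' hr.1 (hu.mono (Icc_subset_Icc_right hr.2))
    ⟨hur, ha.le⟩
  have hxr : x = r := hx.2.eq_of_not_lt fun h => (hpos x ⟨hx.1, h⟩).ne' hux
  have har : a ≠ r := fun h => ha.not_ge (h ▸ hur)
  exact ⟨r, ⟨hr.1.lt_of_ne har, hr.2⟩, hxr ▸ hux, hpos⟩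

theorem deriv_nonpos_on_Icc_of_Ioo {g : ℝ → ℝ} {a b : ℝ} (hab : a < b)
    (hg : ∀ x ∈ Icc a b, DifferentiableAt ℝ g x) (hg' : ∀ x ∈ Ioo a b, deriv g x ≤ 0) :
    ∀ x ∈ Icc a b, deriv g x ≤ 0 := by
  intro x hx
  have hanti : AntitoneOn g (Icc a b) := antitoneOn_of_deriv_nonpos (convex_Icc a b)
    (fun y hy => (hg y hy).continuousAt.continuousWithinAt)
    (fun y hy => (hg y (interior_subset hy)).differentiableWithinAt)
    (by rwa [interior_Icc])
  rw [← (hg x hx).derivWithin (uniqueDiffOn_Icc hab x hx)]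
  exact hanti.derivWithin_nonpos

/-- The tangent line inequality for `u` as a concave function of the coordinate `ℓ`, where
`V = du/dℓ`. -/
theorem sub_le_mul_sub_of_antitoneOn {u ℓ V ℓ' : ℝ → ℝ} {s : Set ℝ} [s.OrdConnected]
    (hu : ∀ x ∈ s, HasDerivAt u (V x * ℓ' x) x) (hℓ : ∀ x ∈ s, HasDerivAt ℓ (ℓ' x) x)
    (hℓ' : ∀ x ∈ s, 0 ≤ ℓ' x) (hV : AntitoneOn V s) {x y : ℝ} (hx : x ∈ s) (hy : y ∈ s) :
    u y - u x ≤ V x * (ℓ y - ℓ x) := by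
  set g : ℝ → ℝ := fun z => u z - V x * ℓ z with hg_def
  have hg : ∀ z ∈ s, HasDerivAt g ((V z - V x) * ℓ' z) z := fun z hz => by
    rw [sub_mul]
    exact (hu z hz).sub ((hℓ z hz).const_mul (V x))
  suffices hgx : g y ≤ g x by
    simp only [hg_def] at hgx
    linarith
  rcases le_total x y with hxy | hyx
  · have hsub : Icc x y ⊆ s := s.Icc_subset hx hy
    refine antitoneOn_of_hasDerivWithinAt_nonpos (convex_Icc x y)
      (fun z hz => (hg z (hsub hz)).continuousAt.continuousWithinAt)
      (fun z hz => (hg z (hsub (interior_subset hz))).hasDerivWithinAt) (fun z hz => ?_)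
      (left_mem_Icc.2 hxy) (right_mem_Icc.2 hxy) hxy
    have hz := interior_subset hz
    exact mul_nonpos_of_nonpos_of_nonneg (sub_nonpos.2 (hV hx (hsub hz) hz.1)) (hℓ' z (hsub hz))
  · have hsub : Icc y x ⊆ s := s.Icc_subset hy hx
    refine monotoneOn_of_hasDerivWithinAt_nonneg (convex_Icc y x)
      (fun z hz => (hg z (hsub hz)).continuousAt.continuousWithinAt)
      (fun z hz => (hg z (hsub (interior_subset hz))).hasDerivWithinAt) (fun z hz => ?_)
      (left_mem_Icc.2 hyx) (right_mem_Icc.2 hyx) hyx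
    have hz := interior_subset hz
    exact mul_nonneg (sub_nonneg.2 (hV (hsub hz) hx hz.2)) (hℓ' z (hsub hz))

theorem nonneg_of_tendsto_atTop_of_eventually_le_mul {α : Type*} {l : Filter α} [l.NeBot]
    {ℓ : α → ℝ} (hℓ : Tendsto ℓ l atTop) {c m : ℝ} (h : ∀ᶠ y in l, m ≤ c * ℓ y) : 0 ≤ c := by
  by_contra! hc
  obtain ⟨y, hy, hy'⟩ := (h.and ((hℓ.const_mul_atTop_of_neg hc).eventually_lt_atBot m)).exists
  exact hy.not_gt hy'

end RealAnalysis

section MercatorCoordinate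

theorem hasDerivAt_log_tan_half {x : ℝ} (hx : x ∈ Ioo 0 π) :
    HasDerivAt (fun y => log (tan (y / 2))) (sin x)⁻¹ x := by
  have hsin : 0 < sin (x / 2) :=
    sin_pos_of_pos_of_lt_pi (by linarith [hx.1]) (by linarith [hx.1, hx.2])
  have hcos : 0 < cos (x / 2) :=
    cos_pos_of_mem_Ioo ⟨by linarith [hx.1, pi_pos], by linarith [hx.2]⟩
  have htan : tan (x / 2) ≠ 0 := by
    rw [tan_eq_sin_div_cos]
    positivity
  have htan_deriv : HasDerivAt (fun y => tan (y / 2)) (1 / cos (x / 2) ^ 2 * (1 / 2)) x :=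
    (hasDerivAt_tan hcos.ne').comp (h := fun y => y / 2) x ((hasDerivAt_id' x).div_const 2)
  convert htan_deriv.log htan using 1
  have hdouble : sin x = 2 * sin (x / 2) * cos (x / 2) := by
    rw [← sin_two_mul, mul_div_cancel₀ x two_ne_zero]
  rw [hdouble, tan_eq_sin_div_cos]
  field_simp

theorem tendsto_log_tan_half_nhdsGT_zero :
    Tendsto (fun x => log (tan (x / 2))) (𝓝[>] 0) atBot := by
  refine tendsto_log_nhdsGT_zero.comp (tendsto_nhdsWithin_iff.2 ⟨?_, ?_⟩)
  · have hcont : ContinuousAt (fun x : ℝ => tan (x / 2)) 0 :=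
      ContinuousAt.comp (g := tan) (continuousAt_tan.2 (by simp)) (by fun_prop)
    simpa using hcont.tendsto.mono_left nhdsWithin_le_nhds
  · filter_upwards [Ioo_mem_nhdsGT pi_pos] with x hx
    exact tan_pos_of_pos_of_lt_pi_div_two (by linarith [hx.1]) (by linarith [hx.2])

theorem tendsto_log_tan_half_nhdsLT_pi :
    Tendsto (fun x => log (tan (x / 2))) (𝓝[<] π) atTop := by
  refine tendsto_log_atTop.comp (tendsto_tan_pi_div_two.comp (tendsto_nhdsWithin_iff.2 ⟨?_, ?_⟩))
  · exact ((continuous_id.div_const 2).tendsto π).mono_left nhdsWithin_le_nhds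
  · filter_upwards [self_mem_nhdsWithin] with x hx
    exact div_lt_div_of_pos_right (mem_Iio.1 hx) two_pos

theorem hasDerivAt_sin_mul_cot {x : ℝ} (hx : sin x ≠ 0) :
    HasDerivAt sin (sin x * (cos x / sin x)) x := by
  rw [mul_div_cancel₀ _ hx]
  exact hasDerivAt_sin x

end MercatorCoordinate

/-- A twice differentiable solution on `s` of `U'' + q·U' + f(U) = 0`, subject to no condition at
the boundary of `s`. -/
structure IsSolOn (q f U : ℝ → ℝ) (s : Set ℝ) : Prop where
  differentiableAt : ∀ x ∈ s, DifferentiableAt ℝ U x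
  differentiableAt_deriv : ∀ x ∈ s, DifferentiableAt ℝ (deriv U) x
  equation : ∀ x ∈ s, deriv (deriv U) x + q x * deriv U x + f (U x) = 0

namespace IsSolOn

variable {q f U : ℝ → ℝ} {s : Set ℝ}

theorem mono {t : Set ℝ} (hU : IsSolOn q f U t) (hst : s ⊆ t) : IsSolOn q f U s where
  differentiableAt x hx := hU.differentiableAt x (hst hx)
  differentiableAt_deriv x hx := hU.differentiableAt_deriv x (hst hx)
  equation x hx := hU.equation x (hst hx)

theorem deriv_deriv_nonpos {a b : ℝ} (hab : a < b) (hU : IsSolOn q f U (Icc a b))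
    (hq : ∀ x ∈ Ioo a b, q x ≤ 0) (hU' : ∀ x ∈ Ioo a b, deriv U x ≤ 0)
    (hf : ∀ x ∈ Ioo a b, 0 ≤ f (U x)) : ∀ x ∈ Icc a b, deriv (deriv U) x ≤ 0 := by
  refine deriv_nonpos_on_Icc_of_Ioo hab hU.differentiableAt_deriv fun x hx => ?_
  linarith [hU.equation x (Ioo_subset_Icc_self hx), hf x hx,
    mul_nonneg_of_nonpos_of_nonpos (hq x hx) (hU' x hx)]

section IntegratingFactor

variable {p : ℝ → ℝ}

theorem hasDerivAt_mul_deriv (hU : IsSolOn q f U s) {x : ℝ} (hx : x ∈ s)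
    (hp : HasDerivAt p (p x * q x) x) :
    HasDerivAt (fun y => p y * deriv U y) (-(p x * f (U x))) x := by
  refine (hp.mul (hU.differentiableAt_deriv x hx).hasDerivAt).congr_deriv ?_
  linear_combination p x * hU.equation x hx

theorem strictAntiOn_mul_deriv (hU : IsSolOn q f U s) (hs : Convex ℝ s)
    (hp : ∀ x ∈ s, HasDerivAt p (p x * q x) x) (hp_pos : ∀ x ∈ s, 0 < p x)
    (hf : ∀ x ∈ s, 0 < f (U x)) : StrictAntiOn (fun x => p x * deriv U x) s := by
  refine strictAntiOn_of_deriv_neg hs (fun x hx => ?_) fun x hx => ?_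
  · exact (hU.hasDerivAt_mul_deriv hx (hp x hx)).continuousAt.continuousWithinAt
  · have hx := interior_subset hx
    rw [(hU.hasDerivAt_mul_deriv hx (hp x hx)).deriv]
    exact neg_neg_of_pos (mul_pos (hp_pos x hx) (hf x hx))

variable {ℓ : ℝ → ℝ}

theorem sub_le_mul_deriv_mul_sub (hU : IsSolOn q f U s) (hs : Convex ℝ s)
    (hp : ∀ x ∈ s, HasDerivAt p (p x * q x) x) (hp_pos : ∀ x ∈ s, 0 < p x)
    (hℓ : ∀ x ∈ s, HasDerivAt ℓ (p x)⁻¹ x) (hf : ∀ x ∈ s, 0 < f (U x)) {x y : ℝ}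
    (hx : x ∈ s) (hy : y ∈ s) : U y - U x ≤ p x * deriv U x * (ℓ y - ℓ x) := by
  have := hs.ordConnected
  refine sub_le_mul_sub_of_antitoneOn (V := fun x => p x * deriv U x) (fun z hz => ?_) hℓ
    (fun z hz => (inv_pos.2 (hp_pos z hz)).le)
    (hU.strictAntiOn_mul_deriv hs hp hp_pos hf).antitoneOn hx hy
  rw [mul_right_comm, mul_inv_cancel₀ (hp_pos z hz).ne', one_mul]
  exact (hU.differentiableAt z hz).hasDerivAt

variable {a b : ℝ}

theorem mul_deriv_nonpos (hU : IsSolOn q f U (Ioo a b))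
    (hp : ∀ x ∈ Ioo a b, HasDerivAt p (p x * q x) x) (hp_pos : ∀ x ∈ Ioo a b, 0 < p x)
    (hℓ : ∀ x ∈ Ioo a b, HasDerivAt ℓ (p x)⁻¹ x) (hℓa : Tendsto ℓ (𝓝[>] a) atBot)
    (hf : ∀ x ∈ Ioo a b, 0 < f (U x)) {m : ℝ} (hm : ∀ x ∈ Ioo a b, m ≤ U x) :
    ∀ x ∈ Ioo a b, p x * deriv U x ≤ 0 := by
  intro x hx
  refine neg_nonneg.1 (nonneg_of_tendsto_atTop_of_eventually_le_mul
    (tendsto_neg_atBot_atTop.comp hℓa) (m := m - U x + p x * deriv U x * ℓ x) ?_)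
  filter_upwards [Ioo_mem_nhdsGT (hx.1.trans hx.2)] with y hy
  have htangent := hU.sub_le_mul_deriv_mul_sub (convex_Ioo a b) hp hp_pos hℓ hf hx hy
  simp only [Function.comp_apply]
  linarith [hm y hy]

theorem mul_deriv_nonneg (hU : IsSolOn q f U (Ioo a b))
    (hp : ∀ x ∈ Ioo a b, HasDerivAt p (p x * q x) x) (hp_pos : ∀ x ∈ Ioo a b, 0 < p x)
    (hℓ : ∀ x ∈ Ioo a b, HasDerivAt ℓ (p x)⁻¹ x) (hℓb : Tendsto ℓ (𝓝[<] b) atTop)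
    (hf : ∀ x ∈ Ioo a b, 0 < f (U x)) {m : ℝ} (hm : ∀ x ∈ Ioo a b, m ≤ U x) :
    ∀ x ∈ Ioo a b, 0 ≤ p x * deriv U x := by
  intro x hx
  refine nonneg_of_tendsto_atTop_of_eventually_le_mul hℓb
    (m := m - U x + p x * deriv U x * ℓ x) ?_
  filter_upwards [Ioo_mem_nhdsLT (hx.1.trans hx.2)] with y hy
  have htangent := hU.sub_le_mul_deriv_mul_sub (convex_Ioo a b) hp hp_pos hℓ hf hx hy
  linarith [hm y hy]

theorem deriv_neg (hU : IsSolOn q f U (Ioo a b))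
    (hp : ∀ x ∈ Ioo a b, HasDerivAt p (p x * q x) x) (hp_pos : ∀ x ∈ Ioo a b, 0 < p x)
    (hℓ : ∀ x ∈ Ioo a b, HasDerivAt ℓ (p x)⁻¹ x) (hℓa : Tendsto ℓ (𝓝[>] a) atBot)
    (hf : ∀ x ∈ Ioo a b, 0 < f (U x)) {m : ℝ} (hm : ∀ x ∈ Ioo a b, m ≤ U x) :
    ∀ x ∈ Ioo a b, deriv U x < 0 := by
  intro x hx
  obtain ⟨y, hay, hyx⟩ := exists_between hx.1
  have hy : y ∈ Ioo a b := ⟨hay, hyx.trans hx.2⟩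
  have hlt : p x * deriv U x < p y * deriv U y :=
    hU.strictAntiOn_mul_deriv (convex_Ioo a b) hp hp_pos hf hy hx hyx
  have hle : p y * deriv U y ≤ 0 := hU.mul_deriv_nonpos hp hp_pos hℓ hℓa hf hm y hy
  exact neg_of_mul_neg_right (hlt.trans_le hle) (hp_pos x hx).le

theorem exists_nonpos (hab : a < b) (hU : IsSolOn q f U (Ioo a b))
    (hp : ∀ x ∈ Ioo a b, HasDerivAt p (p x * q x) x) (hp_pos : ∀ x ∈ Ioo a b, 0 < p x)
    (hℓ : ∀ x ∈ Ioo a b, HasDerivAt ℓ (p x)⁻¹ x) (hℓa : Tendsto ℓ (𝓝[>] a) atBot)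
    (hℓb : Tendsto ℓ (𝓝[<] b) atTop) (hfpos : ∀ x > 0, 0 < f x) : ∃ x ∈ Ioo a b, U x ≤ 0 := by
  by_contra! hUpos
  have hf : ∀ x ∈ Ioo a b, 0 < f (U x) := fun x hx => hfpos _ (hUpos x hx)
  have hm : ∀ x ∈ Ioo a b, 0 ≤ U x := fun x hx => (hUpos x hx).le
  obtain ⟨x, hx⟩ := exists_between hab
  have hneg : deriv U x < 0 := hU.deriv_neg hp hp_pos hℓ hℓa hf hm x hx
  exact (mul_neg_of_pos_of_neg (hp_pos x hx) hneg).not_ge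
    (hU.mul_deriv_nonneg hp hp_pos hℓ hℓb hf hm x hx)

end IntegratingFactor

section Cot

variable {r : ℝ}

theorem deriv_neg_of_pos_cot (hrπ : r ≤ π)
    (hU : IsSolOn (fun ρ => cos ρ / sin ρ) f U (Ioo 0 r)) (hfpos : ∀ x > 0, 0 < f x)
    (hUpos : ∀ ρ ∈ Ioo 0 r, 0 < U ρ) : ∀ ρ ∈ Ioo 0 r, deriv U ρ < 0 := by
  have hsub : Ioo 0 r ⊆ Ioo 0 π := Ioo_subset_Ioo_right hrπ
  have hsin : ∀ ρ ∈ Ioo 0 r, 0 < sin ρ := fun ρ hρ => sin_pos_of_mem_Ioo (hsub hρ)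
  exact hU.deriv_neg (fun ρ hρ => hasDerivAt_sin_mul_cot (hsin ρ hρ).ne') hsin
    (fun ρ hρ => hasDerivAt_log_tan_half (hsub hρ)) tendsto_log_tan_half_nhdsGT_zero
    (fun ρ hρ => hfpos _ (hUpos ρ hρ)) fun ρ hρ => (hUpos ρ hρ).le

theorem exists_nonpos_cot (hU : IsSolOn (fun ρ => cos ρ / sin ρ) f U (Ioo 0 π))
    (hfpos : ∀ x > 0, 0 < f x) : ∃ ρ ∈ Ioo 0 π, U ρ ≤ 0 :=
  hU.exists_nonpos pi_pos
    (fun _ hρ => hasDerivAt_sin_mul_cot (sin_pos_of_mem_Ioo hρ).ne')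
    (fun _ hρ => sin_pos_of_mem_Ioo hρ) (fun _ hρ => hasDerivAt_log_tan_half hρ)
    tendsto_log_tan_half_nhdsGT_zero tendsto_log_tan_half_nhdsLT_pi hfpos

theorem deriv_deriv_nonpos_of_pi_div_two_le (hrπ : r < π)
    (hU : IsSolOn (fun ρ => cos ρ / sin ρ) f U (Ioo 0 π)) (hfpos : ∀ x > 0, 0 < f x)
    (hUpos : ∀ ρ ∈ Ioo 0 r, 0 < U ρ) (hr : π / 2 < r) :
    ∀ ρ ∈ Icc (π / 2) r, deriv (deriv U) ρ ≤ 0 := by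
  have hneg := deriv_neg_of_pos_cot hrπ.le (hU.mono (Ioo_subset_Ioo_right hrπ.le)) hfpos hUpos
  have hIcc : Icc (π / 2) r ⊆ Ioo 0 π := Icc_subset_Ioo (half_pos pi_pos) hrπ
  have hIoo : Ioo (π / 2) r ⊆ Ioo 0 r := Ioo_subset_Ioo_left (half_pos pi_pos).le
  refine (hU.mono hIcc).deriv_deriv_nonpos hr (fun ρ hρ => ?_) (fun ρ hρ => (hneg ρ (hIoo hρ)).le)
    (fun ρ hρ => (hfpos _ (hUpos ρ (hIoo hρ))).le)
  exact div_nonpos_of_nonpos_of_nonneg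
    (cos_nonpos_of_pi_div_two_le_of_le hρ.1.le (by linarith [hρ.2, pi_pos]))
    (sin_pos_of_mem_Ioo (hIcc (Ioo_subset_Icc_self hρ))).le

end Cot

end IsSolOn

theorem IsEvenSol.isSolOn {f U : ℝ → ℝ} (hU : IsEvenSol f U) :
    IsSolOn (fun ρ => cos ρ / sin ρ) f U (Ioo 0 π) := by
  obtain ⟨-, hC2, hode⟩ := hU
  have hsub : Ioo 0 π ⊆ Ioo (-π) π := Ioo_subset_Ioo_left (neg_nonpos.2 pi_pos.le)
  have hnhds : ∀ ρ ∈ Ioo 0 π, Ioo (-π) π ∈ 𝓝 ρ := fun ρ hρ => isOpen_Ioo.mem_nhds (hsub hρ)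
  have hC1 : ContDiffOn ℝ 1 (deriv U) (Ioo (-π) π) := hC2.deriv_of_isOpen isOpen_Ioo (by norm_num)
  exact
    { differentiableAt := fun ρ hρ =>
        (hC2.differentiableOn two_ne_zero).differentiableAt (hnhds ρ hρ)
      differentiableAt_deriv := fun ρ hρ =>
        (hC1.differentiableOn one_ne_zero).differentiableAt (hnhds ρ hρ)
      equation := fun ρ hρ => hode ρ (hsub hρ) hρ.1.ne' }

theorem stmt5_general {f U : ℝ → ℝ} (hfpos : ∀ x > 0, 0 < f x)
    (hU : IsSolOn (fun ρ => cos ρ / sin ρ) f U (Ioo 0 π)) (hUc : ContinuousOn U (Ico 0 π))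
    (hU0 : 0 < U 0) :
    ∃ r ∈ Ioo 0 π, U r = 0 ∧ (∀ ρ ∈ Ioo 0 r, U ρ ≠ 0) ∧
      (π / 2 < r → ∀ ρ ∈ Icc (π / 2) r, deriv (deriv U) ρ ≤ 0) := by
  obtain ⟨z, hz, hUz⟩ := hU.exists_nonpos_cot hfpos
  obtain ⟨r, hr, hUr, hUpos⟩ :=
    exists_first_zero hz.1.le (hUc.mono (Icc_subset_Ico_right hz.2)) hU0 hUz
  have hrπ : r < π := hr.2.trans_lt hz.2
  have hUpos' : ∀ ρ ∈ Ioo 0 r, 0 < U ρ := fun ρ hρ => hUpos ρ (Ioo_subset_Ico_self hρ)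
  exact ⟨r, ⟨hr.1, hrπ⟩, hUr, fun ρ hρ => (hUpos' ρ hρ).ne',
    hU.deriv_deriv_nonpos_of_pi_div_two_le hrπ hfpos hUpos'⟩

/-- If `f` is `C¹` with `f > 0` on `(0,∞)` and `t > 0`, the even solution `U_t` has a
smallest positive zero `r_t ∈ (0,π)`; moreover if `r_t > π/2` then `U_t` is concave on
`[π/2, r_t]`. -/
theorem stmt5 (f : ℝ → ℝ) (hf : ContDiff ℝ 1 f) (hfpos : ∀ x > (0:ℝ), 0 < f x)
    (t : ℝ) (ht : 0 < t) (U : ℝ → ℝ) (hU : IsEvenSol f U) (hU0 : U 0 = t) :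
    ∃ r ∈ Set.Ioo 0 Real.pi, U r = 0 ∧ (∀ ρ ∈ Set.Ioo 0 r, U ρ ≠ 0) ∧
      (Real.pi / 2 < r → ∀ ρ ∈ Set.Icc (Real.pi / 2) r, deriv (deriv U) ρ ≤ 0) :=
  stmt5_general hfpos hU.isSolOn
    (hU.2.1.continuousOn.mono (Ico_subset_Ioo_left (neg_neg_of_pos pi_pos))) (hU0 ▸ ht)
end

section
/- Let f: ℝ → ℝ satisfy hypothesis (H), let t > 0, let U_t be the even solution with U_t(0) = t and r_t its smallest positive zero, and let H_t be the even C² solution on (−π,π) of the linearized equation H'' + (cot ρ)·H' + f'(U_t)·H = 0 (away from ρ = 0) with H_t(0) = 1. Then H_t(ρ) > 0 for every ρ ∈ (−r_t, r_t). -/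
open Real Set

/-!
Writing `f(U) = (f(U) / U) · U`, the function `U` is a positive solution on `[0, r)` of the linear
equation `u'' + c u' + q u = 0` with potential `q = f(U) / U`. By (H) this potential dominates
`f'(U)`, the potential of the equation for `H`, so the theorem is an instance of Sturm comparison.

For the comparison, let `p` be an integrating factor (`p' = c p`) and `W = u v' - u' v`. Then
`(p W)' = p (q₁ - q₂) u v ≥ 0` as long as `v > 0`, so `p W`, which vanishes at the singular
endpoint, stays nonnegative. Since `(v / u)' = W / u²`, the quotient `v / u` is nondecreasing, hence
bounded below by its positive initial value, and `v` never gets the chance to vanish.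
-/

theorem forall_lt_of_continuousOn_Ico {α β : Type*} [TopologicalSpace α] [LinearOrder α]
    [CompactIccSpace α] [OrderClosedTopology α] [TopologicalSpace β] [LinearOrder β]
    [ClosedIicTopology β] {a b : α} {v : α → β} {m : β} (hv : ContinuousOn v (Ico a b))
    (ih : ∀ x ∈ Ico a b, (∀ y ∈ Ico a x, m < v y) → m < v x) :
    ∀ x ∈ Ico a b, m < v x := by
  intro x hx
  by_contra! hvx
  have hv' : ContinuousOn v (Icc a x) := hv.mono (Icc_subset_Ico_right hx.2)
  have hcompact : IsCompact (Icc a x ∩ v ⁻¹' Iic m) :=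
    isCompact_Icc.of_isClosed_subset
      (hv'.preimage_isClosed_of_isClosed isClosed_Icc isClosed_Iic) inter_subset_left
  obtain ⟨z, ⟨hz, hvz⟩, hz_least⟩ := hcompact.exists_isLeast ⟨x, ⟨hx.1, le_rfl⟩, hvx⟩
  refine (ih z ⟨hz.1, hz.2.trans_lt hx.2⟩ fun y hy => ?_).not_ge hvz
  by_contra! hvy
  exact (hz_least ⟨⟨hy.1, hy.2.le.trans hz.2⟩, hvy⟩).not_gt hy.2

section Wronskian

/-- The Wronskian `u v' - u' v` of two real functions. -/
noncomputable def wronskian (u v : ℝ → ℝ) (x : ℝ) : ℝ :=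
  u x * deriv v x - deriv u x * v x

variable {u v p : ℝ → ℝ} {x : ℝ}

theorem hasDerivAt_wronskian (hu : ContDiffAt ℝ 2 u x) (hv : ContDiffAt ℝ 2 v x) :
    HasDerivAt (wronskian u v) (u x * deriv (deriv v) x - deriv (deriv u) x * v x) x := by
  have hasDerivAt_deriv {w : ℝ → ℝ} (hw : ContDiffAt ℝ 2 w x) :
      HasDerivAt w (deriv w x) x ∧ HasDerivAt (deriv w) (deriv (deriv w) x) x :=
    ⟨(hw.differentiableAt two_ne_zero).hasDerivAt,
      ((hw.derivWithin (m := 1) (by norm_num)).differentiableAt one_ne_zero).hasDerivAt⟩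
  obtain ⟨hu₁, hu₂⟩ := hasDerivAt_deriv hu
  obtain ⟨hv₁, hv₂⟩ := hasDerivAt_deriv hv
  exact ((hu₁.mul hv₂).sub (hu₂.mul hv₁)).congr_deriv (by ring)

theorem hasDerivAt_mul_wronskian {c q₁ q₂ : ℝ} (hp : HasDerivAt p (c * p x) x)
    (hu : ContDiffAt ℝ 2 u x) (hv : ContDiffAt ℝ 2 v x)
    (hu_ode : deriv (deriv u) x + c * deriv u x + q₁ * u x = 0)
    (hv_ode : deriv (deriv v) x + c * deriv v x + q₂ * v x = 0) :
    HasDerivAt (p * wronskian u v) (p x * (q₁ - q₂) * (u x * v x)) x := by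
  refine (hp.mul (hasDerivAt_wronskian hu hv)).congr_deriv ?_
  rw [wronskian]
  linear_combination p x * (u x * hv_ode - v x * hu_ode)

theorem hasDerivAt_div_wronskian (hu : DifferentiableAt ℝ u x) (hv : DifferentiableAt ℝ v x)
    (hux : u x ≠ 0) : HasDerivAt (v / u) (wronskian u v x / u x ^ 2) x :=
  (hv.hasDerivAt.div hu.hasDerivAt hux).congr_deriv (by rw [wronskian]; ring)

theorem monotoneOn_div_of_wronskian_nonneg {D : Set ℝ} (hD : Convex ℝ D)
    (hu : ∀ x ∈ D, DifferentiableAt ℝ u x) (hv : ∀ x ∈ D, DifferentiableAt ℝ v x)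
    (hu_ne : ∀ x ∈ D, u x ≠ 0) (hW : ∀ x ∈ interior D, 0 ≤ wronskian u v x) :
    MonotoneOn (v / u) D := by
  have hderiv : ∀ x ∈ D, HasDerivAt (v / u) (wronskian u v x / u x ^ 2) x := fun x hx =>
    hasDerivAt_div_wronskian (hu x hx) (hv x hx) (hu_ne x hx)
  exact monotoneOn_of_hasDerivWithinAt_nonneg hD
    (fun x hx => (hderiv x hx).continuousAt.continuousWithinAt)
    (fun x hx => (hderiv x (interior_subset hx)).hasDerivWithinAt)
    (fun x hx => div_nonneg (hW x hx) (sq_nonneg _))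

end Wronskian

section SturmComparison

/-- `u` is a `C²` solution of `u'' + c u' + q u = 0` on `[a, b)`. The equation is imposed on
`(a, b)` only, so that `c` and `q` may be singular at `a`. -/
structure IsLinearSol (c q u : ℝ → ℝ) (a b : ℝ) : Prop where
  contDiffAt : ∀ x ∈ Ico a b, ContDiffAt ℝ 2 u x
  ode : ∀ x ∈ Ioo a b, deriv (deriv u) x + c x * deriv u x + q x * u x = 0

/-- `p` is a positive integrating factor for `u'' + c u'` on `(a, b)`, that is,
`(p u')' = p (u'' + c u')`. It is continuous at `a` but may vanish there. -/
structure IsIntegratingFactor (p c : ℝ → ℝ) (a b : ℝ) : Prop where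
  continuousOn : ContinuousOn p (Ico a b)
  pos : ∀ x ∈ Ioo a b, 0 < p x
  hasDerivAt : ∀ x ∈ Ioo a b, HasDerivAt p (c x * p x) x

variable {a b b' : ℝ} {p c q q₁ q₂ u v : ℝ → ℝ}

theorem IsLinearSol.mono (hu : IsLinearSol c q u a b) (hb : b' ≤ b) : IsLinearSol c q u a b' where
  contDiffAt x hx := hu.contDiffAt x (Ico_subset_Ico_right hb hx)
  ode x hx := hu.ode x (Ioo_subset_Ioo_right hb hx)

theorem IsLinearSol.differentiableAt (hu : IsLinearSol c q u a b) {x : ℝ} (hx : x ∈ Ico a b) :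
    DifferentiableAt ℝ u x :=
  (hu.contDiffAt x hx).differentiableAt two_ne_zero

theorem IsIntegratingFactor.mono (hp : IsIntegratingFactor p c a b) (hb : b' ≤ b) :
    IsIntegratingFactor p c a b' where
  continuousOn := hp.continuousOn.mono (Ico_subset_Ico_right hb)
  pos x hx := hp.pos x (Ioo_subset_Ioo_right hb hx)
  hasDerivAt x hx := hp.hasDerivAt x (Ioo_subset_Ioo_right hb hx)

theorem IsIntegratingFactor.monotoneOn_mul_wronskian (hp : IsIntegratingFactor p c a b)
    (hu : IsLinearSol c q₁ u a b) (hv : IsLinearSol c q₂ v a b)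
    (hq : ∀ x ∈ Ioo a b, q₂ x ≤ q₁ x)
    (hu_nonneg : ∀ x ∈ Ioo a b, 0 ≤ u x) (hv_nonneg : ∀ x ∈ Ioo a b, 0 ≤ v x) :
    MonotoneOn (p * wronskian u v) (Ico a b) := by
  have hW : ContinuousOn (wronskian u v) (Ico a b) := fun x hx =>
    (hasDerivAt_wronskian (hu.contDiffAt x hx) (hv.contDiffAt x hx)).continuousAt.continuousWithinAt
  refine monotoneOn_of_hasDerivWithinAt_nonneg (f' := fun x => p x * (q₁ x - q₂ x) * (u x * v x))
    (convex_Ico a b) (hp.continuousOn.mul hW) ?_ ?_ <;> rw [interior_Ico] <;> intro x hx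
  · have hx' : x ∈ Ico a b := Ioo_subset_Ico_self hx
    exact (hasDerivAt_mul_wronskian (hp.hasDerivAt x hx) (hu.contDiffAt x hx')
      (hv.contDiffAt x hx') (hu.ode x hx) (hv.ode x hx)).hasDerivWithinAt
  · exact mul_nonneg (mul_nonneg (hp.pos x hx).le (sub_nonneg.2 (hq x hx)))
      (mul_nonneg (hu_nonneg x hx) (hv_nonneg x hx))

theorem IsIntegratingFactor.wronskian_nonneg (hp : IsIntegratingFactor p c a b)
    (hu : IsLinearSol c q₁ u a b) (hv : IsLinearSol c q₂ v a b)
    (hq : ∀ x ∈ Ioo a b, q₂ x ≤ q₁ x)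
    (hu_nonneg : ∀ x ∈ Ioo a b, 0 ≤ u x) (hv_nonneg : ∀ x ∈ Ioo a b, 0 ≤ v x)
    (ha : 0 ≤ p a * wronskian u v a) : ∀ x ∈ Ioo a b, 0 ≤ wronskian u v x := by
  intro x hx
  have hmono := hp.monotoneOn_mul_wronskian hu hv hq hu_nonneg hv_nonneg
  have hpW : 0 ≤ p x * wronskian u v x :=
    ha.trans (hmono ⟨le_rfl, hx.1.trans hx.2⟩ (Ioo_subset_Ico_self hx) hx.1.le)
  exact nonneg_of_mul_nonneg_right hpW (hp.pos x hx)

theorem IsIntegratingFactor.sturm_comparison (hp : IsIntegratingFactor p c a b)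
    (hu : IsLinearSol c q₁ u a b) (hv : IsLinearSol c q₂ v a b)
    (hq : ∀ x ∈ Ioo a b, q₂ x ≤ q₁ x) (hu_pos : ∀ x ∈ Ico a b, 0 < u x)
    (ha : 0 ≤ p a * wronskian u v a) (hva : 0 < v a) : ∀ x ∈ Ico a b, 0 < v x := by
  refine forall_lt_of_continuousOn_Ico
    (fun x hx => (hv.differentiableAt hx).continuousAt.continuousWithinAt) fun x hx hv_pos => ?_
  have hIcc : Icc a x ⊆ Ico a b := Icc_subset_Ico_right hx.2
  have hIoo : Ioo a x ⊆ Ioo a b := Ioo_subset_Ioo_right hx.2.le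
  have hW : ∀ y ∈ Ioo a x, 0 ≤ wronskian u v y :=
    (hp.mono hx.2.le).wronskian_nonneg (hu.mono hx.2.le) (hv.mono hx.2.le)
      (fun y hy => hq y (hIoo hy)) (fun y hy => (hu_pos y (Ioo_subset_Ico_self (hIoo hy))).le)
      (fun y hy => (hv_pos y (Ioo_subset_Ico_self hy)).le) ha
  have hdiv : MonotoneOn (v / u) (Icc a x) :=
    monotoneOn_div_of_wronskian_nonneg (convex_Icc a x)
      (fun y hy => hu.differentiableAt (hIcc hy)) (fun y hy => hv.differentiableAt (hIcc hy))
      (fun y hy => (hu_pos y (hIcc hy)).ne') (by rwa [interior_Icc])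
  have hax : v a / u a ≤ v x / u x := hdiv ⟨le_rfl, hx.1⟩ ⟨hx.1, le_rfl⟩ hx.1
  have hua : 0 < u a := hu_pos a ⟨le_rfl, hx.1.trans_lt hx.2⟩
  exact (div_pos_iff_of_pos_right (hu_pos x hx)).1 ((div_pos hva hua).trans_le hax)

end SturmComparison

theorem isIntegratingFactor_sin {r : ℝ} (hr : r ≤ π) :
    IsIntegratingFactor sin (fun ρ => cos ρ / sin ρ) 0 r := by
  have hpos : ∀ ρ ∈ Ioo 0 r, 0 < sin ρ := fun ρ hρ =>
    sin_pos_of_pos_of_lt_pi hρ.1 (hρ.2.trans_le hr)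
  refine ⟨continuousOn_sin, hpos, fun ρ hρ => ?_⟩
  rw [div_mul_cancel₀ _ (hpos ρ hρ).ne']
  exact hasDerivAt_sin ρ

theorem isLinearSol_div_self {c f U : ℝ → ℝ} {a b : ℝ}
    (hU : ∀ ρ ∈ Ico a b, ContDiffAt ℝ 2 U ρ)
    (hU_ode : ∀ ρ ∈ Ioo a b, deriv (deriv U) ρ + c ρ * deriv U ρ + f (U ρ) = 0)
    (hU_ne : ∀ ρ ∈ Ioo a b, U ρ ≠ 0) : IsLinearSol c (fun ρ => f (U ρ) / U ρ) U a b where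
  contDiffAt := hU
  ode ρ hρ := by rw [div_mul_cancel₀ _ (hU_ne ρ hρ), hU_ode ρ hρ]

-- The linearized equation is the case `g = f'`; for `p = sin ^ (n - 1)` and `c = (n - 1) cot` the
-- equations are those of radial functions on the sphere of dimension `n ≥ 2`.
theorem stmt6_general {r : ℝ} {p c f g U H : ℝ → ℝ}
    (hp : IsIntegratingFactor p c 0 r) (hp0 : p 0 = 0) (hfg : ∀ x > 0, x * g x ≤ f x)
    (hU : ∀ ρ ∈ Ico 0 r, ContDiffAt ℝ 2 U ρ)
    (hU_ode : ∀ ρ ∈ Ioo 0 r, deriv (deriv U) ρ + c ρ * deriv U ρ + f (U ρ) = 0)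
    (hU0 : 0 < U 0) (hU_ne : ∀ ρ ∈ Ioo 0 r, U ρ ≠ 0)
    (hH : IsLinearSol c (fun ρ => g (U ρ)) H 0 r)
    (hH_even : ∀ ρ ∈ Ioo 0 r, H (-ρ) = H ρ) (hH0 : 0 < H 0) :
    ∀ ρ ∈ Ioo (-r) r, 0 < H ρ := by
  have hU_pos : ∀ ρ ∈ Ico 0 r, 0 < U ρ := fun ρ hρ =>
    isPreconnected_Ico.lt_of_ne (fun x hx => (hU x hx).continuousAt.continuousWithinAt)
      (fun x hx => hx.1.eq_or_lt.elim (fun h => h ▸ hU0.ne') fun h => hU_ne x ⟨h, hx.2⟩)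
      ⟨0, ⟨le_rfl, hρ.1.trans_lt hρ.2⟩, hU0⟩ hρ
  have hH_pos : ∀ ρ ∈ Ico 0 r, 0 < H ρ := by
    refine hp.sturm_comparison (isLinearSol_div_self hU hU_ode hU_ne) hH (fun ρ hρ => ?_) hU_pos
      (by rw [hp0, zero_mul]) hH0
    have hUρ : 0 < U ρ := hU_pos ρ (Ioo_subset_Ico_self hρ)
    exact (le_div_iff₀' hUρ).2 (hfg (U ρ) hUρ)
  intro ρ hρ
  rcases le_or_gt 0 ρ with h | h
  · exact hH_pos ρ ⟨h, hρ.2⟩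
  · have hneg : -ρ ∈ Ioo 0 r := ⟨neg_pos.2 h, neg_lt.1 hρ.1⟩
    rw [← neg_neg ρ, hH_even (-ρ) hneg]
    exact hH_pos (-ρ) (Ioo_subset_Ico_self hneg)

/-- Under hypothesis (H) (`f` is `C¹`, `f > 0` and `f(x) ≥ x f'(x)` on `(0,∞)`), the
solution `H_t` of the linearized equation with `H_t(0) = 1` is positive on `(-r_t, r_t)`. -/
theorem stmt6 (f : ℝ → ℝ) (hf : ContDiff ℝ 1 f)
    (hH : ∀ x > (0:ℝ), 0 < f x ∧ x * deriv f x ≤ f x)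
    (t : ℝ) (ht : 0 < t) (U : ℝ → ℝ) (hU : IsEvenSol f U) (hU0 : U 0 = t)
    (r : ℝ) (hr : r ∈ Set.Ioo 0 Real.pi) (hUr : U r = 0)
    (hrmin : ∀ ρ ∈ Set.Ioo 0 r, U ρ ≠ 0)
    (Ht : ℝ → ℝ)
    (hHte : ∀ ρ ∈ Set.Ioo (-Real.pi) Real.pi, Ht (-ρ) = Ht ρ)
    (hHtc : ContDiffOn ℝ 2 Ht (Set.Ioo (-Real.pi) Real.pi))
    (hHt0 : Ht 0 = 1)
    (hHtode : ∀ ρ ∈ Set.Ioo (-Real.pi) Real.pi, ρ ≠ 0 →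
      deriv (deriv Ht) ρ + (Real.cos ρ / Real.sin ρ) * deriv Ht ρ
        + deriv f (U ρ) * Ht ρ = 0) :
    ∀ ρ ∈ Set.Ioo (-r) r, 0 < Ht ρ := by
  have hmem : Ico 0 r ⊆ Ioo (-π) π := fun ρ hρ => ⟨by linarith [pi_pos, hρ.1], hρ.2.trans hr.2⟩
  have hmem' : Ioo 0 r ⊆ Ioo (-π) π := Ioo_subset_Ico_self.trans hmem
  exact stmt6_general (isIntegratingFactor_sin hr.2.le) sin_zero (fun x hx => (hH x hx).2)
    (fun ρ hρ => hU.2.1.contDiffAt (isOpen_Ioo.mem_nhds (hmem hρ)))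
    (fun ρ hρ => hU.2.2 ρ (hmem' hρ) hρ.1.ne') (hU0 ▸ ht) hrmin
    ⟨fun ρ hρ => hHtc.contDiffAt (isOpen_Ioo.mem_nhds (hmem hρ)),
      fun ρ hρ => hHtode ρ (hmem' hρ) hρ.1.ne'⟩
    (fun ρ hρ => hHte ρ (hmem' hρ)) (hHt0 ▸ one_pos)
end

section
/- Let f: ℝ → ℝ satisfy hypothesis (H). Let (t_n) be a sequence of positive reals with t_n → +∞ and let ρ_n ∈ [0, r_{t_n}] for each n. Then U_{t_n}(ρ_n)² + U_{t_n}'(ρ_n)² → +∞; more precisely, max( U_{t_n}(ρ_n), −U_{t_n}'(ρ_n) ) → +∞. -/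
open Real Set Filter

/-!
Multiplied by `sin ρ`, the equation reads `(sin ρ · U')' = -sin ρ · f(U)`. While `U > 0` the
right-hand side is nonpositive, so `sin ρ · U'` decreases from `0`, and hence `U` decreases.
By (H), `f(x) / x` decreases, so `f` grows at most linearly; integrating the equation, `|U'|` is at
most of the order of `t = U(0)` near the origin, and `U ≥ t / 2 - O(1)` on an interval `[0, δ]`
whose length does not depend on `t`. Beyond `δ`, monotonicity of `sin ρ · U'` bounds `|U'(x)|`
for `δ ≤ x ≤ ρ` by a constant times `|U'(ρ)|`, so `U(ρ)` and `|U'(ρ)|` cannot both be small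
compared with `t`.
-/

section RealFunctions

lemma tendsto_sq_add_sq_atTop_of_max {ι : Type*} {l : Filter ι} {u v : ι → ℝ}
    (h : Tendsto (fun i => max (u i) (v i)) l atTop) :
    Tendsto (fun i => u i ^ 2 + v i ^ 2) l atTop := by
  refine tendsto_atTop_mono (fun i => ?_) (tendsto_atTop_add_const_right l (-1) h)
  have hmax : max (u i) (v i) ≤ u i ^ 2 + v i ^ 2 + 1 :=
    max_le (by nlinarith [sq_nonneg (u i - 1), sq_nonneg (v i)])
      (by nlinarith [sq_nonneg (v i - 1), sq_nonneg (u i)])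
  linarith

lemma pos_of_continuousOn_of_ne_zero {g : ℝ → ℝ} {a b : ℝ} (hg : ContinuousOn g (Ico a b))
    (ha : 0 < g a) (hne : ∀ x ∈ Ioo a b, g x ≠ 0) {x : ℝ} (hx : x ∈ Ioo a b) : 0 < g x := by
  by_contra! hgx
  obtain ⟨y, hy, hgy⟩ := intermediate_value_Icc' hx.1.le
    (hg.mono (Icc_subset_Ico_right hx.2)) ⟨hgx, ha.le⟩
  have hay : a ≠ y := by
    rintro rfl
    exact ha.ne' hgy
  exact hne y ⟨hy.1.lt_of_ne hay, hy.2.trans_lt hx.2⟩ hgy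

lemma sin_mul_sin_le_sin {a b x : ℝ} (ha : 0 ≤ a) (hb : b ≤ π) (hx : x ∈ Icc a b) :
    sin a * sin b ≤ sin x := by
  have hab : a ≤ b := hx.1.trans hx.2
  have hsin_a : 0 ≤ sin a := sin_nonneg_of_nonneg_of_le_pi ha (hab.trans hb)
  have hsin_b : 0 ≤ sin b := sin_nonneg_of_nonneg_of_le_pi (ha.trans hab) hb
  have hmin : min (sin a) (sin b) ≤ sin x :=
    strictConcaveOn_sin_Icc.concaveOn.min_le_of_mem_Icc ⟨ha, hab.trans hb⟩ ⟨ha.trans hab, hb⟩ hx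
  exact (le_min (mul_le_of_le_one_right hsin_a (sin_le_one b))
    (mul_le_of_le_one_left hsin_b (sin_le_one a))).trans hmin

lemma one_sub_cos_le_sin {x : ℝ} (hx₀ : 0 ≤ x) (hx : x ≤ π / 2) : 1 - cos x ≤ sin x := by
  have hsin : 0 ≤ sin x := sin_nonneg_of_nonneg_of_le_pi hx₀ (by linarith [pi_pos])
  have hcos : 0 ≤ cos x := cos_nonneg_of_mem_Icc ⟨by linarith, hx⟩
  nlinarith [sin_sq_add_cos_sq x, mul_nonneg hsin hcos]

variable {f : ℝ → ℝ}

lemma antitoneOn_div_self_of_mul_deriv_le (hf : DifferentiableOn ℝ f (Ioi 0))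
    (hf' : ∀ x > 0, x * deriv f x ≤ f x) : AntitoneOn (fun x => f x / x) (Ioi 0) := by
  have hderiv : ∀ x ∈ Ioi (0 : ℝ),
      HasDerivAt (fun x => f x / x) ((deriv f x * x - f x * 1) / x ^ 2) x := fun x hx =>
    (hf.differentiableAt (Ioi_mem_nhds hx)).hasDerivAt.div (hasDerivAt_id x) (ne_of_gt hx)
  refine antitoneOn_of_hasDerivWithinAt_nonpos (convex_Ioi 0)
    (fun x hx => (hderiv x hx).continuousAt.continuousWithinAt)
    (fun x hx => (hderiv x (interior_subset hx)).hasDerivWithinAt) fun x hx => ?_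
  exact div_nonpos_of_nonpos_of_nonneg (by linarith [hf' x (interior_subset hx)]) (sq_nonneg x)

lemma exists_le_mul_one_add_of_antitoneOn_div_self (hf : ContinuousOn f (Icc 0 1))
    (hanti : AntitoneOn (fun x => f x / x) (Ioi 0)) : ∃ A, ∀ x > 0, f x ≤ A * (1 + x) := by
  obtain ⟨A, hA⟩ := isCompact_Icc.exists_bound_of_continuousOn hf
  have hfA : ∀ x ∈ Icc (0 : ℝ) 1, f x ≤ A := fun x hx => (le_abs_self _).trans (hA x hx)
  have hA₀ : 0 ≤ A := (norm_nonneg _).trans (hA 1 (right_mem_Icc.2 zero_le_one))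
  refine ⟨A, fun x hx => ?_⟩
  rcases le_total x 1 with hx1 | hx1
  · nlinarith [hfA x ⟨hx.le, hx1⟩]
  · have hdiv : f x / x ≤ f 1 / 1 := hanti (mem_Ioi.2 one_pos) hx hx1
    rw [div_one, div_le_iff₀ hx] at hdiv
    nlinarith [hfA 1 (right_mem_Icc.2 zero_le_one)]

end RealFunctions

/-- `U` solves `U'' + (cot ρ)·U' + f(U) = 0` on `(0, r)`, is positive there, and is `C¹` up to the
endpoints of `[0, r] ⊆ [0, π)`. Nothing is required of `U` away from `[0, r]`, except that `deriv U`
at the endpoints is the two-sided derivative. -/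
structure IsPositiveRadialSol (f U : ℝ → ℝ) (r : ℝ) : Prop where
  mem_Ico : r ∈ Ico 0 π
  differentiableAt : ∀ x ∈ Icc 0 r, DifferentiableAt ℝ U x
  continuousOn_deriv : ContinuousOn (deriv U) (Icc 0 r)
  differentiableAt_deriv : ∀ x ∈ Ioo 0 r, DifferentiableAt ℝ (deriv U) x
  ode : ∀ x ∈ Ioo 0 r, deriv (deriv U) x + cos x / sin x * deriv U x + f (U x) = 0
  pos : ∀ x ∈ Ioo 0 r, 0 < U x

lemma IsEvenSol.isPositiveRadialSol {f U : ℝ → ℝ} {r : ℝ} (hU : IsEvenSol f U) (hU₀ : 0 < U 0)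
    (hr : r ∈ Ico 0 π) (hne : ∀ x ∈ Ioo 0 r, U x ≠ 0) : IsPositiveRadialSol f U r := by
  obtain ⟨-, hC2, hode⟩ := hU
  have hsub : Icc 0 r ⊆ Ioo (-π) π := Icc_subset_Ioo (neg_lt_zero.2 pi_pos) hr.2
  have hC1 : ContDiffOn ℝ 1 (deriv U) (Ioo (-π) π) := hC2.deriv_of_isOpen isOpen_Ioo (by norm_num)
  have hd : ∀ x ∈ Icc 0 r, DifferentiableAt ℝ U x := fun x hx =>
    (hC2.differentiableOn two_ne_zero).differentiableAt (isOpen_Ioo.mem_nhds (hsub hx))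
  have hd' : ∀ x ∈ Icc 0 r, DifferentiableAt ℝ (deriv U) x := fun x hx =>
    (hC1.differentiableOn one_ne_zero).differentiableAt (isOpen_Ioo.mem_nhds (hsub hx))
  exact
    { mem_Ico := hr
      differentiableAt := hd
      continuousOn_deriv := hC1.continuousOn.mono hsub
      differentiableAt_deriv := fun x hx => hd' x (Ioo_subset_Icc_self hx)
      ode := fun x hx => hode x (hsub (Ioo_subset_Icc_self hx)) hx.1.ne'
      pos := fun x hx => pos_of_continuousOn_of_ne_zero
        (fun y hy => (hd y (Ico_subset_Icc_self hy)).continuousAt.continuousWithinAt) hU₀ hne hx }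

namespace IsPositiveRadialSol

variable {f U : ℝ → ℝ} {r x : ℝ}

lemma continuousOn (h : IsPositiveRadialSol f U r) : ContinuousOn U (Icc 0 r) :=
  fun x hx => (h.differentiableAt x hx).continuousAt.continuousWithinAt

lemma sin_pos (h : IsPositiveRadialSol f U r) (hx : x ∈ Ioc 0 r) : 0 < sin x :=
  sin_pos_of_pos_of_lt_pi hx.1 (hx.2.trans_lt h.mem_Ico.2)

lemma mul_sub_le_sub (h : IsPositiveRadialSol f U r) {a b C : ℝ} (ha : 0 ≤ a) (hab : a ≤ b)
    (hb : b ≤ r) (hC : ∀ x ∈ Ioo a b, C ≤ deriv U x) : C * (b - a) ≤ U b - U a := by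
  have hsub : Icc a b ⊆ Icc 0 r := Icc_subset_Icc ha hb
  refine (convex_Icc a b).mul_sub_le_image_sub_of_le_deriv (h.continuousOn.mono hsub)
    (fun x hx => (h.differentiableAt x (hsub (interior_subset hx))).differentiableWithinAt) ?_
    a (left_mem_Icc.2 hab) b (right_mem_Icc.2 hab) hab
  rwa [interior_Icc]

lemma hasDerivAt_sin_mul_deriv (h : IsPositiveRadialSol f U r) (hx : x ∈ Ioo 0 r) :
    HasDerivAt (fun x => sin x * deriv U x) (-(sin x * f (U x))) x := by
  have hsin : sin x ≠ 0 := (h.sin_pos (Ioo_subset_Ioc_self hx)).ne'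
  have hode : sin x * deriv (deriv U) x + cos x * deriv U x + sin x * f (U x) = 0 := by
    have := h.ode x hx
    field_simp at this
    linarith
  exact ((hasDerivAt_sin x).mul (h.differentiableAt_deriv x hx).hasDerivAt).congr_deriv
    (by linarith)

lemma continuousOn_sin_mul_deriv (h : IsPositiveRadialSol f U r) :
    ContinuousOn (fun x => sin x * deriv U x) (Icc 0 r) :=
  continuous_sin.continuousOn.mul h.continuousOn_deriv

lemma antitoneOn_sin_mul_deriv (h : IsPositiveRadialSol f U r) (hf : ∀ x > 0, 0 ≤ f x) :
    AntitoneOn (fun x => sin x * deriv U x) (Icc 0 r) := by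
  refine antitoneOn_of_hasDerivWithinAt_nonpos (f' := fun x => -(sin x * f (U x)))
    (convex_Icc 0 r) h.continuousOn_sin_mul_deriv ?_ ?_ <;> rw [interior_Icc] <;> intro x hx
  · exact (h.hasDerivAt_sin_mul_deriv hx).hasDerivWithinAt
  · exact neg_nonpos.2
      (mul_nonneg (h.sin_pos (Ioo_subset_Ioc_self hx)).le (hf _ (h.pos x hx)))

lemma deriv_nonpos (h : IsPositiveRadialSol f U r) (hf : ∀ x > 0, 0 ≤ f x) (hx : x ∈ Ioc 0 r) :
    deriv U x ≤ 0 := by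
  have hflux : sin x * deriv U x ≤ sin 0 * deriv U 0 :=
    h.antitoneOn_sin_mul_deriv hf (left_mem_Icc.2 h.mem_Ico.1) (Ioc_subset_Icc_self hx) hx.1.le
  rw [sin_zero, zero_mul] at hflux
  exact nonpos_of_mul_nonpos_right hflux (h.sin_pos hx)

lemma antitoneOn (h : IsPositiveRadialSol f U r) (hf : ∀ x > 0, 0 ≤ f x) :
    AntitoneOn U (Icc 0 r) := by
  refine antitoneOn_of_deriv_nonpos (convex_Icc 0 r) h.continuousOn
    (fun x hx => (h.differentiableAt x (interior_subset hx)).differentiableWithinAt) ?_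
  rw [interior_Icc]
  exact fun x hx => h.deriv_nonpos hf (Ioo_subset_Ioc_self hx)

lemma neg_mul_one_sub_cos_le_sin_mul_deriv (h : IsPositiveRadialSol f U r) {K : ℝ}
    (hK : ∀ x ∈ Ioo 0 r, f (U x) ≤ K) (hx : x ∈ Icc 0 r) :
    -(K * (1 - cos x)) ≤ sin x * deriv U x := by
  have hmono : MonotoneOn (fun x => K * (1 - cos x) + sin x * deriv U x) (Icc 0 r) := by
    refine monotoneOn_of_hasDerivWithinAt_nonneg (f' := fun x => K * sin x - sin x * f (U x))
      (convex_Icc 0 r) (.add (by fun_prop) h.continuousOn_sin_mul_deriv) ?_ ?_ <;>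
      rw [interior_Icc] <;> intro x hx
    · have hcos : HasDerivAt (fun x => K * (1 - cos x)) (K * sin x) x := by
        simpa using ((hasDerivAt_cos x).const_sub 1).const_mul K
      exact (hcos.add (h.hasDerivAt_sin_mul_deriv hx)).hasDerivWithinAt
    · nlinarith [hK x hx, h.sin_pos (Ioo_subset_Ioc_self hx)]
  have hle := hmono (left_mem_Icc.2 h.mem_Ico.1) hx hx.1
  simp only [cos_zero, sin_zero, sub_self, mul_zero, zero_mul, add_zero] at hle
  linarith

lemma neg_le_deriv (h : IsPositiveRadialSol f U r) {K : ℝ} (hK₀ : 0 ≤ K)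
    (hK : ∀ x ∈ Ioo 0 r, f (U x) ≤ K) (hx : x ∈ Ioc 0 r) (hxpi : x ≤ π / 2) :
    -K ≤ deriv U x := by
  refine le_of_mul_le_mul_left ?_ (h.sin_pos hx)
  calc sin x * -K = -(K * sin x) := by ring
    _ ≤ -(K * (1 - cos x)) := by gcongr; exact one_sub_cos_le_sin hx.1.le hxpi
    _ ≤ sin x * deriv U x := h.neg_mul_one_sub_cos_le_sin_mul_deriv hK (Ioc_subset_Icc_self hx)

lemma sub_mul_le (h : IsPositiveRadialSol f U r) {K : ℝ} (hK₀ : 0 ≤ K)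
    (hK : ∀ x ∈ Ioo 0 r, f (U x) ≤ K) (hx : x ∈ Icc 0 r) (hxpi : x ≤ π / 2) :
    U 0 - K * x ≤ U x := by
  have hmvt : -K * (x - 0) ≤ U x - U 0 := h.mul_sub_le_sub le_rfl hx.1 hx.2 fun y hy =>
    h.neg_le_deriv hK₀ hK ⟨hy.1, hy.2.le.trans hx.2⟩ (hy.2.le.trans hxpi)
  linarith

lemma deriv_div_sin_le_deriv (h : IsPositiveRadialSol f U r) (hf : ∀ x > 0, 0 ≤ f x) {δ : ℝ}
    (hδ : 0 < δ) (hx : x ∈ Icc δ r) : deriv U r / sin δ ≤ deriv U x := by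
  have hx₀ : x ∈ Ioc 0 r := ⟨hδ.trans_le hx.1, hx.2⟩
  have hr₀ : r ∈ Ioc 0 r := ⟨hx₀.1.trans_le hx.2, le_rfl⟩
  have hflux : sin r * deriv U r ≤ sin x * deriv U x :=
    h.antitoneOn_sin_mul_deriv hf (Ioc_subset_Icc_self hx₀) (Ioc_subset_Icc_self hr₀) hx.2
  have hsinδ : 0 < sin δ := h.sin_pos ⟨hδ, hx.1.trans hx.2⟩
  rw [div_le_iff₀ hsinδ]
  refine le_of_mul_le_mul_left ?_ (h.sin_pos hx₀)
  calc sin x * deriv U r ≤ sin δ * sin r * deriv U r :=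
        mul_le_mul_of_nonpos_right (sin_mul_sin_le_sin hδ.le h.mem_Ico.2.le hx)
          (h.deriv_nonpos hf hr₀)
    _ = sin r * deriv U r * sin δ := by ring
    _ ≤ sin x * deriv U x * sin δ := by gcongr
    _ = sin x * (deriv U x * sin δ) := by ring

lemma le_add_pi_div_sin_mul_neg_deriv (h : IsPositiveRadialSol f U r) (hf : ∀ x > 0, 0 ≤ f x)
    {δ : ℝ} (hδ : δ ∈ Ioc 0 r) : U δ ≤ U r + π / sin δ * -deriv U r := by
  have hmvt : deriv U r / sin δ * (r - δ) ≤ U r - U δ := h.mul_sub_le_sub hδ.1.le hδ.2 le_rfl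
    fun x hx => h.deriv_div_sin_le_deriv hf hδ.1 (Ioo_subset_Icc_self hx)
  have hslope : deriv U r / sin δ ≤ 0 := div_nonpos_of_nonpos_of_nonneg
    (h.deriv_nonpos hf (right_mem_Ioc.2 (hδ.1.trans_le hδ.2))) (h.sin_pos hδ).le
  have hlen : deriv U r / sin δ * π ≤ deriv U r / sin δ * (r - δ) :=
    mul_le_mul_of_nonpos_left (by linarith [h.mem_Ico.2, hδ.1]) hslope
  calc U δ ≤ U r - deriv U r / sin δ * π := by linarith
    _ = U r + π / sin δ * -deriv U r := by ring

lemma sub_mul_le_mul_max (h : IsPositiveRadialSol f U r) (hf : ∀ x > 0, 0 ≤ f x) {K δ : ℝ}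
    (hK₀ : 0 ≤ K) (hK : ∀ x ∈ Ioo 0 r, f (U x) ≤ K) (hδ : 0 < δ) (hδpi : δ ≤ π / 2)
    (hδU : K * δ ≤ U 0) :
    U 0 - K * δ ≤ (1 + π / sin δ) * max (U r) (-deriv U r) := by
  set m := max (U r) (-deriv U r)
  have hUm : U r ≤ m := le_max_left _ _
  have hderivm : -deriv U r ≤ m := le_max_right _ _
  have hC : 0 ≤ π / sin δ :=
    div_nonneg pi_pos.le (sin_nonneg_of_nonneg_of_le_pi hδ.le (by linarith [pi_pos]))
  rcases le_total r δ with hrδ | hδr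
  · have hUr : U 0 - K * r ≤ U r :=
      h.sub_mul_le hK₀ hK (right_mem_Icc.2 h.mem_Ico.1) (hrδ.trans hδpi)
    have hle : U 0 - K * δ ≤ m := by linarith [mul_le_mul_of_nonneg_left hrδ hK₀]
    nlinarith [mul_nonneg hC ((sub_nonneg.2 hδU).trans hle)]
  · calc U 0 - K * δ ≤ U δ := h.sub_mul_le hK₀ hK ⟨hδ.le, hδr⟩ hδpi
      _ ≤ U r + π / sin δ * -deriv U r := h.le_add_pi_div_sin_mul_neg_deriv hf ⟨hδ, hδr⟩
      _ ≤ m + π / sin δ * m := by gcongr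
      _ = (1 + π / sin δ) * m := by ring

end IsPositiveRadialSol

lemma exists_sub_one_le_mul_max {f : ℝ → ℝ} {A : ℝ} (hf : ∀ x > 0, 0 ≤ f x)
    (hfA : ∀ x > 0, f x ≤ A * (1 + x)) :
    ∃ C > 0, ∀ (U : ℝ → ℝ) (r : ℝ), IsPositiveRadialSol f U r → 1 ≤ U 0 →
      U 0 - 1 ≤ C * max (U r) (-deriv U r) := by
  have hA : 0 ≤ A := by linarith [hf 1 one_pos, hfA 1 one_pos]
  set δ : ℝ := 1 / (2 * (1 + A))
  have hδ : 0 < δ := by positivity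
  have hδpi : δ ≤ π / 2 := by
    have : δ ≤ 1 := div_le_one_of_le₀ (by linarith) (by positivity)
    linarith [pi_gt_three]
  have hAδ : A * δ ≤ 1 / 2 := by
    have : (1 + A) * δ = 1 / 2 := by simp only [δ]; field_simp
    linarith
  have hsinδ : 0 < sin δ := sin_pos_of_pos_of_lt_pi hδ (by linarith [pi_pos])
  refine ⟨2 * (1 + π / sin δ), by positivity, fun U r h hU => ?_⟩
  have hfU : ∀ x ∈ Ioo 0 r, f (U x) ≤ A * (1 + U 0) := fun x hx => by
    have hUx : U x ≤ U 0 :=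
      h.antitoneOn hf (left_mem_Icc.2 h.mem_Ico.1) (Ioo_subset_Icc_self hx) hx.1.le
    exact (hfA _ (h.pos x hx)).trans (by gcongr)
  have hsmall : A * (1 + U 0) * δ ≤ (1 + U 0) / 2 := by nlinarith
  have hbound := h.sub_mul_le_mul_max hf (by positivity) hfU hδ hδpi (by linarith)
  linarith

theorem stmt7_general {ι : Type*} {l : Filter ι} {f : ℝ → ℝ} {A : ℝ} (hf : ∀ x > 0, 0 ≤ f x)
    (hfA : ∀ x > 0, f x ≤ A * (1 + x)) {U : ι → ℝ → ℝ} {ρ : ι → ℝ}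
    (hU : ∀ i, IsPositiveRadialSol f (U i) (ρ i)) (hU₀ : Tendsto (fun i => U i 0) l atTop) :
    Tendsto (fun i => U i (ρ i) ^ 2 + deriv (U i) (ρ i) ^ 2) l atTop ∧
      Tendsto (fun i => max (U i (ρ i)) (-deriv (U i) (ρ i))) l atTop := by
  obtain ⟨C, hC, hbound⟩ := exists_sub_one_le_mul_max hf hfA
  have hmax : Tendsto (fun i => max (U i (ρ i)) (-deriv (U i) (ρ i))) l atTop := by
    refine tendsto_atTop_mono' l ?_
      ((tendsto_atTop_add_const_right l (-1) hU₀).atTop_div_const hC)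
    filter_upwards [hU₀.eventually_ge_atTop 1] with i hi
    rw [div_le_iff₀' hC]
    exact hbound (U i) (ρ i) (hU i) hi
  exact ⟨by simpa only [neg_sq] using tendsto_sq_add_sq_atTop_of_max hmax, hmax⟩

/-- Under hypothesis (H), if `t_n → +∞` and `ρ_n ∈ [0, r_{t_n}]`, then
`U_{t_n}(ρ_n)² + U_{t_n}'(ρ_n)² → +∞`; more precisely
`max(U_{t_n}(ρ_n), -U_{t_n}'(ρ_n)) → +∞`. -/
theorem stmt7 (f : ℝ → ℝ) (hf : ContDiff ℝ 1 f)
    (hH : ∀ x > (0:ℝ), 0 < f x ∧ x * deriv f x ≤ f x)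
    (t : ℕ → ℝ) (ht : ∀ n, 0 < t n)
    (htinf : Filter.Tendsto t Filter.atTop Filter.atTop)
    (U : ℕ → ℝ → ℝ) (r : ℕ → ℝ)
    (hU : ∀ n, IsEvenSol f (U n) ∧ U n 0 = t n)
    (hr : ∀ n, r n ∈ Set.Ioo 0 Real.pi ∧ U n (r n) = 0 ∧
      ∀ ρ ∈ Set.Ioo 0 (r n), U n ρ ≠ 0)
    (ρ : ℕ → ℝ) (hρ : ∀ n, ρ n ∈ Set.Icc 0 (r n)) :
    Filter.Tendsto (fun n => (U n (ρ n)) ^ 2 + (deriv (U n) (ρ n)) ^ 2)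
      Filter.atTop Filter.atTop ∧
    Filter.Tendsto (fun n => max (U n (ρ n)) (-(deriv (U n) (ρ n))))
      Filter.atTop Filter.atTop := by
  obtain ⟨A, hA⟩ := exists_le_mul_one_add_of_antitoneOn_div_self hf.continuous.continuousOn
    (antitoneOn_div_self_of_mul_deriv_le (hf.differentiable one_ne_zero).differentiableOn
      fun x hx => (hH x hx).2)
  have hsol : ∀ n, IsPositiveRadialSol f (U n) (ρ n) := fun n =>
    (hU n).1.isPositiveRadialSol ((hU n).2 ▸ ht n) ⟨(hρ n).1, (hρ n).2.trans_lt (hr n).1.2⟩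
      fun x hx => (hr n).2.2 x ⟨hx.1, hx.2.trans_le (hρ n).2⟩
  exact stmt7_general (fun x hx => (hH x hx).1.le) hA hsol (by simpa only [(hU _).2] using htinf)
end

section
/- Let f: ℝ → ℝ satisfy hypothesis (H) and let t > 0. Let U_t be the even solution with U_t(0) = t, r_t its smallest positive zero, and H_t the even C² solution of the linearized equation H'' + (cot ρ)·H' + f'(U_t)·H = 0 (away from ρ = 0) with H_t(0) = 1. Then H_t(ρ)·U_t''(ρ) − U_t'(ρ)·H_t'(ρ) ≠ 0 for every ρ ∈ [−r_t, r_t]. -/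
open Real Set

/-!
Write the equation as `u'' + (p'/p)·u' + g = 0` with `p = sin`; what matters about `p` is that it is
positive, vanishes at `0`, and has `p'/p` strictly decreasing and `O(1/ρ)` at `0`. If
`F' + (p'/p)·F = G` then `(p·F)' = p·G`, so `F` has the sign of `G`. This is applied three times: to
`F = U'`, with `G = -f(U) < 0`; to the Wronskian `F = U·H' - H·U'`, with `G = (f(U) - U·f'(U))·H`,
which is nonnegative as long as `H > 0`, so that `H / U` increases and `H` cannot reach `0` before
`U` does; and to `F = H·U'' - U'·H'`, with `G = -(p'/p)'·H·U' < 0`. At `ρ = 0` this last `F` is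
`H(0)·U''(0)`, and `U''(0) < 0`: were `U''(0) = 0`, then `(p'/p)·U'` would tend to `0`, hence so
would `f(U)`.
-/

open Filter Topology Asymptotics

section RealFunctions

lemma deriv_comp_neg_of_parity {g : ℝ → ℝ} {ε R : ℝ}
    (h : ∀ x ∈ Ioo (-R) R, g (-x) = ε * g x) :
    ∀ x ∈ Ioo (-R) R, deriv g (-x) = -ε * deriv g x := by
  intro x hx
  have hgerm : (fun y ↦ g (-y)) =ᶠ[𝓝 x] fun y ↦ ε * g y :=
    eventually_of_mem (isOpen_Ioo.mem_nhds hx) h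
  have hderiv := hgerm.deriv_eq
  rw [deriv_comp_neg, deriv_const_mul_field] at hderiv
  linarith

variable {v : ℝ → ℝ} {a b : ℝ}

lemma pos_of_forall_Ico_pos_imp_pos (hv : ContinuousOn v (Ico a b))
    (hstep : ∀ s ∈ Ico a b, (∀ x ∈ Ico a s, 0 < v x) → 0 < v s) :
    ∀ x ∈ Ico a b, 0 < v x := by
  intro x hx
  by_contra! hneg
  have hcompact : IsCompact (Icc a x ∩ v ⁻¹' Iic 0) :=
    isCompact_Icc.of_isClosed_subset
      ((hv.mono (Icc_subset_Ico_right hx.2)).preimage_isClosed_of_isClosed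
        isClosed_Icc isClosed_Iic)
      inter_subset_left
  obtain ⟨s, ⟨hs, hvs⟩, hleast⟩ := hcompact.exists_isLeast ⟨x, ⟨hx.1, le_rfl⟩, hneg⟩
  refine (hstep s ⟨hs.1, hs.2.trans_lt hx.2⟩ fun y hy ↦ ?_).not_ge hvs
  by_contra! hvy
  exact (hleast ⟨⟨hy.1, hy.2.le.trans hs.2⟩, hvy⟩).not_gt hy.2

lemma pos_of_ne_zero_of_pos_left (hv : ContinuousOn v (Ico a b)) (ha : 0 < v a)
    (hne : ∀ x ∈ Ioo a b, v x ≠ 0) : ∀ x ∈ Ico a b, 0 < v x := by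
  intro x hx
  by_contra! hneg
  obtain ⟨y, hy, hvy⟩ :=
    intermediate_value_Icc' hx.1 (hv.mono (Icc_subset_Ico_right hx.2)) ⟨hneg, ha.le⟩
  have hay : a ≠ y := by
    rintro rfl
    exact ha.ne' hvy
  exact hne y ⟨hy.1.lt_of_ne hay, hy.2.trans_lt hx.2⟩ hvy

end RealFunctions

/-- A radial weight on `(0, R)`: the density `p` of a radial equation
`(p·u')' + p·g = 0`, equivalently `u'' + (p'/p)·u' + g = 0`, which is singular at `0`. On the
two-sphere `p = sin`, on `ℝⁿ` with `n ≥ 2` it is `p ρ = ρ ^ (n - 1)`. Since `deriv` is `0` where the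
derivative does not exist, `deriv_logDeriv_neg` includes the differentiability of `p'/p`. The bound
`logDeriv_isBigO` excludes weights such as `exp (-1/ρ)`, for which always `u''(0) = 0`. -/
structure IsRadialWeight (p : ℝ → ℝ) (R : ℝ) : Prop where
  map_zero : p 0 = 0
  continuousOn : ContinuousOn p (Ico 0 R)
  pos : ∀ x ∈ Ioo 0 R, 0 < p x
  differentiableAt : ∀ x ∈ Ioo 0 R, DifferentiableAt ℝ p x
  deriv_logDeriv_neg : ∀ x ∈ Ioo 0 R, deriv (logDeriv p) x < 0
  logDeriv_isBigO : logDeriv p =O[𝓝[>] 0] fun x ↦ x⁻¹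

/-- `u` is an even `C²` function on `(-R, R)` with `u'' + (p'/p)·u' + g = 0` on `(0, R)`. The source
`g` is a function of the radius, so that a nonlinear equation (`g = f ∘ u`) and its
linearization (`g = (f' ∘ u)·v`, with unknown `v`) are both instances. -/
structure IsRadialSol (p : ℝ → ℝ) (R : ℝ) (g u : ℝ → ℝ) : Prop where
  even : ∀ x ∈ Ioo (-R) R, u (-x) = u x
  contDiffOn : ContDiffOn ℝ 2 u (Ioo (-R) R)
  ode : ∀ x ∈ Ioo 0 R, deriv (deriv u) x + logDeriv p x * deriv u x + g x = 0

namespace IsRadialWeight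

variable {p F G : ℝ → ℝ} {R r x : ℝ}

lemma hasDerivAt_mul (hp : IsRadialWeight p R) (hx : x ∈ Ioo 0 R)
    (hF : HasDerivAt F (G x - logDeriv p x * F x) x) :
    HasDerivAt (fun y ↦ p y * F y) (p x * G x) x := by
  have hpx := (hp.pos x hx).ne'
  refine ((hp.differentiableAt x hx).hasDerivAt.mul hF).congr_deriv ?_
  rw [logDeriv_apply]
  field_simp
  ring

lemma continuousOn_mul (hp : IsRadialWeight p R) (hr : r < R) (hF : ContinuousOn F (Icc 0 r)) :
    ContinuousOn (fun x ↦ p x * F x) (Icc 0 r) :=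
  (hp.continuousOn.mono (Icc_subset_Ico_right hr)).mul hF

lemma neg_of_hasDerivAt (hp : IsRadialWeight p R) (hr : r < R) (hF : ContinuousOn F (Icc 0 r))
    (hF' : ∀ x ∈ Ioo 0 r, HasDerivAt F (G x - logDeriv p x * F x) x)
    (hG : ∀ x ∈ Ioo 0 r, G x < 0) : ∀ x ∈ Ioc 0 r, F x < 0 := by
  intro x hx
  have hanti : StrictAntiOn (fun x ↦ p x * F x) (Icc 0 r) := by
    refine strictAntiOn_of_deriv_neg (convex_Icc 0 r) (hp.continuousOn_mul hr hF) fun y hy ↦ ?_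
    rw [interior_Icc] at hy
    have hyR : y ∈ Ioo 0 R := ⟨hy.1, hy.2.trans hr⟩
    rw [(hp.hasDerivAt_mul hyR (hF' y hy)).deriv]
    exact mul_neg_of_pos_of_neg (hp.pos y hyR) (hG y hy)
  have hpF : p x * F x < p 0 * F 0 :=
    hanti ⟨le_rfl, hx.1.le.trans hx.2⟩ ⟨hx.1.le, hx.2⟩ hx.1
  rw [hp.map_zero, zero_mul] at hpF
  exact neg_of_mul_neg_right hpF (hp.pos x ⟨hx.1, hx.2.trans_lt hr⟩).le

lemma nonneg_of_hasDerivAt (hp : IsRadialWeight p R) (hr : r < R) (hF : ContinuousOn F (Icc 0 r))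
    (hF' : ∀ x ∈ Ioo 0 r, HasDerivAt F (G x - logDeriv p x * F x) x)
    (hG : ∀ x ∈ Ioo 0 r, 0 ≤ G x) : ∀ x ∈ Ioc 0 r, 0 ≤ F x := by
  intro x hx
  have hmono : MonotoneOn (fun x ↦ p x * F x) (Icc 0 r) := by
    refine monotoneOn_of_hasDerivWithinAt_nonneg (f' := fun x ↦ p x * G x) (convex_Icc 0 r)
      (hp.continuousOn_mul hr hF) ?_ ?_ <;> rw [interior_Icc] <;> intro y hy
    · exact (hp.hasDerivAt_mul ⟨hy.1, hy.2.trans hr⟩ (hF' y hy)).hasDerivWithinAt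
    · exact mul_nonneg (hp.pos y ⟨hy.1, hy.2.trans hr⟩).le (hG y hy)
  have hpF : p 0 * F 0 ≤ p x * F x :=
    hmono ⟨le_rfl, hx.1.le.trans hx.2⟩ ⟨hx.1.le, hx.2⟩ hx.1.le
  rw [hp.map_zero, zero_mul] at hpF
  exact nonneg_of_mul_nonneg_right hpF (hp.pos x ⟨hx.1, hx.2.trans_lt hr⟩)

end IsRadialWeight

namespace IsRadialSol

variable {p g h c u v : ℝ → ℝ} {R r x : ℝ}

lemma hasDerivAt (hu : IsRadialSol p R g u) (hx : x ∈ Ioo (-R) R) :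
    HasDerivAt u (deriv u x) x :=
  ((hu.contDiffOn.differentiableOn two_ne_zero).differentiableAt
    (isOpen_Ioo.mem_nhds hx)).hasDerivAt

lemma contDiffOn_deriv (hu : IsRadialSol p R g u) : ContDiffOn ℝ 1 (deriv u) (Ioo (-R) R) :=
  hu.contDiffOn.deriv_of_isOpen isOpen_Ioo (by norm_num)

lemma hasDerivAt_deriv (hu : IsRadialSol p R g u) (hx : x ∈ Ioo (-R) R) :
    HasDerivAt (deriv u) (deriv (deriv u) x) x :=
  ((hu.contDiffOn_deriv.differentiableOn one_ne_zero).differentiableAt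
    (isOpen_Ioo.mem_nhds hx)).hasDerivAt

lemma continuousOn_deriv_deriv (hu : IsRadialSol p R g u) :
    ContinuousOn (deriv (deriv u)) (Ioo (-R) R) :=
  (hu.contDiffOn_deriv.deriv_of_isOpen (m := 0) isOpen_Ioo (by norm_num)).continuousOn

lemma deriv_odd (hu : IsRadialSol p R g u) :
    ∀ x ∈ Ioo (-R) R, deriv u (-x) = -deriv u x := by
  simpa only [neg_mul, one_mul] using
    deriv_comp_neg_of_parity (ε := 1) (by simpa only [one_mul] using hu.even)

lemma deriv_deriv_even (hu : IsRadialSol p R g u) :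
    ∀ x ∈ Ioo (-R) R, deriv (deriv u) (-x) = deriv (deriv u) x := by
  simpa only [neg_neg, one_mul] using
    deriv_comp_neg_of_parity (ε := -1) (by simpa only [neg_mul, one_mul] using hu.deriv_odd)

lemma deriv_zero (hu : IsRadialSol p R g u) (hR : 0 < R) : deriv u 0 = 0 := by
  have hodd := hu.deriv_odd 0 ⟨neg_lt_zero.2 hR, hR⟩
  rw [neg_zero] at hodd
  linarith

lemma deriv_deriv_eq (hu : IsRadialSol p R g u) (hx : x ∈ Ioo 0 R) :
    deriv (deriv u) x = -g x - logDeriv p x * deriv u x := by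
  linarith [hu.ode x hx]

lemma deriv_neg_of_source_pos (hp : IsRadialWeight p R) (hu : IsRadialSol p R g u)
    (hr : r ∈ Ioo 0 R) (hg : ∀ x ∈ Ioo 0 r, 0 < g x) : ∀ x ∈ Ioc 0 r, deriv u x < 0 := by
  have hR : 0 < R := hr.1.trans hr.2
  refine hp.neg_of_hasDerivAt (G := fun x ↦ -g x) hr.2
    (hu.contDiffOn_deriv.continuousOn.mono (Icc_subset_Ioo (neg_lt_zero.2 hR) hr.2))
    (fun x hx ↦ ?_) (fun x hx ↦ neg_neg_of_pos (hg x hx))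
  have hxR : x ∈ Ioo 0 R := ⟨hx.1, hx.2.trans hr.2⟩
  rw [← hu.deriv_deriv_eq hxR]
  exact hu.hasDerivAt_deriv ⟨(neg_lt_zero.2 hR).trans hx.1, hxR.2⟩

lemma apply_zero_of_deriv_deriv_zero (hp : IsRadialWeight p R) (hu : IsRadialSol p R g u)
    (hR : 0 < R) (hg : ContinuousAt g 0) (h0 : deriv (deriv u) 0 = 0) : g 0 = 0 := by
  have hzero : (0 : ℝ) ∈ Ioo (-R) R := ⟨neg_lt_zero.2 hR, hR⟩
  have hu' : deriv u =o[𝓝[>] 0] fun x ↦ x := by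
    simpa only [hu.deriv_zero hR, h0, sub_zero, smul_zero] using
      (hasDerivAt_iff_isLittleO.1 (hu.hasDerivAt_deriv hzero)).mono nhdsWithin_le_nhds
  have hdrift : Tendsto (fun x ↦ logDeriv p x * deriv u x) (𝓝[>] 0) (𝓝 0) := by
    refine (isLittleO_one_iff ℝ).1 ((hp.logDeriv_isBigO.mul_isLittleO hu').congr' .rfl ?_)
    filter_upwards [self_mem_nhdsWithin] with x hx
    exact inv_mul_cancel₀ (ne_of_gt hx)
  have hu'' : Tendsto (deriv (deriv u)) (𝓝[>] 0) (𝓝 0) := by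
    have hcont := hu.continuousOn_deriv_deriv.continuousAt (isOpen_Ioo.mem_nhds hzero)
    simpa only [h0] using hcont.tendsto.mono_left nhdsWithin_le_nhds
  have hg0 : Tendsto g (𝓝[>] 0) (𝓝 0) := by
    have hsum := (hu''.add hdrift).neg
    rw [add_zero, neg_zero] at hsum
    refine hsum.congr' ?_
    filter_upwards [Ioo_mem_nhdsGT hR] with x hx
    linarith [hu.ode x hx]
  exact tendsto_nhds_unique (hg.tendsto.mono_left nhdsWithin_le_nhds) hg0

lemma deriv_deriv_zero_neg (hp : IsRadialWeight p R) (hu : IsRadialSol p R g u)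
    (hr : r ∈ Ioo 0 R) (hg : ContinuousAt g 0) (hpos : ∀ x ∈ Ico 0 r, 0 < g x) :
    deriv (deriv u) 0 < 0 := by
  have hR : 0 < R := hr.1.trans hr.2
  have hne : deriv (deriv u) 0 ≠ 0 := fun h0 ↦
    (hpos 0 ⟨le_rfl, hr.1⟩).ne' (hu.apply_zero_of_deriv_deriv_zero hp hR hg h0)
  refine lt_of_le_of_ne ?_ hne
  have hslope := (hasDerivWithinAt_iff_tendsto_slope' self_notMem_Ioi).1
    (hu.hasDerivAt_deriv ⟨neg_lt_zero.2 hR, hR⟩).hasDerivWithinAt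
  refine le_of_tendsto hslope ?_
  filter_upwards [Ioo_mem_nhdsGT hr.1] with x hx
  rw [slope_def_field, hu.deriv_zero hR, sub_zero, sub_zero]
  have hneg : deriv u x < 0 :=
    hu.deriv_neg_of_source_pos hp hr (fun y hy ↦ hpos y ⟨hy.1.le, hy.2⟩) x ⟨hx.1, hx.2.le⟩
  exact (div_neg_of_neg_of_pos hneg hx.1).le

lemma hasDerivAt_wronskian (hu : IsRadialSol p R g u) (hv : IsRadialSol p R h v)
    (hx : x ∈ Ioo 0 R) :
    HasDerivAt (fun y ↦ u y * deriv v y - v y * deriv u y)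
      ((g x * v x - h x * u x) - logDeriv p x * (u x * deriv v x - v x * deriv u x)) x := by
  have hx' : x ∈ Ioo (-R) R := ⟨by linarith [hx.1, hx.2], hx.2⟩
  refine (((hu.hasDerivAt hx').mul (hv.hasDerivAt_deriv hx')).sub
    ((hv.hasDerivAt hx').mul (hu.hasDerivAt_deriv hx'))).congr_deriv ?_
  rw [hu.deriv_deriv_eq hx, hv.deriv_deriv_eq hx]
  ring

lemma monotoneOn_div (hp : IsRadialWeight p R) (hu : IsRadialSol p R g u)
    (hv : IsRadialSol p R h v) (hr : r < R) (hpos : ∀ x ∈ Icc 0 r, 0 < u x)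
    (hle : ∀ x ∈ Ioo 0 r, h x * u x ≤ g x * v x) :
    MonotoneOn (fun x ↦ v x / u x) (Icc 0 r) := by
  have hmem : ∀ x ∈ Icc 0 r, x ∈ Ioo (-R) R := fun x hx ↦
    ⟨by linarith [hx.1, hx.2], hx.2.trans_lt hr⟩
  have hwronskian : ∀ x ∈ Ioc 0 r, 0 ≤ u x * deriv v x - v x * deriv u x := by
    refine hp.nonneg_of_hasDerivAt (G := fun x ↦ g x * v x - h x * u x) hr ?_
      (fun x hx ↦ hu.hasDerivAt_wronskian hv ⟨hx.1, hx.2.trans hr⟩)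
      (fun x hx ↦ sub_nonneg.2 (hle x hx))
    exact ((hu.contDiffOn.continuousOn.mul hv.contDiffOn_deriv.continuousOn).sub
      (hv.contDiffOn.continuousOn.mul hu.contDiffOn_deriv.continuousOn)).mono hmem
  have hquotient : ∀ x ∈ Icc 0 r, HasDerivAt (fun y ↦ v y / u y)
      ((deriv v x * u x - v x * deriv u x) / u x ^ 2) x := fun x hx ↦
    (hv.hasDerivAt (hmem x hx)).div (hu.hasDerivAt (hmem x hx)) (hpos x hx).ne'
  refine monotoneOn_of_hasDerivWithinAt_nonneg (convex_Icc 0 r)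
    (fun x hx ↦ (hquotient x hx).continuousAt.continuousWithinAt)
    (fun x hx ↦ (hquotient x (interior_subset hx)).hasDerivWithinAt) fun x hx ↦ ?_
  rw [interior_Icc] at hx
  rw [mul_comm (deriv v x)]
  exact div_nonneg (hwronskian x ⟨hx.1, hx.2.le⟩) (sq_nonneg _)

lemma pos_of_comparison (hp : IsRadialWeight p R) (hu : IsRadialSol p R g u)
    (hv : IsRadialSol p R h v) (hr : r ≤ R) (hpos : ∀ x ∈ Ico 0 r, 0 < u x) (hv0 : 0 < v 0)
    (hle : ∀ x ∈ Ioo 0 r, 0 < v x → h x * u x ≤ g x * v x) : ∀ x ∈ Ico 0 r, 0 < v x := by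
  refine pos_of_forall_Ico_pos_imp_pos
    (hv.contDiffOn.continuousOn.mono fun x hx ↦ ⟨by linarith [hx.1, hx.2], hx.2.trans_le hr⟩)
    fun s hs hvs ↦ ?_
  have hus : 0 < u s := hpos s hs
  have hu0 : 0 < u 0 := hpos 0 ⟨le_rfl, hs.1.trans_lt hs.2⟩
  have hmono : v 0 / u 0 ≤ v s / u s :=
    hu.monotoneOn_div hp hv (hs.2.trans_le hr) (fun x hx ↦ hpos x ⟨hx.1, hx.2.trans_lt hs.2⟩)
      (fun x hx ↦ hle x ⟨hx.1, hx.2.trans hs.2⟩ (hvs x ⟨hx.1.le, hx.2⟩))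
      ⟨le_rfl, hs.1⟩ ⟨hs.1, le_rfl⟩ hs.1
  exact (div_pos_iff_of_pos_right hus).1 ((div_pos hv0 hu0).trans_le hmono)

lemma hasDerivAt_deriv_deriv (hp : IsRadialWeight p R) (hu : IsRadialSol p R g u)
    (hx : x ∈ Ioo 0 R) {g' : ℝ} (hg : HasDerivAt g g' x) :
    HasDerivAt (deriv (deriv u))
      (-g' - (deriv (logDeriv p) x * deriv u x + logDeriv p x * deriv (deriv u) x)) x := by
  have hode : deriv (deriv u) =ᶠ[𝓝 x] fun y ↦ -g y - logDeriv p y * deriv u y :=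
    eventually_of_mem (isOpen_Ioo.mem_nhds hx) fun y hy ↦ hu.deriv_deriv_eq hy
  have hlog : HasDerivAt (logDeriv p) (deriv (logDeriv p) x) x :=
    (differentiableAt_of_deriv_ne_zero (hp.deriv_logDeriv_neg x hx).ne).hasDerivAt
  have hu' := hu.hasDerivAt_deriv (x := x) ⟨by linarith [hx.1, hx.2], hx.2⟩
  exact (hg.neg.sub (hlog.mul hu')).congr_of_eventuallyEq hode

lemma hasDerivAt_linearized_wronskian (hp : IsRadialWeight p R) (hu : IsRadialSol p R g u)
    (hv : IsRadialSol p R (fun y ↦ c y * v y) v) (hx : x ∈ Ioo 0 R)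
    (hg : HasDerivAt g (c x * deriv u x) x) :
    HasDerivAt (fun y ↦ v y * deriv (deriv u) y - deriv u y * deriv v y)
      (-deriv (logDeriv p) x * (v x * deriv u x)
        - logDeriv p x * (v x * deriv (deriv u) x - deriv u x * deriv v x)) x := by
  have hx' : x ∈ Ioo (-R) R := ⟨by linarith [hx.1, hx.2], hx.2⟩
  refine (((hv.hasDerivAt hx').mul (hu.hasDerivAt_deriv_deriv hp hx hg)).sub
    ((hu.hasDerivAt_deriv hx').mul (hv.hasDerivAt_deriv hx'))).congr_deriv ?_
  rw [hv.deriv_deriv_eq hx]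
  ring

lemma linearized_wronskian_neg (hp : IsRadialWeight p R) (hu : IsRadialSol p R g u)
    (hv : IsRadialSol p R (fun y ↦ c y * v y) v) (hr : r ∈ Ioo 0 R)
    (hg : ∀ x ∈ Ico 0 r, HasDerivAt g (c x * deriv u x) x) (hgpos : ∀ x ∈ Ico 0 r, 0 < g x)
    (hvpos : ∀ x ∈ Ico 0 r, 0 < v x) :
    ∀ x ∈ Icc 0 r, v x * deriv (deriv u) x - deriv u x * deriv v x < 0 := by
  have hR : 0 < R := hr.1.trans hr.2
  intro x hx
  rcases hx.1.eq_or_lt with rfl | hx0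
  · rw [hu.deriv_zero hR, zero_mul, sub_zero]
    exact mul_neg_of_pos_of_neg (hvpos 0 ⟨le_rfl, hr.1⟩)
      (hu.deriv_deriv_zero_neg hp hr (hg 0 ⟨le_rfl, hr.1⟩).continuousAt hgpos)
  · have hu' : ∀ y ∈ Ioc 0 r, deriv u y < 0 :=
      hu.deriv_neg_of_source_pos hp hr fun y hy ↦ hgpos y ⟨hy.1.le, hy.2⟩
    refine hp.neg_of_hasDerivAt (G := fun y ↦ -deriv (logDeriv p) y * (v y * deriv u y)) hr.2 ?_
      (fun y hy ↦ hu.hasDerivAt_linearized_wronskian hp hv ⟨hy.1, hy.2.trans hr.2⟩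
        (hg y ⟨hy.1.le, hy.2⟩)) (fun y hy ↦ ?_) x ⟨hx0, hx.2⟩
    · exact ((hv.contDiffOn.continuousOn.mul hu.continuousOn_deriv_deriv).sub
        (hu.contDiffOn_deriv.continuousOn.mul hv.contDiffOn_deriv.continuousOn)).mono
        (Icc_subset_Ioo (neg_lt_zero.2 hR) hr.2)
    · exact mul_neg_of_pos_of_neg
        (neg_pos.2 (hp.deriv_logDeriv_neg y ⟨hy.1, hy.2.trans hr.2⟩))
        (mul_neg_of_pos_of_neg (hvpos y ⟨hy.1.le, hy.2⟩) (hu' y ⟨hy.1, hy.2.le⟩))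

lemma linearized_wronskian_even (hu : IsRadialSol p R g u) (hv : IsRadialSol p R h v)
    (hx : x ∈ Ioo (-R) R) :
    v (-x) * deriv (deriv u) (-x) - deriv u (-x) * deriv v (-x) =
      v x * deriv (deriv u) x - deriv u x * deriv v x := by
  rw [hv.even x hx, hu.deriv_deriv_even x hx, hu.deriv_odd x hx, hv.deriv_odd x hx,
    neg_mul_neg]

end IsRadialSol

lemma logDeriv_sin_eq_cos_div_sin : logDeriv sin = fun x ↦ cos x / sin x := by
  rw [Real.logDeriv_sin]
  exact funext cot_eq_cos_div_sin

lemma isRadialWeight_sin : IsRadialWeight sin π where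
  map_zero := sin_zero
  continuousOn := continuous_sin.continuousOn
  pos x hx := sin_pos_of_mem_Ioo hx
  differentiableAt x _ := differentiable_sin x
  deriv_logDeriv_neg x hx := by
    have hsin := sin_pos_of_mem_Ioo hx
    have hderiv : HasDerivAt (logDeriv sin) (-1 / sin x ^ 2) x := by
      rw [logDeriv_sin_eq_cos_div_sin]
      refine ((hasDerivAt_cos x).div (hasDerivAt_sin x) hsin.ne').congr_deriv ?_
      congr 1
      linarith [sin_sq_add_cos_sq x]
    rw [hderiv.deriv]
    exact div_neg_of_neg_of_pos neg_one_lt_zero (pow_pos hsin 2)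
  logDeriv_isBigO := by
    have hcos : cos =O[𝓝[>] 0] fun _ ↦ (1 : ℝ) :=
      ((continuous_cos.tendsto 0).isBigO_one ℝ).mono nhdsWithin_le_nhds
    have hsin : (fun x ↦ (sin x)⁻¹) =O[𝓝[>] 0] fun x ↦ x⁻¹ :=
      isEquivalent_sin.inv.isBigO.mono nhdsWithin_le_nhds
    simpa only [logDeriv_sin_eq_cos_div_sin, div_eq_mul_inv, one_mul] using hcos.mul hsin

lemma isRadialSol_sin {g u : ℝ → ℝ} (heven : ∀ x ∈ Ioo (-π) π, u (-x) = u x)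
    (hcont : ContDiffOn ℝ 2 u (Ioo (-π) π))
    (hode : ∀ x ∈ Ioo (-π) π, x ≠ 0 →
      deriv (deriv u) x + cos x / sin x * deriv u x + g x = 0) :
    IsRadialSol sin π g u where
  even := heven
  contDiffOn := hcont
  ode x hx := by
    rw [logDeriv_sin_eq_cos_div_sin]
    exact hode x ⟨by linarith [hx.1, hx.2], hx.2⟩ hx.1.ne'

theorem stmt8_general {p f U H : ℝ → ℝ} {R r : ℝ} (hp : IsRadialWeight p R)
    (hf : ∀ x > 0, DifferentiableAt ℝ f x) (hfpos : ∀ x > 0, 0 < f x ∧ x * deriv f x ≤ f x)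
    (hU : IsRadialSol p R (fun x ↦ f (U x)) U) (hU0 : 0 < U 0) (hr : r ∈ Ioo 0 R)
    (hne : ∀ x ∈ Ioo 0 r, U x ≠ 0)
    (hH : IsRadialSol p R (fun x ↦ deriv f (U x) * H x) H) (hH0 : 0 < H 0) :
    ∀ x ∈ Icc (-r) r, H x * deriv (deriv U) x - deriv U x * deriv H x ≠ 0 := by
  have hmem : ∀ x ∈ Icc (-r) r, x ∈ Ioo (-R) R := fun x hx ↦
    ⟨(neg_lt_neg hr.2).trans_le hx.1, hx.2.trans_lt hr.2⟩
  have hIco : ∀ x ∈ Ico 0 r, x ∈ Ioo (-R) R := fun x hx ↦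
    hmem x ⟨(neg_nonpos.2 hr.1.le).trans hx.1, hx.2.le⟩
  have hUpos : ∀ x ∈ Ico 0 r, 0 < U x :=
    pos_of_ne_zero_of_pos_left (hU.contDiffOn.continuousOn.mono hIco) hU0 hne
  have hHpos : ∀ x ∈ Ico 0 r, 0 < H x := by
    refine hU.pos_of_comparison hp hH hr.2.le hUpos hH0 fun x hx hHx ↦ ?_
    have hfU := (hfpos (U x) (hUpos x ⟨hx.1.le, hx.2⟩)).2
    linarith [mul_le_mul_of_nonneg_right hfU hHx.le]
  have hneg := hU.linearized_wronskian_neg hp hH hr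
    (fun x hx ↦ (hf (U x) (hUpos x hx)).hasDerivAt.comp x (hU.hasDerivAt (hIco x hx)))
    (fun x hx ↦ (hfpos (U x) (hUpos x hx)).1) hHpos
  intro x hx
  rcases le_total 0 x with hx0 | hx0
  · exact (hneg x ⟨hx0, hx.2⟩).ne
  · rw [← hU.linearized_wronskian_even hH (hmem x hx)]
    exact (hneg (-x) ⟨neg_nonneg.2 hx0, neg_le.1 hx.1⟩).ne

/-- Under hypothesis (H), for `t > 0` the Wronskian-type quantity
`H_t U_t'' - U_t' H_t'` never vanishes on `[-r_t, r_t]`. -/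
theorem stmt8 (f : ℝ → ℝ) (hf : ContDiff ℝ 1 f)
    (hH : ∀ x > (0:ℝ), 0 < f x ∧ x * deriv f x ≤ f x)
    (t : ℝ) (ht : 0 < t) (U : ℝ → ℝ) (hU : IsEvenSol f U) (hU0 : U 0 = t)
    (r : ℝ) (hr : r ∈ Set.Ioo 0 Real.pi) (hUr : U r = 0)
    (hrmin : ∀ ρ ∈ Set.Ioo 0 r, U ρ ≠ 0)
    (Ht : ℝ → ℝ)
    (hHte : ∀ ρ ∈ Set.Ioo (-Real.pi) Real.pi, Ht (-ρ) = Ht ρ)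
    (hHtc : ContDiffOn ℝ 2 Ht (Set.Ioo (-Real.pi) Real.pi))
    (hHt0 : Ht 0 = 1)
    (hHtode : ∀ ρ ∈ Set.Ioo (-Real.pi) Real.pi, ρ ≠ 0 →
      deriv (deriv Ht) ρ + (Real.cos ρ / Real.sin ρ) * deriv Ht ρ
        + deriv f (U ρ) * Ht ρ = 0) :
    ∀ ρ ∈ Set.Icc (-r) r,
      Ht ρ * deriv (deriv U) ρ - deriv U ρ * deriv Ht ρ ≠ 0 :=
  stmt8_general isRadialWeight_sin (fun x _ ↦ hf.differentiable one_ne_zero x) hH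
    (isRadialSol_sin hU.1 hU.2.1 hU.2.2) (hU0 ▸ ht) hr hrmin
    (isRadialSol_sin hHte hHtc hHtode) (hHt0 ▸ one_pos)
end
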